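/- There exists a C^∞ diffeomorphism T of the torus 𝕋² preserving the Haar–Lebesgue probability measure λ such that T is weakly mixing with respect to λ and the upper topological slow entropy of T with respect to the logarithmic scaling family a^{ln}_m(t) = (ln m)^t equals 1. -/

import Mathlib

open MeasureTheory Filter Set
open scoped Topology ENNReal NNReal

noncomputable section

/-- The Bowen metric `d_n^T(x,y) = max_{0 ≤ i ≤ n-1} d(T^i x, T^i y)`. -/
def bowenDist {X : Type*} [PseudoMetricSpace X] (T : X → X) (n : ℕ) (x y : X) : ℝ :=
  (((Finset.range n).sup fun i => nndist (T^[i] x) (T^[i] y)) : ℝ≥0)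

/-- `N_{d_n^T}(ε)`: the minimal number of `(ε,n)`-Bowen balls of `T` needed to cover the
whole space. -/
def bowenCoverNum {X : Type*} [PseudoMetricSpace X] (T : X → X) (n : ℕ) (ε : ℝ) : ℕ :=
  sInf {N : ℕ | ∃ F : Finset X, F.card = N ∧ ∀ y : X, ∃ x ∈ F, bowenDist T n x y < ε}

/-- `N(ε)`: the supremum (`0` if the set is empty, by the `Real.sSup` convention) of all
`t > 0` such that `limsup_n N_{d_n^T}(ε) / a_n(t) > 0`. -/
def topSlowEntFun {X : Type*} [PseudoMetricSpace X] (T : X → X) (a : ℕ → ℝ → ℝ) (ε : ℝ) : ℝ :=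
  sSup {t : ℝ | 0 < t ∧
    0 < Filter.atTop.limsup fun n => (bowenCoverNum T n ε : ℝ≥0∞) / ENNReal.ofReal (a n t)}

/-- The upper topological slow entropy of `T` with respect to the scaling family `a`
equals `E`, i.e. `N(ε) → E` as `ε → 0⁺`. -/
def HasUpperTopSlowEntropy {X : Type*} [PseudoMetricSpace X] (T : X → X)
    (a : ℕ → ℝ → ℝ) (E : ℝ) : Prop :=
  Filter.Tendsto (topSlowEntFun T a) (𝓝[>] (0 : ℝ)) (𝓝 E)

/-- The circle `𝕋¹ = ℝ/ℤ` with its quotient metric and Haar–Lebesgue probability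
measure `volume`. -/
abbrev Torus1 : Type := AddCircle (1 : ℝ)

/-- The 2-torus `𝕋² = ℝ²/ℤ²`, with its quotient (flat) metric, its Borel σ-algebra and
its Haar–Lebesgue probability measure `volume`. -/
abbrev Torus2 : Type := AddCircle (1 : ℝ) × AddCircle (1 : ℝ)

/-- Canonical projection `ℝ² → 𝕋²`. -/
def torusProj : ℝ × ℝ → Torus2 := fun p => ((p.1 : Torus1), (p.2 : Torus1))

/-- `F : ℝ² → ℝ²` is a lift of `T : 𝕋² → 𝕋²`. -/
def IsLiftOf (F : ℝ × ℝ → ℝ × ℝ) (T : Torus2 → Torus2) : Prop :=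
  ∀ p, torusProj (F p) = T (torusProj p)

/-- `T` is a `C^k` diffeomorphism of the torus: it is a bijection and both `T` and `T⁻¹`
admit `C^k` lifts to the universal cover `ℝ²`. -/
def IsCkTorusDiffeo (k : ℕ∞) (T : Torus2 → Torus2) : Prop :=
  Function.Bijective T ∧
  (∃ F : ℝ × ℝ → ℝ × ℝ, ContDiff ℝ k F ∧ IsLiftOf F T) ∧
  (∃ G : ℝ × ℝ → ℝ × ℝ, ContDiff ℝ k G ∧ IsLiftOf G (Function.invFun T))

/-- `T` is weakly mixing w.r.t. the measure `μ`: `T × T` is ergodic for `μ × μ`. -/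
def WeaklyMixing {X : Type*} [MeasurableSpace X] (T : X → X) (μ : Measure X) : Prop :=
  Ergodic (fun p : X × X => (T p.1, T p.2)) (μ.prod μ)

/-- `T` is uniquely ergodic with the Haar–Lebesgue measure `volume` as its unique
invariant Borel probability measure. -/
def UniquelyErgodicWithVolume (T : Torus2 → Torus2) : Prop :=
  MeasurePreserving T volume volume ∧
  ∀ μ : Measure Torus2, IsProbabilityMeasure μ → MeasurePreserving T μ μ → μ = volume

/-- `T` (preserving the Haar measure `volume` on `𝕋²`) is measure-theoretically isomorphic
to the rotation of the circle `𝕋¹ = ℝ/ℤ` by some irrational number `α`. -/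
def IsoToIrrationalRotation (T : Torus2 → Torus2) : Prop :=
  ∃ α : ℝ, Irrational α ∧
    ∃ (A : Set Torus2) (B : Set Torus1) (ψ : Torus2 → Torus1) (φ : Torus1 → Torus2),
      MeasurableSet A ∧ MeasurableSet B ∧
      volume Aᶜ = 0 ∧ volume Bᶜ = 0 ∧
      Set.MapsTo T A A ∧ Set.MapsTo (fun y : Torus1 => y + (α : Torus1)) B B ∧
      Measurable ψ ∧ Measurable φ ∧
      Set.MapsTo ψ A B ∧ Set.MapsTo φ B A ∧
      (∀ x ∈ A, φ (ψ x) = x) ∧ (∀ y ∈ B, ψ (φ y) = y) ∧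
      Measure.map ψ volume = volume ∧
      (∀ x ∈ A, ψ (T x) = ψ x + (α : Torus1))

/-- A finite measurable partition of `X`. -/
structure FinMeasPartition (X : Type*) [MeasurableSpace X] where
  card : ℕ
  piece : Fin card → Set X
  measurable : ∀ i, MeasurableSet (piece i)
  disjoint : Pairwise fun i j => Disjoint (piece i) (piece j)
  cover : (⋃ i, piece i) = Set.univ

open Classical in
/-- The normalized Hamming distance between the length-`n` `P`-codings of the `T`-orbits
of `x` and `y` (the codings differ at time `k` iff `T^k x` and `T^k y` lie in different
pieces of `P`). -/
def codeHammingDist {X : Type*} [MeasurableSpace X] (T : X → X) (P : FinMeasPartition X)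
    (n : ℕ) (x y : X) : ℝ :=
  (((Finset.range n).filter fun k =>
      ¬ ∃ i, T^[k] x ∈ P.piece i ∧ T^[k] y ∈ P.piece i).card : ℝ) / n

/-- `S^H_P(T,n,ε)`: the minimal number of `(ε,n)`-Hamming balls whose union has
`μ`-measure greater than `1 - ε`. -/
def hammingCoverNum {X : Type*} [MeasurableSpace X] (μ : Measure X) (T : X → X)
    (P : FinMeasPartition X) (n : ℕ) (ε : ℝ) : ℕ :=
  sInf {N : ℕ | ∃ F : Finset X, F.card = N ∧
    ENNReal.ofReal (1 - ε) < μ (⋃ x ∈ F, {y | codeHammingDist T P n x y < ε})}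

/-- For a fixed partition `P` and `ε > 0`: the supremum (with the `Real.sSup` convention,
`0` if the set is empty) of all `t > 0` with `limsup_n S^H_P(T,n,ε)/a_n(t) > 0`. -/
def measSlowEntFun {X : Type*} [MeasurableSpace X] (μ : Measure X) (T : X → X)
    (a : ℕ → ℝ → ℝ) (P : FinMeasPartition X) (ε : ℝ) : ℝ :=
  sSup {t : ℝ | 0 < t ∧
    0 < Filter.atTop.limsup fun n =>
      (hammingCoverNum μ T P n ε : ℝ≥0∞) / ENNReal.ofReal (a n t)}

/-- The upper measure-theoretic slow entropy of `(T,μ)` w.r.t. the scaling family `a`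
equals `E`: for every finite measurable partition the limit as `ε → 0⁺` exists, and the
least upper bound over all partitions of these limits is `E`. -/
def HasUpperMeasSlowEntropy {X : Type*} [MeasurableSpace X] (μ : Measure X) (T : X → X)
    (a : ℕ → ℝ → ℝ) (E : ℝ) : Prop :=
  (∀ P : FinMeasPartition X, ∃ e : ℝ,
      Filter.Tendsto (measSlowEntFun μ T a P) (𝓝[>] (0 : ℝ)) (𝓝 e)) ∧
  IsLUB {e : ℝ | ∃ P : FinMeasPartition X,
      Filter.Tendsto (measSlowEntFun μ T a P) (𝓝[>] (0 : ℝ)) (𝓝 e)} E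

/-- `Γ_r(x) = (Γ(x^{1/r} + 1))^r`, where `Γ` is the Euler Gamma function. -/
def GammaR (r : ℕ) (x : ℝ) : ℝ := (Real.Gamma (x ^ ((r : ℝ)⁻¹) + 1)) ^ r

/-- The inverse of `Γ_r` on `[1,∞)` (where `Γ_r` is strictly increasing with `Γ_r 1 = 1`). -/
def GammaRInv (r : ℕ) (y : ℝ) : ℝ := sSup {x : ℝ | 1 ≤ x ∧ GammaR r x ≤ y}

/-- The intermediate scaling family `a^{int1,r}_m(t) = m^(t / Γ_r⁻¹(ln m / ln q₁))`. -/
def intScale1 (r q₁ : ℕ) (m : ℕ) (t : ℝ) : ℝ :=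
  (m : ℝ) ^ (t / GammaRInv r (Real.log m / Real.log q₁))

/-- The intermediate scaling family
`a^{int2,r}_m(t) = m^(t / (Γ_r⁻¹(ln m / ln q₁))^((r-2)/r))`. -/
def intScale2 (r q₁ : ℕ) (m : ℕ) (t : ℝ) : ℝ :=
  (m : ℝ) ^ (t / GammaRInv r (Real.log m / Real.log q₁) ^ (((r : ℝ) - 2) / (r : ℝ)))

/-- The logarithmic scaling family `a^{ln}_m(t) = (ln m)^t`. -/
def logScale (m : ℕ) (t : ℝ) : ℝ := Real.log m ^ t

/-- The polynomial scaling family `a^{pol}_m(t) = m^t`. -/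
def polScale (m : ℕ) (t : ℝ) : ℝ := (m : ℝ) ^ t

end


section
open MeasureTheory Filter Set
open scoped Topology ENNReal NNReal

section smoothseries
open scoped ContDiff

lemma contDiff_trig_series {E : Type*} [NormedAddCommGroup E] [NormedSpace ℝ E]
    (a M : ℕ → ℝ) (ℓ : ℕ → E →L[ℝ] ℝ) (φ : ℝ) (hM : ∀ j, ‖ℓ j‖ ≤ M j)
    (hs : ∀ r : ℕ, Summable fun j => |a j| * M j ^ r) :
    ContDiff ℝ (∞ : WithTop ℕ∞) fun z => ∑' j, a j * Real.cos (ℓ j z + φ) := by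
  have hc : ContDiff ℝ (∞ : WithTop ℕ∞) (fun x : ℝ => Real.cos (x + φ)) := by fun_prop
  refine contDiff_tsum (v := fun r j => |a j| * M j ^ r) (N := (⊤ : ℕ∞)) ?_ (fun k _ => hs k) ?_
  · intro i
    fun_prop
  · intro k i x _
    have h0 : (fun z => a i * Real.cos (ℓ i z + φ)) =
        fun z => a i • ((fun x : ℝ => Real.cos (x + φ)) ∘ ℓ i) z := by
      ext z; simp
    have hcc : ContDiff ℝ k (fun x : ℝ => Real.cos (x + φ)) := by fun_prop
    have hcd : ContDiff ℝ k ((fun x : ℝ => Real.cos (x + φ)) ∘ ℓ i) := by fun_prop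
    rw [h0, iteratedFDeriv_const_smul_apply' hcd.contDiffAt, norm_smul, Real.norm_eq_abs]
    gcongr
    rw [ContinuousLinearMap.iteratedFDeriv_comp_right _ hc _ (by exact_mod_cast le_top)]
    refine (ContinuousMultilinearMap.norm_compContinuousLinearMap_le _ _).trans ?_
    have h1 : ‖iteratedFDeriv ℝ k (fun x : ℝ => Real.cos (x + φ)) (ℓ i x)‖ ≤ 1 := by
      rw [norm_iteratedFDeriv_eq_norm_iteratedDeriv, iteratedDeriv_comp_add_const]
      exact Real.abs_iteratedDeriv_cos_le_one _ _
    simp only [Finset.prod_const, Finset.card_univ, Fintype.card_fin]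
    calc _ ≤ 1 * M i ^ k := by
          gcongr
          exact hM i
      _ = _ := one_mul _

/-- Series of differences. -/
noncomputable def Zser (q θ a : ℕ → ℝ) (φ : ℝ) (p : ℝ × ℝ) : ℝ :=
  ∑' j, a j * (Real.sin (q j * p.1 + θ j * p.2 + φ) - Real.sin (q j * p.1 + φ))

noncomputable def Cser (q θ a : ℕ → ℝ) (φ : ℝ) (p : ℝ × ℝ) : ℝ :=
  ∑' j, (a j * θ j) * Real.cos (q j * p.1 + θ j * p.2 + φ)

lemma abs_sin_diff_le (x y : ℝ) : |Real.sin x - Real.sin y| ≤ |x - y| := Real.abs_sin_sub_sin_le x y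

lemma Cser_contDiff (q θ a : ℕ → ℝ) (φ : ℝ) (hθ : ∀ j, |θ j| ≤ |q j|)
    (hs : ∀ r : ℕ, Summable fun j => |a j * θ j| * |q j| ^ r) :
    ContDiff ℝ (∞ : WithTop ℕ∞) (Cser q θ a φ) := by
  have := contDiff_trig_series (fun j => a j * θ j) (fun j => 2 * |q j|)
    (fun j => q j • ContinuousLinearMap.fst ℝ ℝ ℝ + θ j • ContinuousLinearMap.snd ℝ ℝ ℝ) φ
    (by
      intro j
      refine (norm_add_le _ _).trans ?_
      rw [norm_smul, norm_smul]
      have h1 := ContinuousLinearMap.norm_fst_le ℝ ℝ ℝ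
      have h2 := ContinuousLinearMap.norm_snd_le ℝ ℝ ℝ
      simp only [Real.norm_eq_abs]
      nlinarith [hθ j, abs_nonneg (q j), abs_nonneg (θ j)])
    (by
      intro r
      refine ((hs r).mul_left (2 ^ r)).congr ?_
      intro j
      rw [mul_pow]; ring)
  have e : Cser q θ a φ = fun z => ∑' j, a j * θ j * Real.cos ((q j • ContinuousLinearMap.fst ℝ ℝ ℝ +
      θ j • ContinuousLinearMap.snd ℝ ℝ ℝ) z + φ) := by
    ext z
    simp [Cser]
  rw [e]
  exact this

lemma Zser_term_hasFDerivAt (q θ a φ : ℝ) (p : ℝ × ℝ) :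
    HasFDerivAt (fun p : ℝ × ℝ => a * (Real.sin (q * p.1 + θ * p.2 + φ) - Real.sin (q * p.1 + φ)))
      ((q * a * (Real.sin (q * p.1 + θ * p.2 + (φ + Real.pi / 2)) - Real.sin (q * p.1 + (φ + Real.pi / 2)))) •
        ContinuousLinearMap.fst ℝ ℝ ℝ +
        (a * θ * Real.cos (q * p.1 + θ * p.2 + φ)) • ContinuousLinearMap.snd ℝ ℝ ℝ) p := by
  have h1 : HasFDerivAt (fun p : ℝ × ℝ => q * p.1 + θ * p.2 + φ)
      (q • ContinuousLinearMap.fst ℝ ℝ ℝ + θ • ContinuousLinearMap.snd ℝ ℝ ℝ) p := by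
    exact (((hasFDerivAt_fst (p := p)).const_mul q).add ((hasFDerivAt_snd (p := p)).const_mul θ)).add_const φ
  have h2 : HasFDerivAt (fun p : ℝ × ℝ => q * p.1 + φ)
      (q • ContinuousLinearMap.fst ℝ ℝ ℝ) p := by
    exact ((hasFDerivAt_fst (p := p)).const_mul q).add_const φ
  refine ((h1.sin.sub h2.sin).const_mul a).congr_fderiv ?_
  rw [← add_assoc, ← add_assoc, Real.sin_add_pi_div_two, Real.sin_add_pi_div_two]
  ext <;> simp <;> ring

lemma Zser_hasFDerivAt (q θ a : ℕ → ℝ) (φ : ℝ)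
    (hs : ∀ r : ℕ, Summable fun j => |a j * θ j| * |q j| ^ r) (p : ℝ × ℝ) :
    HasFDerivAt (Zser q θ a φ) (Zser q θ (fun j => q j * a j) (φ + Real.pi / 2) p •
      ContinuousLinearMap.fst ℝ ℝ ℝ + Cser q θ a φ p • ContinuousLinearMap.snd ℝ ℝ ℝ) p := by
  set R : ℝ := |p.2| + 1 with hR
  have hR0 : 0 < R := by positivity
  have hbd : ∀ (j : ℕ) (x : ℝ × ℝ) (ψ : ℝ), |x.2| < R →
      |q j * a j * (Real.sin (q j * x.1 + θ j * x.2 + ψ) - Real.sin (q j * x.1 + ψ))| ≤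
        R * (|a j * θ j| * |q j| ^ 1) := by
    intro j x ψ hx
    have h1 := abs_sin_diff_le (q j * x.1 + θ j * x.2 + ψ) (q j * x.1 + ψ)
    rw [show q j * x.1 + θ j * x.2 + ψ - (q j * x.1 + ψ) = θ j * x.2 by ring, abs_mul] at h1
    rw [abs_mul, abs_mul, abs_mul]
    have : |θ j| * |x.2| ≤ |θ j| * R := by gcongr
    calc |q j| * |a j| * |Real.sin (q j * x.1 + θ j * x.2 + ψ) - Real.sin (q j * x.1 + ψ)|
        ≤ |q j| * |a j| * (|θ j| * R) := by gcongr; exact h1.trans this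
      _ = _ := by ring
  have hbc : ∀ (j : ℕ) (x : ℝ × ℝ), |a j * θ j * Real.cos (q j * x.1 + θ j * x.2 + φ)| ≤
      |a j * θ j| * |q j| ^ 0 := by
    intro j x
    rw [abs_mul, pow_zero]
    gcongr
    exact Real.abs_cos_le_one _
  have key := hasFDerivAt_tsum_of_isPreconnected (𝕜 := ℝ)
    (u := fun j => R * (|a j * θ j| * |q j| ^ 1) + |a j * θ j| * |q j| ^ 0)
    (s := {x : ℝ × ℝ | |x.2| < R}) (x₀ := p) (x := p)
    (((hs 1).mul_left R).add (hs 0))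
    (isOpen_lt (by fun_prop) (by fun_prop))
    (by
      have : {x : ℝ × ℝ | |x.2| < R} = univ ×ˢ Ioo (-R) R := by
        ext x; simp [abs_lt]
      rw [this]
      exact isPreconnected_univ.prod isPreconnected_Ioo)
    (fun j x _ => Zser_term_hasFDerivAt (q j) (θ j) (a j) φ x)
    (by
      intro j x hx
      refine (norm_add_le _ _).trans ?_
      rw [norm_smul, norm_smul]
      have h1 := ContinuousLinearMap.norm_fst_le ℝ ℝ ℝ
      have h2 := ContinuousLinearMap.norm_snd_le ℝ ℝ ℝ
      refine add_le_add ?_ ?_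
      · exact (mul_le_of_le_one_right (norm_nonneg _) h1).trans (hbd j x _ hx)
      · exact (mul_le_of_le_one_right (norm_nonneg _) h2).trans (hbc j x))
    (by simp [hR])
    (by
      refine Summable.of_norm_bounded ((hs 0).mul_left R) ?_
      intro j
      have h1 := abs_sin_diff_le (q j * p.1 + θ j * p.2 + φ) (q j * p.1 + φ)
      rw [show q j * p.1 + θ j * p.2 + φ - (q j * p.1 + φ) = θ j * p.2 by ring, abs_mul] at h1
      rw [norm_mul, Real.norm_eq_abs, Real.norm_eq_abs, abs_mul]
      have : |θ j| * |p.2| ≤ |θ j| * R := by gcongr; simp [hR]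
      calc _ ≤ |a j| * (|θ j| * R) := by gcongr; exact h1.trans this
        _ = _ := by ring)
    (by simp [hR])
  refine key.congr_fderiv ?_
  have hS1 : Summable fun j => q j * a j * (Real.sin (q j * p.1 + θ j * p.2 + (φ + Real.pi / 2)) -
      Real.sin (q j * p.1 + (φ + Real.pi / 2))) :=
    Summable.of_norm_bounded ((hs 1).mul_left R) (fun j => hbd j p _ (by simp [hR]))
  have hS2 : Summable fun j => a j * θ j * Real.cos (q j * p.1 + θ j * p.2 + φ) :=
    Summable.of_norm_bounded (hs 0) (fun j => hbc j p)
  rw [(hS1.smul_const _).tsum_add (hS2.smul_const _), hS1.tsum_smul_const, hS2.tsum_smul_const]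
  rfl

lemma Zser_contDiff (q θ : ℕ → ℝ) (hθ : ∀ j, |θ j| ≤ |q j|) (n : ℕ) : ∀ (a : ℕ → ℝ) (φ : ℝ)
    (_ : ∀ r : ℕ, Summable fun j => |a j * θ j| * |q j| ^ r), ContDiff ℝ n (Zser q θ a φ) := by
  induction n with
  | zero =>
    intro a φ hs
    rw [Nat.cast_zero, contDiff_zero]
    exact continuous_iff_continuousAt.2 fun p => (Zser_hasFDerivAt q θ a φ hs p).continuousAt
  | succ n ih =>
    intro a φ hs
    rw [Nat.cast_succ, contDiff_succ_iff_hasFDerivAt]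
    refine ⟨_, ?_, fun p => Zser_hasFDerivAt q θ a φ hs p⟩
    have hs' : ∀ r : ℕ, Summable fun j => |q j * a j * θ j| * |q j| ^ r := by
      intro r
      refine (hs (r + 1)).congr fun j => ?_
      rw [mul_assoc (q j), abs_mul (q j), pow_succ]; ring
    have h1 := ih (fun j => q j * a j) (φ + Real.pi / 2) hs'
    have h2 : ContDiff ℝ n (Cser q θ a φ) := (Cser_contDiff q θ a φ hθ hs).of_le (by exact_mod_cast le_top)
    exact (h1.smul contDiff_const).add (h2.smul contDiff_const)

/-- Triangular maps `(a,b) ↦ (a, h(a,b))` with `∂_b h ∈ [1/2, 2]`: the inverse in `b`. -/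
lemma tri_exists (h r : ℝ × ℝ → ℝ) (hh : ContDiff ℝ (∞ : WithTop ℕ∞) h)
    (hd : ∀ a b, HasDerivAt (fun b => h (a, b)) (r (a, b)) b)
    (hr : ∀ p, 1 / 2 ≤ r p) :
    ∃ k : ℝ × ℝ → ℝ, ContDiff ℝ (∞ : WithTop ℕ∞) k ∧ (∀ a s, h (a, k (a, s)) = s) ∧
      (∀ a b, k (a, h (a, b)) = b) := by
  have hmono : ∀ a, ∀ b b', b ≤ b' → (b' - b) / 2 ≤ h (a, b') - h (a, b) := by
    intro a b b' hbb
    have := (convex_univ (𝕜 := ℝ) (E := ℝ)).mul_sub_le_image_sub_of_le_deriv (f := fun b => h (a, b))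
      (C := 1 / 2) (fun b _ => (hd a b).continuousAt.continuousWithinAt)
      (fun b _ => (hd a b).differentiableAt.differentiableWithinAt)
      (fun b _ => by rw [(hd a b).deriv]; exact hr _) b (mem_univ _) b' (mem_univ _) hbb
    linarith
  have hinj : ∀ a b b', h (a, b) = h (a, b') → b = b' := by
    intro a b b' e
    rcases le_total b b' with hb | hb
    · linarith [hmono a b b' hb]
    · linarith [hmono a b' b hb]
  have hcont : ∀ a, Continuous fun b => h (a, b) := fun a =>
    continuous_iff_continuousAt.2 fun b => (hd a b).continuousAt
  have hsurj : ∀ a s, ∃ b, h (a, b) = s := by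
    intro a s
    have hc := (hcont a).continuousOn (s := Icc (-(2 * |s - h (a, 0)|)) (2 * |s - h (a, 0)|))
    have h1 := hmono a 0 (2 * |s - h (a, 0)|) (by positivity)
    have h2 := hmono a (-(2 * |s - h (a, 0)|)) 0 (by simp)
    have h3 := le_abs_self (s - h (a, 0))
    have h4 := neg_abs_le (s - h (a, 0))
    have := intermediate_value_Icc (by linarith [abs_nonneg (s - h (a, 0))]) hc
    obtain ⟨b, _, hb⟩ := this (show s ∈ _ by constructor <;> linarith)
    exact ⟨b, hb⟩
  choose k0 hk0 using hsurj
  refine ⟨fun p => k0 p.1 p.2, ?_, fun a s => hk0 a s, fun a b => hinj a _ _ (hk0 a _)⟩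
  -- smoothness
  set H : ℝ × ℝ → ℝ × ℝ := fun p => (p.1, h p) with hH
  have hHs : ContDiff ℝ (∞ : WithTop ℕ∞) H := contDiff_fst.prodMk hh
  have hHinj : Function.Injective H := by
    rintro ⟨a, b⟩ ⟨a', b'⟩ e
    simp only [hH, Prod.mk.injEq] at e
    obtain ⟨rfl, e⟩ := e
    rw [hinj a b b' e]
  rw [contDiff_iff_contDiffAt]
  rintro ⟨a, s⟩
  set p : ℝ × ℝ := (a, k0 a s) with hp
  have hHp : H p = (a, s) := by simp [hH, hp, hk0]
  have hfd : HasFDerivAt h (fderiv ℝ h p) p :=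
    (hh.differentiable (by simp)).differentiableAt.hasFDerivAt
  have hb : fderiv ℝ h p (0, 1) = r p := by
    have h1 : HasDerivAt (fun b : ℝ => (a, b)) ((0 : ℝ), (1 : ℝ)) (k0 a s) :=
      (hasDerivAt_const _ _).prodMk (hasDerivAt_id _)
    have h2 : HasDerivAt (fun b => h (a, b)) (fderiv ℝ h p (0, 1)) (k0 a s) :=
      HasFDerivAt.comp_hasDerivAt (k0 a s) (hl := hfd) h1
    exact h2.unique (hd a _)
  have hr0 : r p ≠ 0 := by linarith [hr p]
  have hdet : ∀ v : ℝ × ℝ, fderiv ℝ h p v = v.1 * fderiv ℝ h p (1, 0) + v.2 * r p := by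
    intro v
    rw [← hb]
    have : v = v.1 • ((1 : ℝ), (0 : ℝ)) + v.2 • ((0 : ℝ), (1 : ℝ)) := by ext <;> simp
    conv_lhs => rw [this, map_add, map_smul, map_smul]
    simp
  let e : (ℝ × ℝ) ≃L[ℝ] (ℝ × ℝ) := ContinuousLinearEquiv.equivOfInverse
    ((ContinuousLinearMap.fst ℝ ℝ ℝ).prod (fderiv ℝ h p))
    ((ContinuousLinearMap.fst ℝ ℝ ℝ).prod
      ((r p)⁻¹ • (ContinuousLinearMap.snd ℝ ℝ ℝ - (fderiv ℝ h p (1, 0)) • ContinuousLinearMap.fst ℝ ℝ ℝ)))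
    (by
      intro v
      ext
      · simp
      · simp [hdet v]; field_simp; ring)
    (by
      intro v
      ext
      · simp
      · simp; rw [hdet]; simp; field_simp; ring)
  have hHd : HasFDerivAt H (e : (ℝ × ℝ) →L[ℝ] (ℝ × ℝ)) p :=
    (hasFDerivAt_fst (p := p)).prodMk hfd
  have hloc := ContDiffAt.to_localInverse hHs.contDiffAt hHd (n := (∞ : WithTop ℕ∞)) (by simp)
  have hst := hHs.contDiffAt.hasStrictFDerivAt' hHd (n := (∞ : WithTop ℕ∞)) (by simp)
  have hev := hst.eventually_right_inverse
  rw [hHp] at hloc hev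
  have : ContDiffAt ℝ (∞ : WithTop ℕ∞) (fun y => (ContDiffAt.localInverse hHs.contDiffAt hHd (n := (∞ : WithTop ℕ∞)) (by simp) y).2) (a, s) :=
    contDiff_snd.contDiffAt.comp _ hloc
  refine this.congr_of_eventuallyEq ?_
  filter_upwards [hev] with y hy
  have h1 : H (y.1, k0 y.1 y.2) = y := by simp [hH, hk0]
  have h2 := hHinj (h1.trans hy.symm)
  have h3 := congrArg Prod.snd h2
  exact h3

end smoothseries

end

section
open MeasureTheory Filter Set
open scoped Topology ENNReal NNReal

/-- The data of the construction. -/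
structure Dat where
  q : ℕ → ℕ
  p : ℕ → ℤ
  α : ℝ
  A : ℕ → ℝ
  hq : ∀ j, 1 ≤ q j
  hA : ∀ j, 0 < A j
  hθ : ∀ j, 0 < (q j : ℝ) * α - p j
  hθ1 : ∀ j, (q j : ℝ) * α - p j ≤ 1
  hp : ∀ j, |(p j : ℝ)| ≤ q j
  hα : |α| ≤ 1
  hsum : ∀ r : ℕ, Summable fun j => A j * ((q j : ℝ) * α - p j) * (q j : ℝ) ^ r
  hsmall : ∑' j, A j * ((q j : ℝ) * α - p j) ≤ 1 / 100

namespace Dat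
open scoped ContDiff
variable (d : Dat)

/-- Small divisors. -/
noncomputable def θ (j : ℕ) : ℝ := (d.q j : ℝ) * d.α - d.p j

noncomputable def σ (x : ℝ × ℝ) : ℝ :=
  x.2 + Zser (fun j => 2 * Real.pi * d.q j) (fun j => 2 * Real.pi * d.θ j) d.A 0 x

noncomputable def ρ (z : ℝ × ℝ) : ℝ :=
  1 + ∑' j, (2 * Real.pi * d.A j * d.θ j) * Real.cos (2 * Real.pi * (d.q j * z.2 - d.p j * z.1))

noncomputable def G (z : ℝ × ℝ) : ℝ :=
  ∑' j, (d.A j * d.θ j / d.q j) * Real.sin (2 * Real.pi * (d.q j * z.2 - d.p j * z.1))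

lemma θ_pos (j : ℕ) : 0 < d.θ j := d.hθ j
lemma θ_le (j : ℕ) : d.θ j ≤ 1 := d.hθ1 j
lemma q_pos (j : ℕ) : (0 : ℝ) < d.q j := by exact_mod_cast d.hq j
lemma one_le_q (j : ℕ) : (1 : ℝ) ≤ d.q j := by exact_mod_cast d.hq j
lemma summ (r : ℕ) : Summable fun j => d.A j * d.θ j * (d.q j : ℝ) ^ r := d.hsum r
lemma summ0 : Summable fun j => d.A j * d.θ j := by simpa using d.summ 0
lemma small : ∑' j, d.A j * d.θ j ≤ 1 / 100 := d.hsmall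
lemma Aθ_pos (j : ℕ) : 0 < d.A j * d.θ j := mul_pos (d.hA j) (d.θ_pos j)

lemma Zs_sum (r : ℕ) : Summable fun j => |d.A j * (2 * Real.pi * d.θ j)| * |2 * Real.pi * (d.q j : ℝ)| ^ r := by
  refine ((d.summ r).mul_left (2 * Real.pi * (2 * Real.pi) ^ r)).congr fun j => ?_
  have := d.hA j
  have := d.θ_pos j
  have := d.q_pos j
  rw [abs_of_pos (by positivity), abs_of_pos (by positivity), mul_pow]; ring

lemma Zs_θq (j : ℕ) : |2 * Real.pi * d.θ j| ≤ |2 * Real.pi * (d.q j : ℝ)| := by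
  have h1 := d.θ_pos j
  have h2 := d.q_pos j
  rw [abs_of_pos (by positivity), abs_of_pos (by positivity)]
  gcongr
  exact (d.θ_le j).trans (d.one_le_q j)

lemma σ_contDiff : ContDiff ℝ (∞ : WithTop ℕ∞) d.σ := by
  refine contDiff_snd.add ?_
  rw [contDiff_infty]
  intro n
  exact Zser_contDiff _ _ d.Zs_θq n _ _ d.Zs_sum

lemma ρ_summable (z : ℝ × ℝ) : Summable fun j =>
    (2 * Real.pi * d.A j * d.θ j) * Real.cos (2 * Real.pi * (d.q j * z.2 - d.p j * z.1)) := by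
  refine Summable.of_norm_bounded (d.summ0.mul_left (2 * Real.pi)) fun j => ?_
  have := d.hA j
  have := d.θ_pos j
  rw [norm_mul, Real.norm_eq_abs, Real.norm_eq_abs, abs_of_pos (by positivity)]
  calc _ ≤ 2 * Real.pi * d.A j * d.θ j * 1 := by
        gcongr
        exact Real.abs_cos_le_one _
    _ = _ := by ring

lemma ρ_near (z : ℝ × ℝ) : |d.ρ z - 1| ≤ 1 / 10 := by
  have h1 : |d.ρ z - 1| ≤ ∑' j, 2 * Real.pi * (d.A j * d.θ j) := by
    have : d.ρ z - 1 = ∑' j, (2 * Real.pi * d.A j * d.θ j) *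
      Real.cos (2 * Real.pi * (d.q j * z.2 - d.p j * z.1)) := by simp [ρ]
    rw [this, ← Real.norm_eq_abs]
    refine tsum_of_norm_bounded (d.summ0.mul_left (2 * Real.pi)).hasSum fun j => ?_
    have := d.hA j
    have := d.θ_pos j
    rw [norm_mul, Real.norm_eq_abs, Real.norm_eq_abs, abs_of_pos (by positivity)]
    calc _ ≤ 2 * Real.pi * d.A j * d.θ j * 1 := by
          gcongr
          exact Real.abs_cos_le_one _
      _ = _ := by ring
  rw [tsum_mul_left] at h1
  have := d.small
  have := Real.pi_lt_four
  have := Real.pi_pos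
  nlinarith

lemma ρ_ge (z : ℝ × ℝ) : 9 / 10 ≤ d.ρ z := by
  have := abs_le.1 (d.ρ_near z); linarith
lemma ρ_le (z : ℝ × ℝ) : d.ρ z ≤ 11 / 10 := by
  have := abs_le.1 (d.ρ_near z); linarith
lemma ρ_pos (z : ℝ × ℝ) : 0 < d.ρ z := by linarith [d.ρ_ge z]

lemma lin_norm (j : ℕ) : ‖(2 * Real.pi) • ((d.q j : ℝ) • ContinuousLinearMap.snd ℝ ℝ ℝ -
    (d.p j : ℝ) • ContinuousLinearMap.fst ℝ ℝ ℝ)‖ ≤ 4 * Real.pi * d.q j := by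
  rw [norm_smul, Real.norm_eq_abs, abs_of_pos (by positivity)]
  have h1 := ContinuousLinearMap.norm_fst_le ℝ ℝ ℝ
  have h2 := ContinuousLinearMap.norm_snd_le ℝ ℝ ℝ
  have h3 := norm_sub_le ((d.q j : ℝ) • ContinuousLinearMap.snd ℝ ℝ ℝ)
    ((d.p j : ℝ) • ContinuousLinearMap.fst ℝ ℝ ℝ)
  rw [norm_smul, norm_smul, Real.norm_eq_abs, Real.norm_eq_abs, abs_of_pos (d.q_pos j)] at h3
  have h4 := d.hp j
  have h5 := d.q_pos j
  have h6 : |(d.p j : ℝ)| * ‖ContinuousLinearMap.fst ℝ ℝ ℝ‖ ≤ d.q j :=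
    (mul_le_of_le_one_right (abs_nonneg _) h1).trans h4
  have h7 : (d.q j : ℝ) * ‖ContinuousLinearMap.snd ℝ ℝ ℝ‖ ≤ d.q j :=
    (mul_le_of_le_one_right h5.le h2)
  calc _ ≤ 2 * Real.pi * (d.q j + d.q j) := by gcongr; linarith
    _ = _ := by ring

lemma ρ_contDiff : ContDiff ℝ (∞ : WithTop ℕ∞) d.ρ := by
  have := contDiff_trig_series (fun j => 2 * Real.pi * d.A j * d.θ j) (fun j => 4 * Real.pi * d.q j)
    (fun j => (2 * Real.pi) • ((d.q j : ℝ) • ContinuousLinearMap.snd ℝ ℝ ℝ -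
    (d.p j : ℝ) • ContinuousLinearMap.fst ℝ ℝ ℝ)) 0 d.lin_norm
    (by
      intro r
      refine ((d.summ r).mul_left (2 * Real.pi * (4 * Real.pi) ^ r)).congr fun j => ?_
      have := d.hA j
      have := d.θ_pos j
      rw [abs_of_pos (by positivity), mul_pow]; ring)
  have e : d.ρ = fun z => 1 + ∑' j, 2 * Real.pi * d.A j * d.θ j *
      Real.cos (((2 * Real.pi) • ((d.q j : ℝ) • ContinuousLinearMap.snd ℝ ℝ ℝ -
    (d.p j : ℝ) • ContinuousLinearMap.fst ℝ ℝ ℝ)) z + 0) := by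
    ext z
    simp [ρ]
  rw [e]
  exact contDiff_const.add this

lemma G_contDiff : ContDiff ℝ (∞ : WithTop ℕ∞) d.G := by
  have := contDiff_trig_series (fun j => - (d.A j * d.θ j / d.q j)) (fun j => 4 * Real.pi * d.q j)
    (fun j => (2 * Real.pi) • ((d.q j : ℝ) • ContinuousLinearMap.snd ℝ ℝ ℝ -
    (d.p j : ℝ) • ContinuousLinearMap.fst ℝ ℝ ℝ)) (Real.pi / 2) d.lin_norm
    (by
      intro r
      refine Summable.of_nonneg_of_le (fun j => ?_) (fun j => ?_) ((d.summ r).mul_left ((4 * Real.pi) ^ r))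
      · have := d.q_pos j; positivity
      have := d.hA j
      have := d.θ_pos j
      have := d.q_pos j
      rw [abs_neg, abs_of_pos (by positivity), mul_pow]
      have : d.A j * d.θ j / d.q j ≤ d.A j * d.θ j := div_le_self (by positivity) (d.one_le_q j)
      calc _ ≤ d.A j * d.θ j * ((4 * Real.pi) ^ r * (d.q j : ℝ) ^ r) := by gcongr
        _ = _ := by ring)
  have e : d.G = fun z => ∑' j, -(d.A j * d.θ j / d.q j) *
      Real.cos (((2 * Real.pi) • ((d.q j : ℝ) • ContinuousLinearMap.snd ℝ ℝ ℝ -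
    (d.p j : ℝ) • ContinuousLinearMap.fst ℝ ℝ ℝ)) z + Real.pi / 2) := by
    ext z
    simp [G, Real.cos_add_pi_div_two]
  rw [e]
  exact this

lemma σ_hasDerivAt (w a : ℝ) : HasDerivAt (fun a => d.σ (w, a)) (d.ρ (a, w + d.α * a)) a := by
  have h := Zser_hasFDerivAt (fun j => 2 * Real.pi * d.q j) (fun j => 2 * Real.pi * d.θ j) d.A 0 d.Zs_sum (w, a)
  have h1 : HasDerivAt (fun b : ℝ => (w, b)) ((0 : ℝ), (1 : ℝ)) a :=
    (hasDerivAt_const _ _).prodMk (hasDerivAt_id _)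
  have h2 := HasFDerivAt.comp_hasDerivAt a (hl := h) h1
  have h3 := (hasDerivAt_id a).add h2
  refine HasDerivAt.congr_deriv (f := fun a => d.σ (w, a)) h3 ?_
  simp only [ρ, Cser, add_apply, smul_apply,
    ContinuousLinearMap.coe_fst', ContinuousLinearMap.coe_snd', smul_eq_mul, mul_zero, mul_one, zero_add, θ, add_zero]
  congr 1
  refine tsum_congr fun j => ?_
  congr 1
  · ring
  · congr 1; ring

lemma G_hasDerivAt (a b : ℝ) : HasDerivAt (fun b => d.G (a, b)) (d.ρ (a, b) - 1) b := by
  have : d.ρ (a, b) - 1 = ∑' j, (2 * Real.pi * d.A j * d.θ j) *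
      Real.cos (2 * Real.pi * (d.q j * b - d.p j * a)) := by simp [ρ]
  rw [this]
  refine hasDerivAt_tsum (𝕜 := ℝ) (u := fun j => 2 * Real.pi * (d.A j * d.θ j))
    (g := fun j b => (d.A j * d.θ j / d.q j) * Real.sin (2 * Real.pi * (d.q j * b - d.p j * a)))
    (g' := fun j b => (2 * Real.pi * d.A j * d.θ j) * Real.cos (2 * Real.pi * (d.q j * b - d.p j * a)))
    (d.summ0.mul_left _) ?_ ?_ (y₀ := 0) ?_ b
  · intro j y
    have h1 : HasDerivAt (fun y => 2 * Real.pi * (d.q j * y - d.p j * a)) (2 * Real.pi * (d.q j * 1)) y :=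
      (((hasDerivAt_id y).const_mul (d.q j : ℝ)).sub_const _).const_mul _
    have h2 := (h1.sin).const_mul (d.A j * d.θ j / d.q j)
    refine h2.congr_deriv ?_
    have := (d.q_pos j).ne'
    field_simp
  · intro j y
    have := d.hA j
    have := d.θ_pos j
    rw [norm_mul, Real.norm_eq_abs, Real.norm_eq_abs, abs_of_pos (by positivity)]
    calc _ ≤ 2 * Real.pi * d.A j * d.θ j * 1 := by
          gcongr
          exact Real.abs_cos_le_one _
      _ = _ := by ring
  · refine Summable.of_norm_bounded d.summ0 fun j => ?_
    have := d.hA j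
    have := d.θ_pos j
    have := d.q_pos j
    rw [norm_mul, Real.norm_eq_abs, Real.norm_eq_abs, abs_of_pos (by positivity)]
    have : d.A j * d.θ j / d.q j ≤ d.A j * d.θ j := div_le_self (by positivity) (d.one_le_q j)
    calc _ ≤ d.A j * d.θ j * 1 := by
          gcongr
          exact Real.abs_sin_le_one _
      _ = _ := by ring

lemma σ_zero (w : ℝ) : d.σ (w, 0) = 0 := by simp [σ, Zser]

lemma cos_per (x : ℝ) (n : ℤ) : Real.cos (2 * Real.pi * (x + n)) = Real.cos (2 * Real.pi * x) := by
  rw [mul_add, mul_comm (2 * Real.pi) (n : ℝ)]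
  exact Real.cos_add_int_mul_two_pi _ n

lemma sin_per (x : ℝ) (n : ℤ) : Real.sin (2 * Real.pi * (x + n)) = Real.sin (2 * Real.pi * x) := by
  rw [mul_add, mul_comm (2 * Real.pi) (n : ℝ)]
  exact Real.sin_add_int_mul_two_pi _ n

lemma ρ_per (a b : ℝ) (m n : ℤ) : d.ρ (a + m, b + n) = d.ρ (a, b) := by
  simp only [ρ]
  congr 1
  refine tsum_congr fun j => ?_
  rw [show (d.q j : ℝ) * (b + n) - d.p j * (a + m) = (d.q j * b - d.p j * a) +
    ((d.q j * n - d.p j * m : ℤ) : ℝ) by push_cast; ring, cos_per]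

lemma G_per (a b : ℝ) (m n : ℤ) : d.G (a + m, b + n) = d.G (a, b) := by
  simp only [G]
  refine tsum_congr fun j => ?_
  rw [show (d.q j : ℝ) * (b + n) - d.p j * (a + m) = (d.q j * b - d.p j * a) +
    ((d.q j * n - d.p j * m : ℤ) : ℝ) by push_cast; ring, sin_per]

lemma σ_eq (w a : ℝ) : d.σ (w, a) = a + ∑' j, d.A j * (Real.sin (2 * Real.pi * (d.q j * w + d.θ j * a)) -
    Real.sin (2 * Real.pi * (d.q j * w))) := by
  simp only [σ, Zser]
  congr 1
  refine tsum_congr fun j => ?_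
  congr 3 <;> ring

lemma σ_summable (w a : ℝ) : Summable fun j => d.A j * (Real.sin (2 * Real.pi * (d.q j * w + d.θ j * a)) -
    Real.sin (2 * Real.pi * (d.q j * w))) := by
  refine Summable.of_norm_bounded (d.summ0.mul_left (2 * Real.pi * |a|)) fun j => ?_
  have h1 := abs_sin_diff_le (2 * Real.pi * (d.q j * w + d.θ j * a)) (2 * Real.pi * (d.q j * w))
  rw [show 2 * Real.pi * (d.q j * w + d.θ j * a) - 2 * Real.pi * (d.q j * w) = 2 * Real.pi * d.θ j * a by ring,
    abs_mul (2 * Real.pi * d.θ j) a, abs_of_pos (a := 2 * Real.pi * d.θ j) (by have := d.θ_pos j; positivity)] at h1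
  have := d.hA j
  rw [norm_mul, Real.norm_eq_abs, Real.norm_eq_abs, abs_of_pos this]
  calc _ ≤ d.A j * (2 * Real.pi * d.θ j * |a|) := by gcongr
    _ = _ := by ring

lemma σ_per (w a : ℝ) (n : ℤ) : d.σ (w + n, a) = d.σ (w, a) := by
  rw [σ_eq, σ_eq]
  congr 1
  refine tsum_congr fun j => ?_
  rw [show (d.q j : ℝ) * (w + n) + d.θ j * a = d.q j * w + d.θ j * a + ((d.q j * n : ℤ) : ℝ) by push_cast; ring,
    show (d.q j : ℝ) * (w + n) = d.q j * w + ((d.q j * n : ℤ) : ℝ) by push_cast; ring, sin_per, sin_per]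

lemma σ_deck (w a : ℝ) (m : ℤ) : d.σ (w - d.α * m, a + m) = d.σ (w, a) + d.σ (w - d.α * m, m) := by
  rw [σ_eq, σ_eq, σ_eq]
  have key : ∀ j x, Real.sin (2 * Real.pi * (d.q j * (w - d.α * m) + d.θ j * (x + m))) =
      Real.sin (2 * Real.pi * (d.q j * w + d.θ j * x)) := by
    intro j x
    rw [show (d.q j : ℝ) * (w - d.α * m) + d.θ j * (x + m) =
      (d.q j * w + d.θ j * x) + ((-d.p j * m : ℤ) : ℝ) by simp only [θ]; push_cast; ring, sin_per]
  have h1 := d.σ_summable w a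
  have h2 := d.σ_summable (w - d.α * m) m
  rw [show a + ∑' (j : ℕ), d.A j * (Real.sin (2 * Real.pi * (d.q j * w + d.θ j * a)) -
    Real.sin (2 * Real.pi * (d.q j * w))) + (m + ∑' (j : ℕ), d.A j * (Real.sin (2 * Real.pi *
    (d.q j * (w - d.α * m) + d.θ j * m)) - Real.sin (2 * Real.pi * (d.q j * (w - d.α * m))))) =
    (a + m) + (∑' (j : ℕ), d.A j * (Real.sin (2 * Real.pi * (d.q j * w + d.θ j * a)) -
    Real.sin (2 * Real.pi * (d.q j * w))) + ∑' (j : ℕ), d.A j * (Real.sin (2 * Real.pi *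
    (d.q j * (w - d.α * m) + d.θ j * m)) - Real.sin (2 * Real.pi * (d.q j * (w - d.α * m))))) by ring,
    ← h1.tsum_add h2]
  congr 1
  refine tsum_congr fun j => ?_
  have k0 := key j 0
  rw [zero_add, mul_zero, add_zero] at k0
  rw [key, k0]
  ring

end Dat

end

section
open MeasureTheory Filter Set
open scoped Topology ENNReal NNReal

section descent

lemma torusProj_add_int (z : ℝ × ℝ) (m n : ℤ) : torusProj (z + ((m : ℝ), (n : ℝ))) = torusProj z := by
  have h : ∀ k : ℤ, ((k : ℝ) : AddCircle (1 : ℝ)) = 0 := fun k =>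
    (AddCircle.coe_eq_zero_iff (1 : ℝ)).2 ⟨k, by simp⟩
  simp only [torusProj, Prod.fst_add, Prod.snd_add, AddCircle.coe_add, h, add_zero]

lemma torusProj_eq_iff (z w : ℝ × ℝ) : torusProj z = torusProj w ↔ ∃ m n : ℤ, w = z + ((m : ℝ), (n : ℝ)) := by
  constructor
  · intro h
    simp only [torusProj, Prod.mk.injEq] at h
    obtain ⟨h1, h2⟩ := h
    obtain ⟨m, hm⟩ := (AddCircle.coe_eq_zero_iff (1 : ℝ) (x := w.1 - z.1)).1 (by rw [AddCircle.coe_sub, h1, sub_self])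
    obtain ⟨n, hn⟩ := (AddCircle.coe_eq_zero_iff (1 : ℝ) (x := w.2 - z.2)).1 (by rw [AddCircle.coe_sub, h2, sub_self])
    refine ⟨m, n, ?_⟩
    simp only [zsmul_eq_mul, mul_one] at hm hn
    ext
    · simp [hm]
    · simp [hn]
  · rintro ⟨m, n, rfl⟩
    rw [torusProj_add_int]

lemma torusProj_surj : Function.Surjective torusProj := by
  rintro ⟨x, y⟩
  obtain ⟨a, rfl⟩ := QuotientAddGroup.mk_surjective x
  obtain ⟨b, rfl⟩ := QuotientAddGroup.mk_surjective y
  exact ⟨(a, b), rfl⟩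

lemma torusProj_cont : Continuous torusProj := by
  unfold torusProj
  exact ((AddCircle.continuous_mk' (1:ℝ)).comp continuous_fst).prodMk ((AddCircle.continuous_mk' (1:ℝ)).comp continuous_snd)

lemma torusProj_quot : Topology.IsQuotientMap torusProj := by
  have h : IsOpenQuotientMap (QuotientAddGroup.mk : ℝ → AddCircle (1 : ℝ)) :=
    QuotientAddGroup.isOpenQuotientMap_mk
  exact (h.prodMap h).isQuotientMap

/-- ℤ²-equivariance. -/
def Equi (F : ℝ × ℝ → ℝ × ℝ) : Prop := ∀ z (m n : ℤ), F (z + ((m : ℝ), (n : ℝ))) = F z + ((m : ℝ), (n : ℝ))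

/-- ℤ²-invariance. -/
def Inva {X : Type*} (F : ℝ × ℝ → X) : Prop := ∀ z (m n : ℤ), F (z + ((m : ℝ), (n : ℝ))) = F z

noncomputable def descF {X : Type*} (F : ℝ × ℝ → X) : Torus2 → X := fun p => F (Function.surjInv torusProj_surj p)

lemma descF_spec {X : Type*} {F : ℝ × ℝ → X} (h : Inva F) (z : ℝ × ℝ) : descF F (torusProj z) = F z := by
  have := Function.surjInv_eq torusProj_surj (torusProj z)
  obtain ⟨m, n, h1⟩ := (torusProj_eq_iff _ _).1 this
  unfold descF
  conv_rhs => rw [h1]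
  rw [h]

lemma descF_cont {X : Type*} [TopologicalSpace X] {F : ℝ × ℝ → X} (h : Inva F) (hc : Continuous F) :
    Continuous (descF F) := by
  rw [torusProj_quot.continuous_iff]
  have : descF F ∘ torusProj = F := funext fun z => descF_spec h z
  rwa [this]

noncomputable def desc (F : ℝ × ℝ → ℝ × ℝ) : Torus2 → Torus2 := descF (torusProj ∘ F)

lemma Equi.inva {F : ℝ × ℝ → ℝ × ℝ} (h : Equi F) : Inva (torusProj ∘ F) := by
  intro z m n
  simp only [Function.comp]
  rw [h, torusProj_add_int]

lemma desc_spec {F : ℝ × ℝ → ℝ × ℝ} (h : Equi F) (z : ℝ × ℝ) : desc F (torusProj z) = torusProj (F z) :=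
  descF_spec h.inva z

lemma desc_cont {F : ℝ × ℝ → ℝ × ℝ} (h : Equi F) (hc : Continuous F) : Continuous (desc F) :=
  descF_cont h.inva (torusProj_cont.comp hc)

lemma Equi.comp {F G : ℝ × ℝ → ℝ × ℝ} (hF : Equi F) (hG : Equi G) : Equi (F ∘ G) := by
  intro z m n
  simp only [Function.comp, hG z m n, hF _ m n]

lemma desc_comp {F G : ℝ × ℝ → ℝ × ℝ} (hF : Equi F) (hG : Equi G) : desc (F ∘ G) = desc F ∘ desc G := by
  ext1 p
  obtain ⟨z, rfl⟩ := torusProj_surj p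
  simp [desc_spec, hF, hG, hF.comp hG]

lemma equi_id : Equi id := fun _ _ _ => rfl

lemma desc_id : desc id = id := by
  ext1 p
  obtain ⟨z, rfl⟩ := torusProj_surj p
  simp [desc_spec, equi_id]

lemma Equi.of_inv {F G : ℝ × ℝ → ℝ × ℝ} (hF : Equi F) (h1 : ∀ z, F (G z) = z) (h2 : ∀ z, G (F z) = z) : Equi G := by
  intro z m n
  have := h2 (G z + ((m : ℝ), (n : ℝ)))
  rwa [hF, h1] at this

end descent

namespace Dat
open scoped ContDiff
variable (d : Dat)

lemma aa_ex : ∃ k : ℝ × ℝ → ℝ, ContDiff ℝ (∞ : WithTop ℕ∞) k ∧ (∀ w s, d.σ (w, k (w, s)) = s) ∧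
      (∀ w a, k (w, d.σ (w, a)) = a) :=
  tri_exists d.σ (fun x => d.ρ (x.2, x.1 + d.α * x.2)) d.σ_contDiff (fun a b => d.σ_hasDerivAt a b)
    (fun p => by have := d.ρ_ge (p.2, p.1 + d.α * p.2); linarith)

/-- inverse of σ(w,·) -/
noncomputable def aa : ℝ × ℝ → ℝ := d.aa_ex.choose
lemma aa_contDiff : ContDiff ℝ (∞ : WithTop ℕ∞) d.aa := d.aa_ex.choose_spec.1
lemma σ_aa (w s : ℝ) : d.σ (w, d.aa (w, s)) = s := d.aa_ex.choose_spec.2.1 w s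
lemma aa_σ (w a : ℝ) : d.aa (w, d.σ (w, a)) = a := d.aa_ex.choose_spec.2.2 w a

noncomputable def H (z : ℝ × ℝ) : ℝ := z.2 + d.G z
lemma H_hasDerivAt (a b : ℝ) : HasDerivAt (fun b => d.H (a, b)) (d.ρ (a, b)) b := by
  have := (hasDerivAt_id b).add (d.G_hasDerivAt a b)
  exact this.congr_deriv (by ring)
lemma H_contDiff : ContDiff ℝ (∞ : WithTop ℕ∞) d.H := contDiff_snd.add d.G_contDiff

lemma bb_ex : ∃ k : ℝ × ℝ → ℝ, ContDiff ℝ (∞ : WithTop ℕ∞) k ∧ (∀ w s, d.H (w, k (w, s)) = s) ∧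
      (∀ w a, k (w, d.H (w, a)) = a) :=
  tri_exists d.H d.ρ d.H_contDiff d.H_hasDerivAt
    (fun p => by have := d.ρ_ge p; linarith)

noncomputable def bb : ℝ × ℝ → ℝ := d.bb_ex.choose
lemma bb_contDiff : ContDiff ℝ (∞ : WithTop ℕ∞) d.bb := d.bb_ex.choose_spec.1
lemma H_bb (w s : ℝ) : d.H (w, d.bb (w, s)) = s := d.bb_ex.choose_spec.2.1 w s
lemma bb_H (w a : ℝ) : d.bb (w, d.H (w, a)) = a := d.bb_ex.choose_spec.2.2 w a

lemma aa_zero (w : ℝ) : d.aa (w, 0) = 0 := by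
  have := d.aa_σ w 0
  rwa [σ_zero] at this

lemma aa_per (w s : ℝ) (n : ℤ) : d.aa (w + n, s) = d.aa (w, s) := by
  have h := d.aa_σ (w + n) (d.aa (w, s))
  rwa [σ_per, σ_aa] at h

lemma aa_deck (w s : ℝ) (m : ℤ) : d.aa (w - d.α * m, s + d.σ (w - d.α * m, m)) = d.aa (w, s) + m := by
  have h := d.aa_σ (w - d.α * m) (d.aa (w, s) + m)
  rwa [σ_deck, σ_aa] at h

/-- The time-changed flow. -/
noncomputable def Fl (t : ℝ) (z : ℝ × ℝ) : ℝ × ℝ :=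
  (d.aa (z.2 - d.α * z.1, d.σ (z.2 - d.α * z.1, z.1) + t),
    z.2 - d.α * z.1 + d.α * d.aa (z.2 - d.α * z.1, d.σ (z.2 - d.α * z.1, z.1) + t))

lemma Fl_w (t : ℝ) (z : ℝ × ℝ) : (d.Fl t z).2 - d.α * (d.Fl t z).1 = z.2 - d.α * z.1 := by
  simp [Fl]

lemma Fl_contDiff (t : ℝ) : ContDiff ℝ (∞ : WithTop ℕ∞) (d.Fl t) := by
  have h1 := d.aa_contDiff
  have h2 := d.σ_contDiff
  unfold Fl
  fun_prop

lemma Fl_add (s t : ℝ) (z : ℝ × ℝ) : d.Fl s (d.Fl t z) = d.Fl (t + s) z := by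
  have h : ∀ y : ℝ × ℝ, d.Fl s y = (d.aa (y.2 - d.α * y.1, d.σ (y.2 - d.α * y.1, y.1) + s),
    y.2 - d.α * y.1 + d.α * d.aa (y.2 - d.α * y.1, d.σ (y.2 - d.α * y.1, y.1) + s)) := fun _ => rfl
  rw [h, Fl_w]
  have h2 : d.σ (z.2 - d.α * z.1, (d.Fl t z).1) = d.σ (z.2 - d.α * z.1, z.1) + t := by
    simp only [Fl, σ_aa]
  rw [h2]
  simp only [Fl, add_assoc]

lemma Fl_zero (z : ℝ × ℝ) : d.Fl 0 z = z := by
  simp [Fl, aa_σ]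

lemma Fl_equi (t : ℝ) : Equi (d.Fl t) := by
  rintro ⟨a, b⟩ m n
  have h1 : b + n - d.α * (a + m) = (b - d.α * a) - d.α * m + n := by ring
  simp only [Fl, Prod.mk_add_mk, h1, σ_per, aa_per, σ_deck]
  rw [show d.σ (b - d.α * a, a) + d.σ (b - d.α * a - d.α * m, m) + t =
    (d.σ (b - d.α * a, a) + t) + d.σ (b - d.α * a - d.α * m, m) by ring, aa_deck]
  ext
  · rfl
  · simp; ring

noncomputable def Ph (z : ℝ × ℝ) : ℝ × ℝ := (z.1, d.H z)
noncomputable def Ph' (z : ℝ × ℝ) : ℝ × ℝ := (z.1, d.bb z)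

lemma Ph_contDiff : ContDiff ℝ (∞ : WithTop ℕ∞) d.Ph := contDiff_fst.prodMk d.H_contDiff
lemma Ph'_contDiff : ContDiff ℝ (∞ : WithTop ℕ∞) d.Ph' := contDiff_fst.prodMk d.bb_contDiff
lemma Ph_Ph' (z : ℝ × ℝ) : d.Ph (d.Ph' z) = z := by
  ext
  · rfl
  · exact d.H_bb _ _
lemma Ph'_Ph (z : ℝ × ℝ) : d.Ph' (d.Ph z) = z := by
  ext
  · rfl
  · exact d.bb_H _ _
lemma Ph_equi : Equi d.Ph := by
  rintro ⟨a, b⟩ m n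
  ext
  · rfl
  · simp [Ph, H, G_per]; ring
lemma Ph'_equi : Equi d.Ph' := d.Ph_equi.of_inv d.Ph_Ph' d.Ph'_Ph

noncomputable def T' : Torus2 → Torus2 := desc (d.Fl 1)
noncomputable def PT : Torus2 → Torus2 := desc d.Ph
noncomputable def PT' : Torus2 → Torus2 := desc d.Ph'
noncomputable def T : Torus2 → Torus2 := d.PT ∘ d.T' ∘ d.PT'

lemma PT_PT' : d.PT ∘ d.PT' = id := by
  rw [PT, PT', ← desc_comp d.Ph_equi d.Ph'_equi, ← desc_id]
  congr 1
  ext1 z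
  exact d.Ph_Ph' z
lemma PT'_PT : d.PT' ∘ d.PT = id := by
  rw [PT, PT', ← desc_comp d.Ph'_equi d.Ph_equi, ← desc_id]
  congr 1
  ext1 z
  exact d.Ph'_Ph z

lemma T'_iter (n : ℕ) : d.T'^[n] = desc (d.Fl n) := by
  induction n with
  | zero =>
    rw [Function.iterate_zero, ← desc_id]
    congr 1
    ext1 z
    simp [Fl_zero]
  | succ n ih =>
    rw [Function.iterate_succ', ih, T', ← desc_comp (d.Fl_equi _) (d.Fl_equi _)]
    congr 1
    ext1 z
    simp [Fl_add]

lemma T_eq : d.T = desc (d.Ph ∘ d.Fl 1 ∘ d.Ph') := by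
  rw [desc_comp d.Ph_equi ((d.Fl_equi 1).comp d.Ph'_equi), desc_comp (d.Fl_equi 1) d.Ph'_equi]
  rfl

lemma T_inv_ex : ∃ S : Torus2 → Torus2, S = desc (d.Ph ∘ d.Fl (-1) ∘ d.Ph') ∧ (∀ p, S (d.T p) = p) ∧ ∀ p, d.T (S p) = p := by
  refine ⟨_, rfl, ?_, ?_⟩
  · intro p
    obtain ⟨z, rfl⟩ := torusProj_surj p
    have e1 := d.Ph_equi.comp ((d.Fl_equi 1).comp d.Ph'_equi)
    have e2 := d.Ph_equi.comp ((d.Fl_equi (-1)).comp d.Ph'_equi)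
    rw [T_eq, desc_spec e1, desc_spec e2]
    simp [Ph'_Ph, Fl_add, Fl_zero, Ph_Ph']
  · intro p
    obtain ⟨z, rfl⟩ := torusProj_surj p
    have e1 := d.Ph_equi.comp ((d.Fl_equi 1).comp d.Ph'_equi)
    have e2 := d.Ph_equi.comp ((d.Fl_equi (-1)).comp d.Ph'_equi)
    rw [T_eq, desc_spec e2, desc_spec e1]
    simp [Ph'_Ph, Fl_add, Fl_zero, Ph_Ph']

theorem T_diffeo : IsCkTorusDiffeo ⊤ d.T := by
  obtain ⟨S, hS, h1, h2⟩ := d.T_inv_ex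
  have hb : Function.Bijective d.T := ⟨Function.LeftInverse.injective h1, Function.RightInverse.surjective h2⟩
  refine ⟨hb, ⟨d.Ph ∘ d.Fl 1 ∘ d.Ph', ?_, ?_⟩, ⟨d.Ph ∘ d.Fl (-1) ∘ d.Ph', ?_, ?_⟩⟩
  · exact d.Ph_contDiff.comp ((d.Fl_contDiff 1).comp d.Ph'_contDiff)
  · intro z
    rw [T_eq, desc_spec (d.Ph_equi.comp ((d.Fl_equi 1).comp d.Ph'_equi))]
  · exact d.Ph_contDiff.comp ((d.Fl_contDiff (-1)).comp d.Ph'_contDiff)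
  · intro z
    have : Function.invFun d.T = S := by
      ext1 p
      apply hb.1
      rw [h2, Function.rightInverse_invFun hb.2]
    rw [this, hS, desc_spec (d.Ph_equi.comp ((d.Fl_equi (-1)).comp d.Ph'_equi))]

/-- orbit parametrisation -/
noncomputable def κ (w s : ℝ) : Torus2 := torusProj (d.Ph (d.aa (w, s), w + d.α * d.aa (w, s)))

lemma T_κ (w s : ℝ) : d.T (d.κ w s) = d.κ w (s + 1) := by
  rw [T_eq, κ, desc_spec (d.Ph_equi.comp ((d.Fl_equi 1).comp d.Ph'_equi))]
  simp [Ph'_Ph, Fl, σ_aa, κ]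

lemma T_iter_κ (w s : ℝ) (i : ℕ) : d.T^[i] (d.κ w s) = d.κ w (s + i) := by
  induction i with
  | zero => simp
  | succ n ih => rw [Function.iterate_succ_apply', ih, T_κ]; push_cast; ring_nf

end Dat

end

section
open MeasureTheory Filter Set
open scoped Topology ENNReal NNReal

section periodize

/-- integer translation vector -/
def zv (k : ℤ × ℤ) : ℝ × ℝ := ((k.1 : ℝ), (k.2 : ℝ))

/-- partition of unity -/
def PU (φ : ℝ × ℝ → ℝ≥0∞) : Prop := Measurable φ ∧ ∀ z, ∑' k : ℤ × ℤ, φ (z + zv k) = 1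

lemma PU_sum_sub {φ : ℝ × ℝ → ℝ≥0∞} (h : PU φ) (z : ℝ × ℝ) : ∑' k : ℤ × ℤ, φ (z - zv k) = 1 := by
  rw [← h.2 z, ← (Equiv.neg (ℤ × ℤ)).tsum_eq]
  refine tsum_congr fun k => ?_
  congr 1
  ext <;> simp [zv]

lemma PU_int {φ ψ g : ℝ × ℝ → ℝ≥0∞} (hφ : PU φ) (hψ : PU ψ) (hg : Measurable g) (hi : Inva g) :
    ∫⁻ z, g z * φ z = ∫⁻ z, g z * ψ z := by
  have m1 := hφ.1
  have m2 := hψ.1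
  calc ∫⁻ z, g z * φ z = ∫⁻ z, ∑' k, g z * φ z * ψ (z + zv k) := by
        refine lintegral_congr fun z => ?_
        rw [ENNReal.tsum_mul_left, hψ.2, mul_one]
    _ = ∑' k, ∫⁻ z, g z * φ z * ψ (z + zv k) := by
        rw [lintegral_tsum]
        intro k
        exact ((hg.mul m1).mul (m2.comp (measurable_id.add_const _))).aemeasurable
    _ = ∑' k, ∫⁻ z, g z * φ (z - zv k) * ψ z := by
        refine tsum_congr fun k => ?_
        rw [← lintegral_add_right_eq_self (fun z => g z * φ (z - zv k) * ψ z) (zv k)]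
        refine lintegral_congr fun z => ?_
        rw [add_sub_cancel_right, show g (z + zv k) = g z from hi z k.1 k.2]
    _ = ∫⁻ z, ∑' k, g z * φ (z - zv k) * ψ z := by
        rw [lintegral_tsum]
        intro k
        exact ((hg.mul (m1.comp (measurable_id.sub_const _))).mul m2).aemeasurable
    _ = _ := by
        refine lintegral_congr fun z => ?_
        rw [ENNReal.tsum_mul_right, ENNReal.tsum_mul_left, PU_sum_sub hφ, mul_one]

def DD : Set (ℝ × ℝ) := Ioc (0 : ℝ) 1 ×ˢ Ioc (0 : ℝ) 1

lemma DD_meas : MeasurableSet DD := measurableSet_Ioc.prod measurableSet_Ioc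

lemma PU_DD : PU (DD.indicator 1) := by
  refine ⟨measurable_one.indicator DD_meas, fun z => ?_⟩
  rw [tsum_eq_single (1 - ⌈z.1⌉, 1 - ⌈z.2⌉)]
  · rw [indicator_of_mem]; · rfl
    have h1 := Int.ceil_lt_add_one z.1
    have h2 := Int.le_ceil z.1
    have h3 := Int.ceil_lt_add_one z.2
    have h4 := Int.le_ceil z.2
    refine ⟨⟨?_, ?_⟩, ⟨?_, ?_⟩⟩ <;> simp [zv] <;> linarith
  · rintro ⟨m, n⟩ hk
    rw [indicator_of_notMem]
    rintro ⟨⟨h1, h2⟩, ⟨h3, h4⟩⟩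
    apply hk
    simp only [zv, Prod.fst_add, Prod.snd_add] at h1 h2 h3 h4
    have e1 : ⌈z.1⌉ = 1 - m := by
      rw [Int.ceil_eq_iff]; push_cast; constructor <;> linarith
    have e2 : ⌈z.2⌉ = 1 - n := by
      rw [Int.ceil_eq_iff]; push_cast; constructor <;> linarith
    rw [e1, e2]; simp

lemma torusProj_mp : MeasurePreserving torusProj (volume.restrict DD) volume := by
  have h := AddCircle.measurePreserving_mk 1 0
  have := h.prod h
  rw [zero_add, Measure.prod_restrict] at this
  exact this

lemma torus_lint {f : Torus2 → ℝ≥0∞} (hf : Measurable f) :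
    ∫⁻ p, f p = ∫⁻ z, f (torusProj z) * DD.indicator 1 z := by
  rw [← torusProj_mp.lintegral_comp hf, ← lintegral_indicator DD_meas]
  refine lintegral_congr fun z => ?_
  by_cases h : z ∈ DD <;> simp [h]

/-- main transfer principle -/
lemma torus_transfer {F F' : ℝ × ℝ → ℝ × ℝ} (hF : Equi F) (hFc : Continuous F) (hF'c : Continuous F')
    (h1 : ∀ z, F (F' z) = z) (h2 : ∀ z, F' (F z) = z) (r1 r2 : ℝ × ℝ → ℝ≥0∞)
    (m1 : Measurable r1) (m2 : Measurable r2) (i1 : Inva r1) (i2 : Inva r2)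
    (hcv : ∀ g : ℝ × ℝ → ℝ≥0∞, Measurable g → ∫⁻ z, g (F z) * r1 z = ∫⁻ z, g z * r2 z)
    (R1 R2 : Torus2 → ℝ≥0∞) (M1 : Measurable R1) (M2 : Measurable R2)
    (e1 : ∀ z, R1 (torusProj z) = r1 z) (e2 : ∀ z, R2 (torusProj z) = r2 z) :
    MeasurePreserving (desc F) (volume.withDensity R1) (volume.withDensity R2) := by
  have hm : Measurable (desc F) := (desc_cont hF hFc).measurable
  refine ⟨hm, ?_⟩
  refine Measure.ext_of_lintegral _ fun f hf => ?_
  have hc : Measurable fun p => f (desc F p) := hf.comp hm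
  rw [lintegral_map hf hm, lintegral_withDensity_eq_lintegral_mul _ M1 hc,
    lintegral_withDensity_eq_lintegral_mul _ M2 hf, torus_lint (M1.mul hc), torus_lint (M2.mul hf)]
  have hF' : Equi F' := hF.of_inv h1 h2
  have hp : PU (DD.indicator 1 ∘ F') := by
    refine ⟨PU_DD.1.comp hF'c.measurable, fun z => ?_⟩
    rw [← PU_DD.2 (F' z)]
    refine tsum_congr fun k => ?_
    show DD.indicator 1 (F' (z + zv k)) = _
    rw [show F' (z + zv k) = F' z + zv k from hF' z k.1 k.2]
  have hpm := torusProj_cont.measurable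
  have := hcv (fun z => f (torusProj z) * DD.indicator 1 (F' z))
    ((hf.comp hpm).mul hp.1)
  simp only [h2] at this
  calc _ = ∫⁻ z, f (torusProj (F z)) * DD.indicator 1 z * r1 z := by
        refine lintegral_congr fun z => ?_
        simp only [Pi.mul_apply, e1, desc_spec hF]; ring
    _ = ∫⁻ z, f (torusProj z) * DD.indicator 1 (F' z) * r2 z := this
    _ = ∫⁻ z, (f (torusProj z) * r2 z) * (DD.indicator 1 ∘ F') z := by
        refine lintegral_congr fun z => ?_
        simp only [Function.comp]; ring
    _ = ∫⁻ z, (f (torusProj z) * r2 z) * DD.indicator 1 z := by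
        refine PU_int hp PU_DD ((hf.comp hpm).mul m2) ?_
        intro z m n
        simp only [torusProj_add_int, i2 z m n]
    _ = _ := by
        refine lintegral_congr fun z => ?_
        simp only [Pi.mul_apply, e2]; ring

lemma line_cv (h r : ℝ → ℝ) (hd : ∀ b, HasDerivAt h (r b) b) (hr : ∀ b, 0 < r b)
    (hb : Function.Bijective h) (g : ℝ → ℝ≥0∞) :
    ∫⁻ b, g (h b) * ENNReal.ofReal (r b) = ∫⁻ s, g s := by
  have := lintegral_image_eq_lintegral_abs_deriv_mul (s := univ) (f := h) (f' := r) MeasurableSet.univ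
    (fun x _ => (hd x).hasDerivWithinAt) hb.1.injOn g
  rw [image_univ, hb.2.range_eq, Measure.restrict_univ] at this
  rw [this]
  refine lintegral_congr fun b => ?_
  rw [abs_of_pos (hr b), mul_comm]

end periodize

namespace Dat
open scoped ContDiff
variable (d : Dat)

lemma ρ_cont : Continuous d.ρ := d.ρ_contDiff.continuous
lemma ρ_inva : Inva d.ρ := fun z m n => d.ρ_per z.1 z.2 m n

noncomputable def rb : Torus2 → ℝ := descF d.ρ
lemma rb_spec (z : ℝ × ℝ) : d.rb (torusProj z) = d.ρ z := descF_spec d.ρ_inva z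
lemma rb_cont : Continuous d.rb := descF_cont d.ρ_inva d.ρ_cont
noncomputable def μ : Measure Torus2 := volume.withDensity fun p => ENNReal.ofReal (d.rb p)

lemma Fl_inv (t : ℝ) (z : ℝ × ℝ) : d.Fl t (d.Fl (-t) z) = z := by rw [Fl_add, neg_add_cancel, Fl_zero]
lemma Fl_inv' (t : ℝ) (z : ℝ × ℝ) : d.Fl (-t) (d.Fl t z) = z := by rw [Fl_add, add_neg_cancel, Fl_zero]

lemma H_bij (a : ℝ) : Function.Bijective fun b => d.H (a, b) :=
  ⟨Function.LeftInverse.injective (g := fun s => d.bb (a, s)) (fun b => d.bb_H a b),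
   Function.RightInverse.surjective (g := fun s => d.bb (a, s)) (fun b => d.H_bb a b)⟩

lemma σ_bij (a : ℝ) : Function.Bijective fun b => d.σ (a, b) :=
  ⟨Function.LeftInverse.injective (g := fun s => d.aa (a, s)) (fun b => d.aa_σ a b),
   Function.RightInverse.surjective (g := fun s => d.aa (a, s)) (fun b => d.σ_aa a b)⟩

lemma orho_meas : Measurable fun z => ENNReal.ofReal (d.ρ z) := d.ρ_cont.measurable.ennreal_ofReal

lemma Ph_cv (g : ℝ × ℝ → ℝ≥0∞) (hg : Measurable g) :
    ∫⁻ z, g (d.Ph z) * ENNReal.ofReal (d.ρ z) = ∫⁻ z, g z * 1 := by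
  have m := d.orho_meas
  have hp := d.Ph_contDiff.continuous.measurable
  simp only [mul_one]
  have hm : Measurable fun z => g (d.Ph z) * ENNReal.ofReal (d.ρ z) := (hg.comp hp).mul m
  rw [Measure.volume_eq_prod, lintegral_prod _ hm.aemeasurable, lintegral_prod _ hg.aemeasurable]
  refine lintegral_congr fun a => ?_
  exact line_cv _ _ (d.H_hasDerivAt a) (fun b => d.ρ_pos _) (d.H_bij a) (fun s => g (a, s))

lemma skew_lint (g : ℝ × ℝ → ℝ≥0∞) (hg : Measurable g) :
    ∫⁻ z, g z = ∫⁻ w, ∫⁻ a, g (a, w + d.α * a) := by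
  rw [Measure.volume_eq_prod, lintegral_prod _ hg.aemeasurable,
    lintegral_lintegral_swap (f := fun w a => g (a, w + d.α * a))]
  · refine lintegral_congr fun a => ?_
    rw [← lintegral_add_right_eq_self (fun b => g (a, b)) (d.α * a)]
  · refine (hg.comp ?_).aemeasurable
    fun_prop

lemma Fl_cv (t : ℝ) (g : ℝ × ℝ → ℝ≥0∞) (hg : Measurable g) :
    ∫⁻ z, g (d.Fl t z) * ENNReal.ofReal (d.ρ z) = ∫⁻ z, g z * ENNReal.ofReal (d.ρ z) := by
  have m := d.orho_meas
  have hp := (d.Fl_contDiff t).continuous.measurable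
  have hm : Measurable fun z => g (d.Fl t z) * ENNReal.ofReal (d.ρ z) := (hg.comp hp).mul m
  have hm' : Measurable fun z => g z * ENNReal.ofReal (d.ρ z) := hg.mul m
  rw [d.skew_lint _ hm, d.skew_lint _ hm']
  refine lintegral_congr fun w => ?_
  have key := line_cv _ _ (d.σ_hasDerivAt w) (fun b => d.ρ_pos _) (d.σ_bij w)
  have k1 := key (fun s => g (d.aa (w, s + t), w + d.α * d.aa (w, s + t)))
  have k2 := key (fun s => g (d.aa (w, s), w + d.α * d.aa (w, s)))
  simp only [aa_σ] at k2
  rw [k2]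
  simp only [Fl, add_sub_cancel_right]
  rw [k1, lintegral_add_right_eq_self (fun s => g (d.aa (w, s), w + d.α * d.aa (w, s))) t]

lemma T'_mp : MeasurePreserving d.T' d.μ d.μ :=
  torus_transfer (d.Fl_equi 1) (d.Fl_contDiff 1).continuous (d.Fl_contDiff (-1)).continuous (d.Fl_inv 1)
    (d.Fl_inv' 1) _ _ d.orho_meas d.orho_meas (fun z m n => congrArg ENNReal.ofReal (d.ρ_inva z m n)) (fun z m n => congrArg ENNReal.ofReal (d.ρ_inva z m n))
    (d.Fl_cv 1) _ _ d.rb_cont.measurable.ennreal_ofReal d.rb_cont.measurable.ennreal_ofReal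
    (fun z => by rw [d.rb_spec]) (fun z => by rw [d.rb_spec])

lemma PT_mp : MeasurePreserving d.PT d.μ volume := by
  have := torus_transfer d.Ph_equi d.Ph_contDiff.continuous d.Ph'_contDiff.continuous d.Ph_Ph' d.Ph'_Ph
    _ _ d.orho_meas measurable_const (fun z m n => congrArg ENNReal.ofReal (d.ρ_inva z m n)) (fun z m n => rfl)
    d.Ph_cv _ _ d.rb_cont.measurable.ennreal_ofReal measurable_const
    (fun z => by rw [d.rb_spec]) (fun z => rfl)
  rwa [show (fun _ : Torus2 => (1 : ℝ≥0∞)) = 1 from rfl, withDensity_one] at this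

lemma PT_cont : Continuous d.PT := desc_cont d.Ph_equi d.Ph_contDiff.continuous
lemma PT'_cont : Continuous d.PT' := desc_cont d.Ph'_equi d.Ph'_contDiff.continuous
lemma T'_cont : Continuous d.T' := desc_cont (d.Fl_equi 1) (d.Fl_contDiff 1).continuous
lemma T_cont : Continuous d.T := d.PT_cont.comp (d.T'_cont.comp d.PT'_cont)

instance instT1 : IsProbabilityMeasure (volume : Measure (AddCircle (1 : ℝ))) := by
  constructor
  rw [AddCircle.measure_univ, ENNReal.ofReal_one]

instance instT2 : IsProbabilityMeasure (volume : Measure Torus2) :=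
  inferInstanceAs (IsProbabilityMeasure ((volume : Measure (AddCircle (1 : ℝ))).prod volume))

instance instμ : IsProbabilityMeasure d.μ := by
  constructor
  have := d.PT_mp.measure_preimage (s := univ) MeasurableSet.univ.nullMeasurableSet
  rw [preimage_univ] at this
  rw [this, measure_univ]

lemma PT_semi : Function.Semiconj d.PT d.T' d.T := by
  intro p
  show d.PT (d.T' p) = d.PT (d.T' (d.PT' (d.PT p)))
  rw [show d.PT' (d.PT p) = p from congrFun d.PT'_PT p]

theorem T_mp : MeasurePreserving d.T volume volume := by
  refine d.PT_mp.of_semiconj d.T'_mp d.PT_semi d.T_cont.measurable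

theorem T_wm (h : WeaklyMixing d.T' d.μ) : WeaklyMixing d.T volume := by
  have h1 : MeasurePreserving (Prod.map d.PT d.PT) (d.μ.prod d.μ) (volume.prod volume) := d.PT_mp.prod d.PT_mp
  refine h1.ergodic_of_ergodic_semiconj h ?_ ?_
  · exact (d.T_cont.measurable.comp measurable_fst).prodMk (d.T_cont.measurable.comp measurable_snd)
  · rintro ⟨p, q⟩
    simp only [Prod.map]
    rw [d.PT_semi.eq p, d.PT_semi.eq q]

end Dat

end

section
open MeasureTheory Filter Set
open scoped Topology ENNReal NNReal

namespace Dat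
open scoped ContDiff

noncomputable def rem (d : Dat) (k : ℕ) : ℝ :=
  ∑' j, if j = k then 0 else d.q j * d.A j * min 1 (d.θ j / d.θ k)

/-- Quantitative hypotheses. -/
structure Good (d : Dat) : Prop where
  hirr : Irrational d.α
  hK : ∃ C : ℝ, ∀ s : ℝ, 1 ≤ s → ∑' j, d.q j * d.A j * min 1 (d.θ j * s) ≤ C * (1 + Real.log s)
  hrem : Tendsto (fun k => d.rem k / (d.q k * d.A k)) atTop (𝓝 0)
  hAinf : ∀ t : ℝ, 0 < t → t < 1 → Tendsto (fun k => d.A k / (Real.log (1 / d.θ k)) ^ t) atTop atTop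
  hθ0 : Tendsto d.θ atTop (𝓝 0)
  hqinf : Tendsto (fun k => (d.q k : ℝ)) atTop atTop

variable (d : Dat)

noncomputable def τ (j : ℕ) (w a : ℝ) : ℝ := d.A j * (Real.sin (2 * Real.pi * (d.q j * w + d.θ j * a)) -
    Real.sin (2 * Real.pi * (d.q j * w)))

noncomputable def mn (j : ℕ) (a : ℝ) : ℝ := min 1 (Real.pi * d.θ j * |a|)

lemma mn_nonneg (j : ℕ) (a : ℝ) : 0 ≤ d.mn j a := by
  have := d.θ_pos j
  unfold mn; positivity

lemma mn_le (j : ℕ) (a : ℝ) : d.mn j a ≤ Real.pi * d.θ j * |a| := min_le_right _ _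
lemma mn_le_one (j : ℕ) (a : ℝ) : d.mn j a ≤ 1 := min_le_left _ _

lemma sin_half_le (j : ℕ) (a : ℝ) : |Real.sin (Real.pi * d.θ j * a)| ≤ d.mn j a := by
  refine le_min (Real.abs_sin_le_one _) ?_
  refine Real.abs_sin_le_abs.trans (le_of_eq ?_)
  rw [abs_mul, abs_of_pos (mul_pos Real.pi_pos (d.θ_pos j))]

lemma τ_eq (j : ℕ) (w a : ℝ) : d.τ j w a = 2 * d.A j * Real.sin (Real.pi * d.θ j * a) *
    Real.cos (2 * Real.pi * (d.q j * w) + Real.pi * d.θ j * a) := by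
  rw [τ, Real.sin_sub_sin]
  rw [show (2 * Real.pi * (d.q j * w + d.θ j * a) - 2 * Real.pi * (d.q j * w)) / 2 = Real.pi * d.θ j * a by ring,
    show (2 * Real.pi * (d.q j * w + d.θ j * a) + 2 * Real.pi * (d.q j * w)) / 2 =
      2 * Real.pi * (d.q j * w) + Real.pi * d.θ j * a by ring]
  ring

lemma τ_bd (j : ℕ) (w a : ℝ) : |d.τ j w a| ≤ 2 * (d.A j * d.mn j a) := by
  have h0 := d.hA j
  have h1 := d.mn_nonneg j a
  rw [τ_eq, abs_mul, abs_mul, abs_of_pos (by positivity : 0 < 2 * d.A j)]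
  calc _ ≤ 2 * d.A j * d.mn j a * 1 := by
        gcongr
        · exact d.sin_half_le j a
        · exact Real.abs_cos_le_one _
    _ = _ := by ring

lemma τ_lip (j : ℕ) (w w' a : ℝ) : |d.τ j w a - d.τ j w' a| ≤
    4 * Real.pi * (d.q j * d.A j * d.mn j a) * |w - w'| := by
  have h0 := d.hA j
  have h1 := d.mn_nonneg j a
  have h2 := d.q_pos j
  rw [τ_eq, τ_eq, ← mul_sub, abs_mul, abs_mul, abs_of_pos (by positivity : 0 < 2 * d.A j)]
  have h3 := Real.abs_cos_sub_cos_le (2 * Real.pi * (d.q j * w) + Real.pi * d.θ j * a)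
    (2 * Real.pi * (d.q j * w') + Real.pi * d.θ j * a)
  rw [show 2 * Real.pi * (d.q j * w) + Real.pi * d.θ j * a - (2 * Real.pi * (d.q j * w') + Real.pi * d.θ j * a) =
    (2 * Real.pi * d.q j) * (w - w') by ring, abs_mul (2 * Real.pi * (d.q j : ℝ)),
    abs_of_pos (by positivity : 0 < 2 * Real.pi * (d.q j : ℝ))] at h3
  calc _ ≤ 2 * d.A j * d.mn j a * (2 * Real.pi * d.q j * |w - w'|) := by
        gcongr
        exact d.sin_half_le j a
    _ = _ := by ring

lemma σ_eq' (w a : ℝ) : d.σ (w, a) = a + ∑' j, d.τ j w a := d.σ_eq w a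
lemma τ_summable (w a : ℝ) : Summable fun j => d.τ j w a := d.σ_summable w a

lemma mnA_summable (a : ℝ) : Summable fun j => d.A j * d.mn j a := by
  refine Summable.of_nonneg_of_le (fun j => ?_) (fun j => ?_) (d.summ0.mul_left (Real.pi * |a|))
  · have := d.hA j
    have := d.mn_nonneg j a
    positivity
  · have := d.hA j
    calc _ ≤ d.A j * (Real.pi * d.θ j * |a|) := by gcongr; exact d.mn_le j a
      _ = _ := by ring

lemma mnqA_summable (a : ℝ) : Summable fun j => d.q j * d.A j * d.mn j a := by
  refine Summable.of_nonneg_of_le (fun j => ?_) (fun j => ?_) ((d.summ 1).mul_left (Real.pi * |a|))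
  · have := d.hA j
    have := d.mn_nonneg j a
    positivity
  · have := d.hA j
    calc _ ≤ d.q j * d.A j * (Real.pi * d.θ j * |a|) := by gcongr; exact d.mn_le j a
      _ = _ := by ring

lemma σ_lip (w w' a : ℝ) : |d.σ (w, a) - d.σ (w', a)| ≤
    4 * Real.pi * (∑' j, d.q j * d.A j * d.mn j a) * |w - w'| := by
  rw [σ_eq', σ_eq', add_sub_add_left_eq_sub, ← (d.τ_summable w a).tsum_sub (d.τ_summable w' a), ← Real.norm_eq_abs]
  rw [← tsum_mul_left, ← tsum_mul_right]
  exact tsum_of_norm_bounded (((d.mnqA_summable a).mul_left _).mul_right _).hasSum (fun j => d.τ_lip j w w' a)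

/-- remainder after removing the resonant term -/
noncomputable def Rm (k : ℕ) (w a : ℝ) : ℝ := d.σ (w, a) - a - d.τ k w a

lemma Rm_lip (k : ℕ) (w w' a : ℝ) : |d.Rm k w a - d.Rm k w' a| ≤
    4 * Real.pi * (∑' j, if j = k then 0 else d.q j * d.A j * d.mn j a) * |w - w'| := by
  have hs : ∀ w, HasSum (fun j => if j = k then 0 else d.τ j w a) (d.Rm k w a) := by
    intro w
    have h1 : HasSum (fun j => if j = k then d.τ k w a else 0) (d.τ k w a) := hasSum_ite_eq k (d.τ k w a)
    have h2 := (d.τ_summable w a).hasSum.sub h1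
    rw [Rm, σ_eq', add_sub_cancel_left]
    refine h2.congr_fun fun j => ?_
    by_cases h : j = k
    · subst h; simp
    · simp [h]
  have hsum : Summable fun j => if j = k then 0 else d.q j * d.A j * d.mn j a := by
    refine Summable.of_nonneg_of_le (fun j => ?_) (fun j => ?_) (d.mnqA_summable a)
    · have := d.hA j
      have := d.mn_nonneg j a
      split_ifs <;> positivity
    · have := d.hA j
      have := d.mn_nonneg j a
      split_ifs
      · positivity
      · exact le_rfl
  have h3 := (hs w).sub (hs w')
  rw [← h3.tsum_eq, ← Real.norm_eq_abs, ← tsum_mul_left, ← tsum_mul_right]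
  refine tsum_of_norm_bounded ((hsum.mul_left _).mul_right _).hasSum (fun j => ?_)
  split_ifs
  · simp
  · exact d.τ_lip j w w' a

lemma mn_le_res (j k : ℕ) (a : ℝ) (ha : |a| ≤ 1 / d.θ k) : d.mn j a ≤ 4 * min 1 (d.θ j / d.θ k) := by
  have h1 := d.θ_pos j
  have h2 := d.θ_pos k
  have h3 : d.θ j * |a| ≤ d.θ j / d.θ k := by
    rw [div_eq_mul_one_div]; gcongr
  have hpi := Real.pi_lt_four
  rcases le_total 1 (d.θ j / d.θ k) with h | h
  · rw [min_eq_left h]; linarith [d.mn_le_one j a]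
  · rw [min_eq_right h]
    have := d.mn_le j a
    have h5 : 0 ≤ d.θ j * |a| := by positivity
    nlinarith

lemma rem_summable (k : ℕ) : Summable fun j => if j = k then 0 else d.q j * d.A j * min 1 (d.θ j / d.θ k) := by
  have h2 := d.θ_pos k
  refine Summable.of_nonneg_of_le (fun j => ?_) (fun j => ?_) ((d.summ 1).mul_left (1 / d.θ k))
  · have := d.hA j
    have := d.θ_pos j
    split_ifs <;> positivity
  · have := d.hA j
    have := d.θ_pos j
    split_ifs
    · positivity
    · calc _ ≤ d.q j * d.A j * (d.θ j / d.θ k) := by gcongr; exact min_le_right _ _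
        _ = _ := by field_simp

lemma rem_nonneg (k : ℕ) : 0 ≤ d.rem k := by
  refine tsum_nonneg fun j => ?_
  have := d.hA j
  have := d.θ_pos j
  have := d.θ_pos k
  split_ifs <;> positivity

lemma Rm_lip' (k : ℕ) (w w' a : ℝ) (ha : |a| ≤ 1 / d.θ k) : |d.Rm k w a - d.Rm k w' a| ≤
    16 * Real.pi * d.rem k * |w - w'| := by
  refine (d.Rm_lip k w w' a).trans ?_
  have : (∑' j, if j = k then 0 else d.q j * d.A j * d.mn j a) ≤ 4 * d.rem k := by
    rw [rem, ← tsum_mul_left]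
    have hle : ∀ j, (if j = k then 0 else d.q j * d.A j * d.mn j a) ≤
      4 * (if j = k then 0 else d.q j * d.A j * min 1 (d.θ j / d.θ k)) := by
      intro j
      split_ifs
      · simp
      · have := d.hA j
        calc _ ≤ d.q j * d.A j * (4 * min 1 (d.θ j / d.θ k)) := by gcongr; exact d.mn_le_res j k a ha
          _ = _ := by ring
    have hs2 := (d.rem_summable k).mul_left 4
    refine (Summable.of_nonneg_of_le (fun j => ?_) hle hs2).tsum_le_tsum hle hs2
    have := d.hA j
    have := d.mn_nonneg j a
    split_ifs <;> positivity
  calc _ ≤ 4 * Real.pi * (4 * d.rem k) * |w - w'| := by gcongr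
    _ = _ := by ring

lemma σ_incr (w a a' : ℝ) (h : a ≤ a') : 9 / 10 * (a' - a) ≤ d.σ (w, a') - d.σ (w, a) ∧
    d.σ (w, a') - d.σ (w, a) ≤ 11 / 10 * (a' - a) := by
  constructor
  · exact (convex_univ (𝕜 := ℝ) (E := ℝ)).mul_sub_le_image_sub_of_le_deriv (f := fun b => d.σ (w, b))
      (C := 9 / 10) (fun b _ => (d.σ_hasDerivAt w b).continuousAt.continuousWithinAt)
      (fun b _ => (d.σ_hasDerivAt w b).differentiableAt.differentiableWithinAt)
      (fun b _ => by rw [(d.σ_hasDerivAt w b).deriv]; exact d.ρ_ge _) a (mem_univ _) a' (mem_univ _) h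
  · exact (convex_univ (𝕜 := ℝ) (E := ℝ)).image_sub_le_mul_sub_of_deriv_le (f := fun b => d.σ (w, b))
      (C := 11 / 10) (fun b _ => (d.σ_hasDerivAt w b).continuousAt.continuousWithinAt)
      (fun b _ => (d.σ_hasDerivAt w b).differentiableAt.differentiableWithinAt)
      (fun b _ => by rw [(d.σ_hasDerivAt w b).deriv]; exact d.ρ_le _) a (mem_univ _) a' (mem_univ _) h

lemma σ_abs_ge (w a a' : ℝ) : 9 / 10 * |a' - a| ≤ |d.σ (w, a') - d.σ (w, a)| := by
  rcases le_total a a' with h | h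
  · have := (d.σ_incr w a a' h).1
    rw [abs_of_nonneg (sub_nonneg.2 h)]; exact this.trans (le_abs_self _)
  · have := (d.σ_incr w a' a h).1
    rw [abs_sub_comm, abs_sub_comm (d.σ (w, a')), abs_of_nonneg (sub_nonneg.2 h)]; exact this.trans (le_abs_self _)

lemma σ_abs_le (w a a' : ℝ) : |d.σ (w, a') - d.σ (w, a)| ≤ 11 / 10 * |a' - a| := by
  rcases le_total a a' with h | h
  · have h1 := (d.σ_incr w a a' h).1
    have h2 := (d.σ_incr w a a' h).2
    rw [abs_of_nonneg (sub_nonneg.2 h), abs_of_nonneg (by linarith)]; exact h2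
  · have h1 := (d.σ_incr w a' a h).1
    have h2 := (d.σ_incr w a' a h).2
    rw [abs_sub_comm, abs_sub_comm a', abs_of_nonneg (sub_nonneg.2 h), abs_of_nonneg (by linarith)]; exact h2

lemma aa_incr (w s s' : ℝ) (h : s ≤ s') : 10 / 11 * (s' - s) ≤ d.aa (w, s') - d.aa (w, s) ∧
    d.aa (w, s') - d.aa (w, s) ≤ 10 / 9 * (s' - s) := by
  have hle : d.aa (w, s) ≤ d.aa (w, s') := by
    by_contra hc
    push Not at hc
    have := (d.σ_incr w _ _ hc.le).1
    rw [σ_aa, σ_aa] at this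
    nlinarith
  have := d.σ_incr w _ _ hle
  rw [σ_aa, σ_aa] at this
  constructor <;> linarith [this.1, this.2]

lemma aa_diff (w w' s s' : ℝ) : 9 / 10 * |d.aa (w, s) - d.aa (w', s')| ≤ |s - s'| +
    4 * Real.pi * (∑' j, d.q j * d.A j * d.mn j (d.aa (w', s'))) * |w - w'| := by
  have h1 := d.σ_abs_ge w (d.aa (w', s')) (d.aa (w, s))
  have h2 := d.σ_lip w w' (d.aa (w', s'))
  rw [σ_aa] at h1 h2
  have h3 := abs_sub_le s s' (d.σ (w, d.aa (w', s')))
  rw [abs_sub_comm s' ] at h3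
  linarith

/-- Resonant time. -/
noncomputable def nk (k : ℕ) : ℕ := ⌈1 / (2 * d.θ k)⌉₊

lemma nk_lb (k : ℕ) : 1 / (2 * d.θ k) ≤ d.nk k := Nat.le_ceil _
lemma nk_ub (k : ℕ) : (d.nk k : ℝ) < 1 / (2 * d.θ k) + 1 :=
  Nat.ceil_lt_add_one (by have := d.θ_pos k; positivity)

lemma resA_tendsto (hθ : Tendsto d.θ atTop (𝓝 0)) :
    Tendsto (fun k => ∑' j, d.A j * min (d.θ k) (4 * d.θ j)) atTop (𝓝 0) := by
  have : (0 : ℝ) = ∑' j : ℕ, (0 : ℝ) := by simp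
  rw [this]
  refine tendsto_tsum_of_dominated_convergence (bound := fun j => 4 * (d.A j * d.θ j)) (d.summ0.mul_left 4) ?_ ?_
  · intro j
    have h1 := (hθ.min (tendsto_const_nhds (x := 4 * d.θ j))).const_mul (d.A j)
    rw [min_eq_left (by have := d.θ_pos j; positivity), mul_zero] at h1
    exact h1
  · refine Eventually.of_forall fun k j => ?_
    have := d.hA j
    have := d.θ_pos j
    have := d.θ_pos k
    rw [Real.norm_eq_abs, abs_of_nonneg (by positivity)]
    calc _ ≤ d.A j * (4 * d.θ j) := by gcongr; exact min_le_right _ _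
      _ = _ := by ring

lemma aa_res_bd (k : ℕ) (hk : d.θ k ≤ 1 / 10) (w a : ℝ) (ha : a ∈ Icc (0 : ℝ) 1) :
    |d.aa (w, d.σ (w, a) + d.nk k)| ≤ 1 / d.θ k ∧ |d.θ k * d.aa (w, d.σ (w, a) + d.nk k) - 1 / 2| ≤
      4 * d.θ k + 2 * ∑' j, d.A j * min (d.θ k) (4 * d.θ j) := by
  have hθ := d.θ_pos k
  have h1 := (d.σ_incr w 0 a ha.1)
  rw [σ_zero] at h1
  have h2 := d.aa_incr w 0 (d.σ (w, a) + d.nk k) (by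
    have : (0:ℝ) ≤ d.nk k := Nat.cast_nonneg _
    linarith [ha.1])
  rw [aa_zero] at h2
  set x := d.aa (w, d.σ (w, a) + d.nk k) with hx
  have hσ : d.σ (w, x) = d.σ (w, a) + d.nk k := by rw [hx, σ_aa]
  have n1 := d.nk_lb k
  have n2 := d.nk_ub k
  have e : 1 / (2 * d.θ k) = (1 / d.θ k) / 2 := by field_simp
  have e2 : 10 ≤ 1 / d.θ k := by rw [le_div_iff₀ hθ]; linarith
  have hx0 : 0 ≤ x := by
    have : (0:ℝ) ≤ d.nk k := Nat.cast_nonneg _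
    linarith [ha.1]
  have hb : |x| ≤ 1 / d.θ k := by
    rw [abs_of_nonneg hx0]
    rw [e] at n2
    linarith [ha.1, ha.2]
  refine ⟨hb, ?_⟩
  have h3 : |d.θ k * (d.σ (w, x) - x)| ≤ 2 * ∑' j, d.A j * min (d.θ k) (4 * d.θ j) := by
    rw [σ_eq', add_sub_cancel_left, ← tsum_mul_left, ← tsum_mul_left, ← Real.norm_eq_abs]
    refine tsum_of_norm_bounded (Summable.hasSum ?_) fun j => ?_
    · refine Summable.mul_left _ (Summable.of_nonneg_of_le (fun j => ?_) (fun j => ?_) (d.summ0.mul_left 4))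
      · have := d.hA j
        have := d.θ_pos j
        positivity
      · have := d.hA j
        calc _ ≤ d.A j * (4 * d.θ j) := by gcongr; exact min_le_right _ _
          _ = _ := by ring
    · rw [Real.norm_eq_abs, abs_mul, abs_of_pos hθ]
      have := d.hA j
      have t := d.τ_bd j w x
      have m1 := d.mn_le_one j x
      have m2 := d.mn_le_res j k x hb
      have m3 : d.θ k * d.mn j x ≤ min (d.θ k) (4 * d.θ j) := by
        refine le_min (mul_le_of_le_one_right hθ.le m1) ?_
        have : d.mn j x ≤ 4 * (d.θ j / d.θ k) := m2.trans (by gcongr; exact min_le_right _ _)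
        calc _ ≤ d.θ k * (4 * (d.θ j / d.θ k)) := by gcongr
          _ = _ := by field_simp
      calc _ ≤ d.θ k * (2 * (d.A j * d.mn j x)) := by gcongr
        _ = 2 * (d.A j * (d.θ k * d.mn j x)) := by ring
        _ ≤ _ := by gcongr
  rw [hσ] at h3
  have h4 : |d.θ k * (d.σ (w, a) + d.nk k) - 1 / 2| ≤ 4 * d.θ k := by
    have e3 : d.θ k * (1 / (2 * d.θ k)) = 1 / 2 := by field_simp
    have b1 : d.θ k * (1 / (2 * d.θ k)) ≤ d.θ k * d.nk k := by gcongr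
    have b2 : d.θ k * d.nk k ≤ d.θ k * (1 / (2 * d.θ k) + 1) := by gcongr
    have b3 : d.θ k * d.σ (w, a) ≤ d.θ k * 2 := by gcongr; linarith [ha.2]
    have b4 : 0 ≤ d.θ k * d.σ (w, a) := mul_nonneg hθ.le (by linarith [ha.1])
    rw [abs_le]
    constructor <;> nlinarith
  have h5 := abs_sub_le (d.θ k * x) (d.θ k * (d.σ (w, a) + d.nk k)) (1 / 2)
  rw [show d.θ k * (d.σ (w, a) + d.nk k - x) = -(d.θ k * x - d.θ k * (d.σ (w, a) + d.nk k)) by ring, abs_neg] at h3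
  linarith

end Dat

end

section
open MeasureTheory Filter Set
open scoped Topology ENNReal NNReal

section bowen
variable {X : Type*} [PseudoMetricSpace X] (T : X → X)

lemma bowenDist_lt {n : ℕ} {x y : X} {ε : ℝ} (hε : 0 < ε) :
    bowenDist T n x y < ε ↔ ∀ i < n, dist (T^[i] x) (T^[i] y) < ε := by
  unfold bowenDist
  lift ε to ℝ≥0 using hε.le
  rw [NNReal.coe_lt_coe, Finset.sup_lt_iff (by rw [bot_eq_zero]; exact_mod_cast hε)]
  simp only [Finset.mem_range]
  refine forall₂_congr fun i _ => ?_
  rw [← NNReal.coe_lt_coe, coe_nndist]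

lemma cover_le {n : ℕ} {ε : ℝ} (F : Finset X) (h : ∀ y : X, ∃ x ∈ F, bowenDist T n x y < ε) :
    bowenCoverNum T n ε ≤ F.card := Nat.sInf_le ⟨F, rfl, h⟩

lemma le_cover {n : ℕ} {ε : ℝ} (hne : ∃ F : Finset X, ∀ y : X, ∃ x ∈ F, bowenDist T n x y < ε) (M : ℕ)
    (h : ∀ F : Finset X, (∀ y : X, ∃ x ∈ F, bowenDist T n x y < ε) → M ≤ F.card) : M ≤ bowenCoverNum T n ε := by
  obtain ⟨F0, hF0⟩ := hne
  have : bowenCoverNum T n ε ∈ {N : ℕ | ∃ F : Finset X, F.card = N ∧ ∀ y : X, ∃ x ∈ F, bowenDist T n x y < ε} :=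
    Nat.sInf_mem ⟨F0.card, F0, rfl, hF0⟩
  obtain ⟨F, hF, hF2⟩ := this
  rw [← hF]
  exact h F hF2

lemma slow_eq_one {ε : ℝ} (a : ℕ → ℝ → ℝ) (h1 : ∀ t, 0 < t → t < 1 →
    0 < Filter.atTop.limsup fun n => (bowenCoverNum T n ε : ℝ≥0∞) / ENNReal.ofReal (a n t))
    (h2 : ∀ t, 1 < t → Filter.atTop.limsup (fun n => (bowenCoverNum T n ε : ℝ≥0∞) / ENNReal.ofReal (a n t)) = 0) :
    topSlowEntFun T a ε = 1 := by
  unfold topSlowEntFun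
  refine IsLUB.csSup_eq ⟨?_, ?_⟩ ⟨1 / 2, by norm_num, h1 _ (by norm_num) (by norm_num)⟩
  · rintro t ⟨_, ht⟩
    by_contra hc
    push Not at hc
    rw [h2 t hc] at ht
    exact lt_irrefl _ ht
  · intro b hb
    by_contra hc
    push Not at hc
    have hb0 : 1 / 2 ≤ b := hb ⟨by norm_num, h1 _ (by norm_num) (by norm_num)⟩
    have := hb (a := (b + 1) / 2) ⟨by linarith, h1 _ (by linarith) (by linarith)⟩
    linarith

end bowen

section torusdist

lemma circ_dist_le (x y : ℝ) : dist (x : AddCircle (1 : ℝ)) (y : AddCircle (1 : ℝ)) ≤ |x - y| := by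
  rw [dist_eq_norm, ← AddCircle.coe_sub, UnitAddCircle.norm_eq]
  have := round_le (x - y) 0
  simpa using this

lemma proj_dist_le (z w : ℝ × ℝ) : dist (torusProj z) (torusProj w) ≤ dist z w := by
  rw [Prod.dist_eq, Prod.dist_eq]
  exact max_le_max (by simpa [torusProj, Real.dist_eq] using circ_dist_le z.1 w.1)
    (by simpa [torusProj, Real.dist_eq] using circ_dist_le z.2 w.2)

lemma circ_dist_small (x y : ℝ) (h : |x - y| < 1 / 2) : |x - y| = dist (x : AddCircle (1 : ℝ)) (y : AddCircle (1 : ℝ)) := by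
  rw [dist_eq_norm, ← AddCircle.coe_sub, UnitAddCircle.norm_eq]
  have : round (x - y) = 0 := by
    rw [round_eq_zero_iff]
    rw [abs_lt] at h
    constructor <;> linarith [h.1, h.2]
  rw [this]; simp

end torusdist

namespace Dat
variable (d : Dat)

lemma G_lip (z z' : ℝ × ℝ) : |d.G z - d.G z'| ≤ dist z z' := by
  have hs : ∀ z : ℝ × ℝ, Summable fun j => (d.A j * d.θ j / d.q j) * Real.sin (2 * Real.pi * (d.q j * z.2 - d.p j * z.1)) := by
    intro z
    refine Summable.of_norm_bounded d.summ0 fun j => ?_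
    have := d.hA j
    have := d.θ_pos j
    have := d.q_pos j
    rw [norm_mul, Real.norm_eq_abs, Real.norm_eq_abs, abs_of_pos (by positivity)]
    have : d.A j * d.θ j / d.q j ≤ d.A j * d.θ j := div_le_self (by positivity) (d.one_le_q j)
    calc _ ≤ d.A j * d.θ j * 1 := by
          gcongr
          exact Real.abs_sin_le_one _
      _ = _ := by ring
  have h1 : |d.G z - d.G z'| ≤ ∑' j, 4 * Real.pi * dist z z' * (d.A j * d.θ j) := by
    simp only [G]
    rw [← (hs z).tsum_sub (hs z'), ← Real.norm_eq_abs]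
    refine tsum_of_norm_bounded (d.summ0.mul_left _).hasSum fun j => ?_
    have h0 := d.hA j
    have h1 := d.θ_pos j
    have h2 := d.q_pos j
    rw [← mul_sub, Real.norm_eq_abs, abs_mul, abs_of_pos (by positivity)]
    have h3 := abs_sin_diff_le (2 * Real.pi * (d.q j * z.2 - d.p j * z.1)) (2 * Real.pi * (d.q j * z'.2 - d.p j * z'.1))
    rw [show 2 * Real.pi * (d.q j * z.2 - d.p j * z.1) - 2 * Real.pi * (d.q j * z'.2 - d.p j * z'.1) =
      (2 * Real.pi) * (d.q j * (z.2 - z'.2) - d.p j * (z.1 - z'.1)) by ring,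
      abs_mul (2 * Real.pi), abs_of_pos Real.two_pi_pos] at h3
    have h4 := abs_sub (d.q j * (z.2 - z'.2)) (d.p j * (z.1 - z'.1))
    rw [abs_mul, abs_mul, abs_of_pos h2] at h4
    have d1 : |z.1 - z'.1| ≤ dist z z' := by rw [← Real.dist_eq]; exact le_max_left _ _
    have d2 : |z.2 - z'.2| ≤ dist z z' := by rw [← Real.dist_eq]; exact le_max_right _ _
    have h5 : |d.q j * (z.2 - z'.2) - d.p j * (z.1 - z'.1)| ≤ 2 * d.q j * dist z z' := by
      have hp := d.hp j
      have e1 : (d.q j : ℝ) * |z.2 - z'.2| ≤ d.q j * dist z z' := by gcongr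
      have e2 : |(d.p j : ℝ)| * |z.1 - z'.1| ≤ d.q j * dist z z' := by gcongr
      linarith
    calc _ ≤ d.A j * d.θ j / d.q j * (2 * Real.pi * (2 * d.q j * dist z z')) := by
          gcongr
          exact h3.trans (by gcongr)
      _ = _ := by field_simp; ring
  rw [tsum_mul_left] at h1
  have := d.small
  have := Real.pi_lt_four
  have hd : 0 ≤ dist z z' := dist_nonneg
  have hπ := Real.pi_pos
  have h0 : 0 ≤ ∑' j, d.A j * d.θ j := tsum_nonneg fun j => (d.Aθ_pos j).le
  calc _ ≤ _ := h1
    _ ≤ 4 * 4 * dist z z' * (1 / 100) := by gcongr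
    _ ≤ _ := by linarith

lemma Ph_lip (z z' : ℝ × ℝ) : dist (d.Ph z) (d.Ph z') ≤ 2 * dist z z' := by
  have d1 : |z.1 - z'.1| ≤ dist z z' := by rw [← Real.dist_eq]; exact le_max_left _ _
  have d2 : |z.2 - z'.2| ≤ dist z z' := by rw [← Real.dist_eq]; exact le_max_right _ _
  have d3 := d.G_lip z z'
  have hd : 0 ≤ dist z z' := dist_nonneg
  rw [Prod.dist_eq]
  refine max_le ?_ ?_
  · simp only [Ph, Real.dist_eq]; linarith
  · simp only [Ph, H, Real.dist_eq]
    have := abs_add_le (z.2 - z'.2) (d.G z - d.G z')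
    rw [show z.2 - z'.2 + (d.G z - d.G z') = z.2 + d.G z - (z'.2 + d.G z') by ring] at this
    linarith

lemma κ_dist (w w' s s' : ℝ) : dist (d.κ w s) (d.κ w' s') ≤ 2 * (|w - w'| + |d.aa (w, s) - d.aa (w', s')|) := by
  unfold κ
  refine (proj_dist_le _ _).trans ((d.Ph_lip _ _).trans ?_)
  gcongr
  rw [Prod.dist_eq]
  refine max_le ?_ ?_
  · simp only [Real.dist_eq]; linarith [abs_nonneg (w - w')]
  · simp only [Real.dist_eq]
    have h1 := abs_add_le (w - w') (d.α * (d.aa (w, s) - d.aa (w', s')))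
    rw [show w - w' + d.α * (d.aa (w, s) - d.aa (w', s')) = w + d.α * d.aa (w, s) - (w' + d.α * d.aa (w', s')) by ring,
      abs_mul d.α] at h1
    have := mul_le_of_le_one_left (abs_nonneg (d.aa (w, s) - d.aa (w', s'))) d.hα
    linarith

lemma κ_surj (p : Torus2) : ∃ w ∈ Icc (0 : ℝ) 1, ∃ s ∈ Icc (0 : ℝ) 2, p = d.κ w s := by
  obtain ⟨z, rfl⟩ := torusProj_surj p
  set y := d.Ph' z with hy
  set a := Int.fract y.1 with ha
  set b := y.2 with hb
  set w := Int.fract (b - d.α * a) with hw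
  refine ⟨w, ⟨Int.fract_nonneg _, (Int.fract_lt_one _).le⟩, d.σ (w, a), ?_, ?_⟩
  · have := d.σ_incr w 0 a (Int.fract_nonneg _)
    rw [σ_zero] at this
    have h1 := Int.fract_nonneg y.1
    have h2 := Int.fract_lt_one y.1
    constructor <;> linarith [this.1, this.2]
  · rw [κ, aa_σ, torusProj_eq_iff]
    refine ⟨-⌊y.1⌋, -⌊b - d.α * a⌋, ?_⟩
    have : ((a, w + d.α * a) : ℝ × ℝ) = y + (((-⌊y.1⌋ : ℤ) : ℝ), ((-⌊b - d.α * a⌋ : ℤ) : ℝ)) := by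
      ext
      · show Int.fract y.1 = y.1 + ((-⌊y.1⌋ : ℤ) : ℝ)
        push_cast; rw [← Int.self_sub_floor]; ring
      · show Int.fract (b - d.α * a) + d.α * a = b + ((-⌊b - d.α * a⌋ : ℤ) : ℝ)
        push_cast; rw [← Int.self_sub_floor]; ring
    rw [this, d.Ph_equi, hy, Ph_Ph']

lemma cover_ub (g : d.Good) (ε : ℝ) (hε : 0 < ε) : ∃ C : ℝ, ∀ n : ℕ, 2 ≤ n →
    (∃ F : Finset Torus2, (F.card : ℝ) ≤ C * (1 + Real.log n) ∧ ∀ y, ∃ x ∈ F, bowenDist d.T n x y < ε) := by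
  obtain ⟨C, hC⟩ := g.hK
  obtain ⟨Q, hQ⟩ := exists_nat_gt (6 / ε)
  have hQ0 : (0 : ℝ) < Q := lt_trans (by positivity) hQ
  -- K n bound
  set D : ℝ := 16 * Real.pi * (|C| * 3) with hD
  have hD0 : 0 ≤ D := by positivity
  refine ⟨(2 * (2 + 3 * D) / ε + 2) * (2 * Q + 1), fun n hn => ?_⟩
  have hn' : (2 : ℝ) ≤ n := by exact_mod_cast hn
  have hlog : 0 < Real.log n := Real.log_pos (by linarith)
  set K : ℝ := D * (1 + Real.log n) with hK
  have hK0 : 0 ≤ K := by positivity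
  have key : ∀ a : ℝ, |a| ≤ 4 * n → 4 * Real.pi * (∑' j, d.q j * d.A j * d.mn j a) ≤ K := by
    intro a ha
    have h1 : (∑' j, d.q j * d.A j * d.mn j a) ≤ 4 * ∑' j, d.q j * d.A j * min 1 (d.θ j * (4 * n)) := by
      rw [← tsum_mul_left]
      have hle : ∀ j, d.q j * d.A j * d.mn j a ≤ 4 * (d.q j * d.A j * min 1 (d.θ j * (4 * n))) := by
        intro j
        have h0 := d.hA j
        have hθ := d.θ_pos j
        have : d.mn j a ≤ 4 * min 1 (d.θ j * (4 * n)) := by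
          have hpi := Real.pi_lt_four
          have h3 : d.θ j * |a| ≤ d.θ j * (4 * n) := by gcongr
          rcases le_total 1 (d.θ j * (4 * n)) with h | h
          · rw [min_eq_left h]; linarith [d.mn_le_one j a]
          · rw [min_eq_right h]
            have := d.mn_le j a
            have h5 : 0 ≤ d.θ j * |a| := by positivity
            nlinarith
        calc _ ≤ d.q j * d.A j * (4 * min 1 (d.θ j * (4 * n))) := by gcongr
          _ = _ := by ring
      refine (d.mnqA_summable a).tsum_le_tsum hle (Summable.mul_left _ ?_)
      refine Summable.of_nonneg_of_le (fun j => ?_) (fun j => ?_) ((d.summ 1).mul_left (4 * (n : ℝ)))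
      · have := d.hA j
        have := d.θ_pos j
        positivity
      · have := d.hA j
        calc _ ≤ d.q j * d.A j * (d.θ j * (4 * n)) := by gcongr; exact min_le_right _ _
          _ = _ := by ring
    have h2 := hC (4 * n) (by linarith)
    have h3 : Real.log (4 * n) ≤ 2 + 3 * Real.log n := by
      have : Real.log (4 * n) ≤ Real.log (n ^ 3) := by
        apply Real.log_le_log (by positivity)
        have : (4 : ℝ) ≤ (n : ℝ) ^ 2 := by nlinarith
        nlinarith
      rw [Real.log_pow] at this
      push_cast at this
      linarith
    have h4 : C * (1 + Real.log (4 * n)) ≤ |C| * (3 * (1 + Real.log n)) := by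
      have : 0 ≤ Real.log (4 * n) := Real.log_nonneg (by linarith)
      calc _ ≤ |C| * (1 + Real.log (4 * n)) := by gcongr; exact le_abs_self C
        _ ≤ _ := by gcongr; linarith
    have hpi := Real.pi_pos
    calc _ ≤ 4 * Real.pi * (4 * (|C| * (3 * (1 + Real.log n)))) := by gcongr; linarith
      _ = K := by rw [hK, hD]; ring
  obtain ⟨P, hP, hP2⟩ : ∃ P : ℕ, 2 * (2 + 3 * K) / ε < P ∧ (P : ℝ) ≤ 2 * (2 + 3 * K) / ε + 1 :=
    ⟨⌊2 * (2 + 3 * K) / ε⌋₊ + 1, by push_cast; exact Nat.lt_floor_add_one _, by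
      push_cast; gcongr; exact Nat.floor_le (by positivity)⟩
  have hP0 : (0 : ℝ) < P := lt_trans (by positivity) hP
  classical
  refine ⟨(Finset.range (P + 1) ×ˢ Finset.range (2 * Q + 1)).image
    (fun ij => d.κ ((ij.1 : ℝ) / P) ((ij.2 : ℝ) / Q)), ?_, ?_⟩
  · have h1 : (((Finset.range (P + 1) ×ˢ Finset.range (2 * Q + 1)).image
      (fun ij : ℕ × ℕ => d.κ ((ij.1 : ℝ) / P) ((ij.2 : ℝ) / Q))).card : ℝ) ≤ (P + 1) * (2 * Q + 1) := by
      refine (Nat.cast_le.2 Finset.card_image_le).trans ?_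
      rw [Finset.card_product, Finset.card_range, Finset.card_range]; push_cast; rfl
    refine h1.trans ?_
    have h2 : (P : ℝ) + 1 ≤ (2 * (2 + 3 * D) / ε + 2) * (1 + Real.log n) := by
      have : 2 * (2 + 3 * K) / ε ≤ (2 * (2 + 3 * D) / ε) * (1 + Real.log n) := by
        rw [div_mul_eq_mul_div]; apply div_le_div_of_nonneg_right _ hε.le; rw [hK]; nlinarith
      nlinarith
    calc _ ≤ ((2 * (2 + 3 * D) / ε + 2) * (1 + Real.log n)) * (2 * Q + 1) := by gcongr
      _ = _ := by ring
  · intro y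
    obtain ⟨w, hw, s, hs, rfl⟩ := d.κ_surj y
    refine ⟨d.κ ((⌊w * P⌋₊ : ℝ) / P) ((⌊s * Q⌋₊ : ℝ) / Q), ?_, ?_⟩
    · rw [Finset.mem_image]
      refine ⟨(⌊w * P⌋₊, ⌊s * Q⌋₊), ?_, rfl⟩
      rw [Finset.mem_product, Finset.mem_range, Finset.mem_range, Nat.lt_succ_iff, Nat.lt_succ_iff]
      constructor
      · apply Nat.floor_le_of_le
        nlinarith [hw.2]
      · apply Nat.floor_le_of_le
        push_cast
        nlinarith [hs.2]
    · rw [bowenDist_lt _ hε]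
      intro i hi
      rw [T_iter_κ, T_iter_κ, dist_comm]
      set w' := (⌊w * P⌋₊ : ℝ) / P
      set s' := (⌊s * Q⌋₊ : ℝ) / Q
      have floorlem : ∀ (x R : ℝ), 0 ≤ x → 0 < R → |x - (⌊x * R⌋₊ : ℝ) / R| ≤ 1 / R ∧ (⌊x * R⌋₊ : ℝ) / R ≤ x ∧ 0 ≤ (⌊x * R⌋₊ : ℝ) / R := by
        intro x R hx hR
        have h1 := Nat.floor_le (mul_nonneg hx hR.le)
        have h2 := Nat.lt_floor_add_one (x * R)
        have h3 : (⌊x * R⌋₊ : ℝ) / R ≤ x := by rw [div_le_iff₀ hR]; exact h1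
        refine ⟨?_, h3, by positivity⟩
        rw [abs_of_nonneg (by linarith), sub_le_iff_le_add, ← add_div, le_div_iff₀ hR]
        linarith
      obtain ⟨w1, w2, w3⟩ := floorlem w P hw.1 hP0
      obtain ⟨s1, s2, s3⟩ := floorlem s Q hs.1 hQ0
      have hd := d.κ_dist w w' (s + i) (s' + i)
      have ha := d.aa_diff w w' (s + i) (s' + i)
      rw [add_sub_add_right_eq_sub] at ha
      have hi' : (i : ℝ) ≤ n := by exact_mod_cast hi.le
      have hi0 : (0 : ℝ) ≤ i := Nat.cast_nonneg _
      have hbd : |d.aa (w', s' + i)| ≤ 4 * n := by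
        have h1 := d.aa_incr w' 0 (s' + i) (by positivity)
        rw [aa_zero] at h1
        have : 0 ≤ s' := s3
        rw [abs_of_nonneg (by linarith)]
        linarith [hs.2]
      have hk := key _ hbd
      have hk2 : 4 * Real.pi * (∑' j, d.q j * d.A j * d.mn j (d.aa (w', s' + i))) * |w - w'| ≤ K * |w - w'| := by gcongr
      have f1 : |s - s'| * 3 < ε / 2 := by
        have : 1 / (Q : ℝ) < ε / 6 := by
          rw [div_lt_iff₀ hQ0]; rw [div_lt_iff₀ hε] at hQ; linarith
        linarith
      have f2 : (2 + 3 * K) * |w - w'| < ε / 2 := by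
        calc _ ≤ (2 + 3 * K) * (1 / P) := by gcongr
          _ < ε / 2 := by
            rw [mul_one_div, div_lt_iff₀ hP0]
            rw [div_lt_iff₀ hε] at hP
            linarith
      have p1 : 0 ≤ K * |w - w'| := by positivity
      have p2 : 0 ≤ |s - s'| := abs_nonneg _
      nlinarith

lemma sep_aa (w w' : ℝ) (n : ℕ) (ε : ℝ) (hε : 0 < ε) (hε2 : ε ≤ 1 / 10)
    (h : bowenDist d.T (n + 1) (d.κ w 0) (d.κ w' 0) < ε) : ∀ m ≤ n, |d.aa (w, m) - d.aa (w', m)| < ε := by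
  rw [bowenDist_lt _ hε] at h
  intro m
  induction m with
  | zero => intro _; simpa [aa_zero] using hε
  | succ m ih =>
    intro hm
    have h1 := ih (by omega)
    have h2 := h (m + 1) (by omega)
    rw [T_iter_κ, T_iter_κ, zero_add] at h2
    have h3 : dist ((d.aa (w, (m + 1 : ℕ)) : ℝ) : AddCircle (1 : ℝ)) ((d.aa (w', (m + 1 : ℕ)) : ℝ) : AddCircle (1 : ℝ)) < ε :=
      lt_of_le_of_lt (le_max_left _ _) h2
    rw [← circ_dist_small] at h3
    · exact h3
    · have i1 := d.aa_incr w m (m + 1) (by linarith)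
      have i2 := d.aa_incr w' m (m + 1) (by linarith)
      push_cast
      rw [abs_lt] at h1 ⊢
      constructor <;> linarith [i1.1, i1.2, i2.1, i2.2, h1.1, h1.2]

lemma aa_range (g : d.Good) : ∀ᶠ k in atTop, d.A k ≤ |d.aa (0, d.nk k) - d.aa (1 / (4 * d.q k), d.nk k)| := by
  have t1 := (g.hθ0.const_mul 4).add ((d.resA_tendsto g.hθ0).const_mul 2)
  simp only [mul_zero, add_zero] at t1
  have t2 := g.hrem.const_mul (4 * Real.pi)
  rw [mul_zero] at t2
  filter_upwards [g.hθ0.eventually (ge_mem_nhds (show (0:ℝ) < 1 / 10 by norm_num)),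
    t1.eventually (gt_mem_nhds (show (0:ℝ) < 1 / 100 by norm_num)),
    t2.eventually (gt_mem_nhds (show (0:ℝ) < 1 / 10 by norm_num))] with k k1 k2 k3
  have hA := d.hA k
  have hq := d.q_pos k
  obtain ⟨b1, b2⟩ := d.aa_res_bd k k1 0 0 ⟨le_rfl, zero_le_one⟩
  rw [σ_zero, zero_add] at b1 b2
  set x := d.aa (0, d.nk k) with hx
  set w := 1 / (4 * (d.q k : ℝ)) with hw
  have r1 := d.Rm_lip' k w 0 x b1
  have r2 : 16 * Real.pi * d.rem k * |w - 0| ≤ 1 / 10 * d.A k := by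
    rw [sub_zero, abs_of_pos (by positivity)]
    have : 16 * Real.pi * d.rem k * w = 4 * Real.pi * (d.rem k / (d.q k * d.A k)) * d.A k := by
      rw [hw]; field_simp; ring
    rw [this]; gcongr
  have hd : |d.τ k w x - d.τ k 0 x| ≥ 13 / 10 * d.A k := by
    have e1 : d.τ k w x - d.τ k 0 x = d.A k * (Real.cos (2 * Real.pi * (d.θ k * x)) - 1 - Real.sin (2 * Real.pi * (d.θ k * x))) := by
      simp only [τ, mul_zero, zero_add, Real.sin_zero, sub_zero]
      rw [show 2 * Real.pi * (d.q k * w + d.θ k * x) = 2 * Real.pi * (d.θ k * x) + Real.pi / 2 by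
        rw [hw]; field_simp; ring, show 2 * Real.pi * (d.q k * w) = Real.pi / 2 by rw [hw]; field_simp; ring,
        Real.sin_add_pi_div_two, Real.sin_pi_div_two]
      ring
    set y := 2 * Real.pi * (d.θ k * x) - Real.pi with hy
    have e2 : 2 * Real.pi * (d.θ k * x) = y + Real.pi := by rw [hy]; ring
    have hyb : |y| ≤ 1 / 10 := by
      rw [show y = 2 * Real.pi * (d.θ k * x - 1 / 2) by rw [hy]; ring, abs_mul, abs_of_pos Real.two_pi_pos]
      have := Real.pi_lt_four
      have hpp := Real.pi_pos
      calc _ ≤ 2 * 4 * (1 / 100 : ℝ) := by gcongr; linarith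
        _ ≤ _ := by norm_num
    rw [e1, e2, Real.cos_add_pi, Real.sin_add_pi]
    have c1 := Real.one_sub_sq_div_two_le_cos (x := y)
    have c2 : |Real.sin y| ≤ 1 / 10 := Real.abs_sin_le_abs.trans hyb
    have c3 : y ^ 2 ≤ (1 / 10) ^ 2 := by rw [← sq_abs]; gcongr
    rw [abs_le] at c2
    rw [abs_mul, abs_of_pos hA, abs_of_neg (by linarith [c2.2])]
    nlinarith [c2.2]
  have hs : |d.σ (w, x) - d.σ (0, x)| ≥ 12 / 10 * d.A k := by
    have : d.σ (w, x) - d.σ (0, x) = (d.τ k w x - d.τ k 0 x) + (d.Rm k w x - d.Rm k 0 x) := by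
      simp only [Rm]; ring
    rw [this]
    have h5 := abs_sub_abs_le_abs_sub (d.τ k w x - d.τ k 0 x) (-(d.Rm k w x - d.Rm k 0 x))
    rw [abs_neg, sub_neg_eq_add] at h5
    linarith
  have hf := d.σ_abs_le w (d.aa (w, d.nk k)) x
  rw [σ_aa] at hf
  have : d.σ (0, x) = d.nk k := by rw [hx, σ_aa]
  rw [this] at hs
  linarith

lemma cover_lb (k : ℕ) (g : d.Good) (hk : d.A k ≤ |d.aa (0, d.nk k) - d.aa (1 / (4 * d.q k), d.nk k)|)
    (ε : ℝ) (hε : 0 < ε) (hε2 : ε ≤ 1 / 20) (hn : 1 ≤ d.nk k) : d.A k ≤ bowenCoverNum d.T (d.nk k + 1) ε := by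
  have hA := d.hA k
  set n := d.nk k with hnn
  set w1 : ℝ := 1 / (4 * d.q k) with hw1
  have hcont : Continuous fun w => d.aa (w, n) := d.aa_contDiff.continuous.comp (by fun_prop)
  -- points with aa spaced by integers
  obtain ⟨σg, hσ, hval⟩ : ∃ s : ℝ, |s| = 1 ∧ d.aa (w1, n) - d.aa (0, n) = s * |d.aa (0, n) - d.aa (w1, n)| := by
    rcases le_total (d.aa (0, n)) (d.aa (w1, n)) with h | h
    · exact ⟨1, by simp, by rw [abs_of_nonpos (by linarith)]; ring⟩
    · exact ⟨-1, by simp, by rw [abs_of_nonneg (by linarith)]; ring⟩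
  have hpt : ∀ i : ℕ, i ≤ ⌊d.A k⌋₊ → ∃ w, d.aa (w, n) = d.aa (0, n) + σg * i := by
    intro i hi
    have hi' : (i : ℝ) ≤ d.A k := (Nat.cast_le.2 hi).trans (Nat.floor_le hA.le)
    have hmem : d.aa (0, n) + σg * i ∈ uIcc (d.aa (0, n)) (d.aa (w1, n)) := by
      have h0 : (0 : ℝ) ≤ i := Nat.cast_nonneg _
      have : d.aa (w1, n) = d.aa (0, n) + σg * |d.aa (0, n) - d.aa (w1, n)| := by linarith
      rw [this, mem_uIcc]
      rcases (abs_eq zero_le_one).1 hσ with h | h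
      · left; rw [h]; constructor <;> linarith
      · right; rw [h]; constructor <;> linarith
    obtain ⟨w, _, hw⟩ := intermediate_value_uIcc hcont.continuousOn hmem
    exact ⟨w, hw⟩
  choose! W hW using hpt
  have hM : d.A k ≤ ((⌊d.A k⌋₊ + 1 : ℕ) : ℝ) := by push_cast; exact (Nat.lt_floor_add_one _).le
  refine hM.trans (Nat.cast_le.2 ?_)
  obtain ⟨C, hC⟩ := d.cover_ub g ε hε
  obtain ⟨F0, _, hF0⟩ := hC (n + 1) (by omega)
  refine le_cover _ ⟨F0, hF0⟩ _ fun F hF => ?_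
  choose c hc hc2 using hF
  rw [← Finset.card_range (⌊d.A k⌋₊ + 1)]
  refine Finset.card_le_card_of_injOn (fun i => c (d.κ (W i) 0)) (fun i _ => hc _) ?_
  intro i hi j hj hij
  simp only [Finset.coe_range, mem_Iio, Nat.lt_succ_iff] at hi hj
  simp only at hij
  have b1 := hc2 (d.κ (W i) 0)
  have b2 := hc2 (d.κ (W j) 0)
  rw [hij] at b1
  rw [bowenDist_lt _ hε] at b1 b2
  have b3 : bowenDist d.T (n + 1) (d.κ (W i) 0) (d.κ (W j) 0) < 2 * ε := by
    rw [bowenDist_lt _ (by positivity)]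
    intro m hm
    have := dist_triangle_left (d.T^[m] (d.κ (W i) 0)) (d.T^[m] (d.κ (W j) 0)) (d.T^[m] (c (d.κ (W j) 0)))
    linarith [b1 m hm, b2 m hm]
  have b4 := d.sep_aa _ _ n (2 * ε) (by positivity) (by linarith) b3 n le_rfl
  rw [hW i hi, hW j hj, add_sub_add_left_eq_sub, ← mul_sub, abs_mul, hσ, one_mul] at b4
  have b5 : |((i : ℤ) - (j : ℤ) : ℤ)| < 1 := by
    have : |(i : ℝ) - j| < 1 := by linarith
    exact_mod_cast this
  rw [Int.abs_lt_one_iff] at b5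
  omega

theorem T_entropy (g : d.Good) : HasUpperTopSlowEntropy d.T logScale 1 := by
  unfold HasUpperTopSlowEntropy
  refine Tendsto.congr' (f₁ := fun _ => 1) ?_ tendsto_const_nhds
  have : Ioo (0 : ℝ) (1 / 20) ∈ 𝓝[>] (0 : ℝ) := Ioo_mem_nhdsGT (by norm_num)
  filter_upwards [this] with ε hε
  symm
  refine slow_eq_one _ _ ?_ ?_
  · intro t ht0 ht1
    have hfr : ∃ᶠ n in atTop, (1 : ℝ≥0∞) ≤ (bowenCoverNum d.T n ε : ℝ≥0∞) / ENNReal.ofReal (logScale n t) := by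
      have hnk : Tendsto (fun k => d.nk k + 1) atTop atTop := by
        refine tendsto_atTop_mono (fun k => Nat.le_succ (d.nk k)) ?_
        rw [← tendsto_natCast_atTop_iff (R := ℝ)]
        have : Tendsto (fun k => 1 / (2 * d.θ k)) atTop atTop := by
          have h1 : Tendsto (fun k => 2 * d.θ k) atTop (𝓝[>] 0) := by
            rw [tendsto_nhdsWithin_iff]
            refine ⟨by simpa using g.hθ0.const_mul 2, Eventually.of_forall fun k => ?_⟩
            have := d.θ_pos k
            simp [this]
          exact h1.inv_tendsto_nhdsGT_zero.congr fun k => by rw [Pi.inv_apply, one_div]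
        exact tendsto_atTop_mono d.nk_lb this
      refine hnk.frequently (Eventually.frequently ?_)
      filter_upwards [d.aa_range g, (g.hAinf t ht0 ht1).eventually_ge_atTop 2,
        g.hθ0.eventually (ge_mem_nhds (show (0:ℝ) < 1 / 10 by norm_num))] with k h1 h2 h3
      have hθ := d.θ_pos k
      have n1 := d.nk_lb k
      have n2 := d.nk_ub k
      have e2 : 10 ≤ 1 / d.θ k := by rw [le_div_iff₀ hθ]; linarith
      have e : 1 / (2 * d.θ k) = (1 / d.θ k) / 2 := by field_simp
      have hn1 : 1 ≤ d.nk k := by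
        have : (1 : ℝ) ≤ d.nk k := by linarith
        exact_mod_cast this
      have hb := d.cover_lb k g h1 ε hε.1 hε.2.le hn1
      have hlog1 : 0 < Real.log ((d.nk k + 1 : ℕ) : ℝ) := Real.log_pos (by push_cast; linarith)
      have hlog2 : Real.log ((d.nk k + 1 : ℕ) : ℝ) ≤ Real.log (1 / d.θ k) := by
        apply Real.log_le_log (by positivity)
        push_cast
        linarith
      have hsc : logScale (d.nk k + 1) t ≤ bowenCoverNum d.T (d.nk k + 1) ε := by
        unfold logScale
        refine le_trans ?_ hb
        have hp : 0 < Real.log (1 / d.θ k) ^ t := Real.rpow_pos_of_pos (by linarith) _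
        rw [le_div_iff₀ hp] at h2
        have : Real.log ((d.nk k + 1 : ℕ) : ℝ) ^ t ≤ Real.log (1 / d.θ k) ^ t :=
          Real.rpow_le_rpow hlog1.le hlog2 ht0.le
        linarith
      have hpos : 0 < logScale (d.nk k + 1) t := Real.rpow_pos_of_pos hlog1 _
      rw [ENNReal.le_div_iff_mul_le (Or.inl (by simpa using hpos)) (Or.inl ENNReal.ofReal_ne_top), one_mul]
      refine (ENNReal.ofReal_le_ofReal hsc).trans ?_
      rw [ENNReal.ofReal_natCast]
    exact lt_of_lt_of_le one_pos (le_limsup_of_frequently_le hfr)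
  · intro t ht
    obtain ⟨C, hC⟩ := d.cover_ub g ε hε.1
    refine Tendsto.limsup_eq ?_
    have hlim : Tendsto (fun n : ℕ => C * ((1 + Real.log n) / Real.log n ^ t)) atTop (𝓝 0) := by
      have hl : Tendsto (fun n : ℕ => Real.log n) atTop atTop :=
        Real.tendsto_log_atTop.comp tendsto_natCast_atTop_atTop
      have hx : Tendsto (fun x : ℝ => C * (x ^ (-t) + x ^ (-(t - 1)))) atTop (𝓝 0) := by
        have := ((tendsto_rpow_neg_atTop (show 0 < t by linarith)).add
          (tendsto_rpow_neg_atTop (show 0 < t - 1 by linarith))).const_mul C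
        simpa using this
      refine (hx.comp hl).congr' ?_
      filter_upwards [hl.eventually_gt_atTop 0] with n hn
      simp only [Function.comp]
      congr 1
      rw [add_div, Real.rpow_neg hn.le, one_div, neg_sub, Real.rpow_sub hn, Real.rpow_one]
    have hl2 := ENNReal.tendsto_ofReal hlim
    rw [ENNReal.ofReal_zero] at hl2
    refine tendsto_of_tendsto_of_tendsto_of_le_of_le' tendsto_const_nhds hl2 (Eventually.of_forall fun _ => bot_le) ?_
    filter_upwards [eventually_ge_atTop 2] with n hn
    have hn' : (2 : ℝ) ≤ n := by exact_mod_cast hn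
    obtain ⟨F, hF1, hF2⟩ := hC n hn
    have hb : (bowenCoverNum d.T n ε : ℝ) ≤ C * (1 + Real.log n) :=
      le_trans (Nat.cast_le.2 (cover_le _ F hF2)) hF1
    have hpos : 0 < logScale n t := Real.rpow_pos_of_pos (Real.log_pos (by linarith)) _
    rw [← ENNReal.ofReal_natCast, ← ENNReal.ofReal_div_of_pos hpos]
    apply ENNReal.ofReal_le_ofReal
    rw [← mul_div_assoc]
    unfold logScale at hpos ⊢
    gcongr

end Dat

end

section
open MeasureTheory Filter Set
open scoped Topology ENNReal NNReal

namespace Dat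
variable (d : Dat)

noncomputable def σw (w a : ℝ) : ℝ := deriv (fun w => d.σ (w, a)) w

lemma σ_differentiable : Differentiable ℝ d.σ := d.σ_contDiff.differentiable (by simp)

lemma σw_hasDerivAt (w a : ℝ) : HasDerivAt (fun w => d.σ (w, a)) (d.σw w a) w := by
  have : DifferentiableAt ℝ (fun w => d.σ (w, a)) w :=
    (d.σ_differentiable (w, a)).comp w (f := fun w => (w, a)) (by fun_prop)
  exact this.hasDerivAt

lemma σ_path (w a : ℝ) (f : ℝ → ℝ) (b w' f' : ℝ) (g : ℝ → ℝ) (hg : HasDerivAt g w' b) (hf : HasDerivAt f f' b)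
    (hw : g b = w) (ha : f b = a) :
    HasDerivAt (fun b => d.σ (g b, f b)) (w' * d.σw w a + f' * d.ρ (a, w + d.α * a)) b := by
  have h := (d.σ_differentiable (w, a)).hasFDerivAt
  set L := fderiv ℝ d.σ (w, a) with hL
  have h1 : L (1, 0) = d.σw w a := by
    have e : HasDerivAt (fun w => (w, a)) ((1 : ℝ), (0 : ℝ)) w := (hasDerivAt_id w).prodMk (hasDerivAt_const _ _)
    have e' : HasDerivAt (fun w => d.σ (w, a)) (L (1, 0)) w :=
      HasFDerivAt.comp_hasDerivAt (l := d.σ) (f := fun w => (w, a)) w h e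
    exact e'.unique (d.σw_hasDerivAt w a)
  have h2 : L (0, 1) = d.ρ (a, w + d.α * a) := by
    have e : HasDerivAt (fun b => (w, b)) ((0 : ℝ), (1 : ℝ)) a := (hasDerivAt_const _ _).prodMk (hasDerivAt_id a)
    have e' : HasDerivAt (fun b => d.σ (w, b)) (L (0, 1)) a := h.comp_hasDerivAt a e
    exact e'.unique (d.σ_hasDerivAt w a)
  have e : HasDerivAt (fun b => (g b, f b)) (w', f') b := hg.prodMk hf
  subst hw ha
  refine (h.comp_hasDerivAt b e).congr_deriv ?_
  rw [show ((w', f') : ℝ × ℝ) = w' • ((1 : ℝ), (0 : ℝ)) + f' • ((0 : ℝ), (1 : ℝ)) by simp, map_add, map_smul, map_smul, h1, h2]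
  simp

/-- first coordinate of the flow -/
noncomputable def hh (n : ℝ) (a b : ℝ) : ℝ := d.aa (b - d.α * a, d.σ (b - d.α * a, a) + n)

lemma Fl_hh (n a b : ℝ) : d.Fl n (a, b) = (d.hh n a b, b - d.α * a + d.α * d.hh n a b) := rfl

noncomputable def DD' (n a b : ℝ) : ℝ := d.σw (b - d.α * a) (d.hh n a b) - d.σw (b - d.α * a) a

lemma hh_hasDerivAt (n a b : ℝ) : HasDerivAt (fun b => d.hh n a b) (- d.DD' n a b / d.ρ (d.Fl n (a, b))) b := by
  have hd : Differentiable ℝ (fun b => d.hh n a b) := by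
    have h1 : Differentiable ℝ d.aa := d.aa_contDiff.differentiable (by simp)
    have h2 := d.σ_differentiable
    unfold hh
    fun_prop
  have hf := (hd b).hasDerivAt
  set f' := deriv (fun b => d.hh n a b) b
  have hg : HasDerivAt (fun b => b - d.α * a) 1 b := (hasDerivAt_id b).sub_const _
  have e1 := d.σ_path _ _ _ b 1 f' _ hg hf rfl rfl
  have e2 := (d.σ_path _ _ _ b 1 0 _ hg (hasDerivAt_const b a) rfl rfl).add_const n
  have e3 : (fun b => d.σ (b - d.α * a, d.hh n a b)) = fun b => d.σ (b - d.α * a, a) + n := by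
    funext b
    unfold hh
    rw [σ_aa]
  rw [e3] at e1
  have := e1.unique e2
  refine hf.congr_deriv ?_
  rw [eq_div_iff (d.ρ_pos _).ne', Fl_hh, DD']
  linarith

lemma σw_per (w a : ℝ) (n : ℤ) : d.σw (w + n) a = d.σw w a := by
  unfold σw
  have : (fun w => d.σ (w, a)) = fun w => d.σ (w + n, a) := by funext w; rw [σ_per]
  conv_rhs => rw [this]
  rw [deriv_comp_add_const (f := fun w => d.σ (w, a))]

lemma τ_hasDerivAt (k : ℕ) (w a : ℝ) : HasDerivAt (fun w => d.τ k w a)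
    (2 * Real.pi * (d.q k * d.A k) * (Real.cos (2 * Real.pi * (d.q k * w + d.θ k * a)) - Real.cos (2 * Real.pi * (d.q k * w)))) w := by
  have h1 : HasDerivAt (fun w => 2 * Real.pi * (d.q k * w + d.θ k * a)) (2 * Real.pi * d.q k) w :=
    ((((hasDerivAt_id w).const_mul (d.q k : ℝ)).add_const (d.θ k * a)).const_mul (2 * Real.pi)).congr_deriv (by simp)
  have h2 : HasDerivAt (fun w => 2 * Real.pi * (d.q k * w)) (2 * Real.pi * d.q k) w :=
    (((hasDerivAt_id w).const_mul (d.q k : ℝ)).const_mul (2 * Real.pi)).congr_deriv (by simp)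
  exact ((h1.sin.sub h2.sin).const_mul (d.A k)).congr_deriv (by ring)

lemma σw_near (k : ℕ) (w a : ℝ) (ha : |a| ≤ 1 / d.θ k) :
    |d.σw w a - 2 * Real.pi * (d.q k * d.A k) * (Real.cos (2 * Real.pi * (d.q k * w + d.θ k * a)) - Real.cos (2 * Real.pi * (d.q k * w)))|
      ≤ 16 * Real.pi * d.rem k := by
  have h : HasDerivAt (fun w => d.Rm k w a) (d.σw w a - 2 * Real.pi * (d.q k * d.A k) * (Real.cos (2 * Real.pi * (d.q k * w + d.θ k * a)) - Real.cos (2 * Real.pi * (d.q k * w)))) w := by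
    unfold Rm
    exact ((d.σw_hasDerivAt w a).sub_const a).sub (d.τ_hasDerivAt k w a)
  have hr := d.rem_nonneg k
  have := h.le_of_lip' (C := 16 * Real.pi * d.rem k) (by positivity) (Eventually.of_forall fun x => by
    rw [Real.norm_eq_abs, Real.norm_eq_abs]
    exact d.Rm_lip' k x w a ha)
  rwa [Real.norm_eq_abs] at this

noncomputable def cc (k : ℕ) (a b : ℝ) : ℝ := -(4 * Real.pi * Real.cos (2 * Real.pi * (d.q k * (b - d.α * a))))

noncomputable def ηη (k : ℕ) : ℝ := 32 * Real.pi * (d.rem k / (d.q k * d.A k)) +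
  4 * Real.pi ^ 2 * (5 * d.θ k + 2 * ∑' j, d.A j * min (d.θ k) (4 * d.θ j))

lemma ηη_tendsto (g : d.Good) : Tendsto d.ηη atTop (𝓝 0) := by
  have h1 := g.hrem.const_mul (32 * Real.pi)
  have h2 := ((g.hθ0.const_mul 5).add ((d.resA_tendsto g.hθ0).const_mul 2)).const_mul (4 * Real.pi ^ 2)
  have h3 := h1.add h2
  simp only [mul_zero, add_zero] at h3
  exact h3

lemma DD'_near (k : ℕ) (hk : d.θ k ≤ 1 / 10) (a b : ℝ) (ha : a ∈ Icc (0 : ℝ) 1) :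
    |d.DD' (d.nk k) a b - (d.q k * d.A k) * d.cc k a b| ≤ d.ηη k * (d.q k * d.A k) := by
  set w := b - d.α * a with hw
  obtain ⟨h1, h2⟩ := d.aa_res_bd k hk w a ha
  change |d.hh (d.nk k) a b| ≤ _ at h1
  change |d.θ k * d.hh (d.nk k) a b - 1 / 2| ≤ _ at h2
  set h := d.hh (d.nk k) a b with hh
  have hθ := d.θ_pos k
  have hL : 0 < d.q k * d.A k := mul_pos (d.q_pos k) (d.hA k)
  have ha' : |a| ≤ 1 / d.θ k := by
    rw [abs_of_nonneg ha.1, le_div_iff₀ hθ]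
    nlinarith [ha.1, ha.2]
  have h3 := d.σw_near k w h h1
  have h4 := d.σw_near k w a ha'
  have h5 : |Real.cos (2 * Real.pi * (d.q k * w + d.θ k * h)) + Real.cos (2 * Real.pi * (d.q k * w))| ≤
      2 * Real.pi * |d.θ k * h - 1 / 2| := by
    have := Real.abs_cos_sub_cos_le (2 * Real.pi * (d.q k * w + d.θ k * h)) (2 * Real.pi * (d.q k * w) + Real.pi)
    rw [Real.cos_add_pi, sub_neg_eq_add] at this
    refine this.trans (le_of_eq ?_)
    rw [← abs_of_pos (show 0 < 2 * Real.pi by positivity), ← abs_mul, abs_of_pos (show 0 < 2 * Real.pi by positivity)]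
    congr 1
    ring
  have h6 : |Real.cos (2 * Real.pi * (d.q k * w + d.θ k * a)) - Real.cos (2 * Real.pi * (d.q k * w))| ≤ 2 * Real.pi * d.θ k := by
    refine (Real.abs_cos_sub_cos_le _ _).trans ?_
    rw [show 2 * Real.pi * (d.q k * w + d.θ k * a) - 2 * Real.pi * (d.q k * w) = 2 * Real.pi * d.θ k * a by ring,
      abs_of_nonneg (by have := ha.1; positivity)]
    exact mul_le_of_le_one_right (by positivity) ha.2
  set c1 := Real.cos (2 * Real.pi * (d.q k * w + d.θ k * h))
  set c0 := Real.cos (2 * Real.pi * (d.q k * w)) with hc0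
  set c2 := Real.cos (2 * Real.pi * (d.q k * w + d.θ k * a))
  have hcc : d.cc k a b = -(4 * Real.pi * c0) := rfl
  have hDD : d.DD' (d.nk k) a b = d.σw w h - d.σw w a := rfl
  set L := d.q k * d.A k
  have e : d.DD' (d.nk k) a b - L * d.cc k a b =
      (d.σw w h - 2 * Real.pi * L * (c1 - c0)) - (d.σw w a - 2 * Real.pi * L * (c2 - c0)) +
       2 * Real.pi * L * (c1 + c0) - 2 * Real.pi * L * (c2 - c0) := by
    rw [hcc, hDD]; ring
  rw [e]
  have hp : 0 < 2 * Real.pi * L := by positivity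
  have t1 : |2 * Real.pi * L * (c1 + c0)| ≤ 2 * Real.pi * L * (2 * Real.pi * |d.θ k * h - 1 / 2|) := by
    rw [abs_mul, abs_of_pos hp]; gcongr
  have t2 : |2 * Real.pi * L * (c2 - c0)| ≤ 2 * Real.pi * L * (2 * Real.pi * d.θ k) := by
    rw [abs_mul, abs_of_pos hp]; gcongr
  have t3 : 2 * Real.pi * L * (2 * Real.pi * |d.θ k * h - 1 / 2|) ≤ 2 * Real.pi * L * (2 * Real.pi * (4 * d.θ k + 2 * ∑' j, d.A j * min (d.θ k) (4 * d.θ j))) := by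
    gcongr
  have t4 : d.ηη k * L = 32 * Real.pi * d.rem k + 4 * Real.pi ^ 2 * (5 * d.θ k + 2 * ∑' j, d.A j * min (d.θ k) (4 * d.θ j)) * L := by
    have : d.rem k / L * L = d.rem k := div_mul_cancel₀ _ hL.ne'
    have e : d.ηη k * L = 32 * Real.pi * (d.rem k / L * L) + 4 * Real.pi ^ 2 * (5 * d.θ k + 2 * ∑' j, d.A j * min (d.θ k) (4 * d.θ j)) * L := by
      unfold ηη; ring
    rw [e, this]
  rw [t4]
  rw [abs_le] at h3 h4 t1 t2 ⊢
  constructor <;> nlinarith [h3.1, h3.2, h4.1, h4.2, t1.1, t1.2, t2.1, t2.2]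

end Dat

end

section
open MeasureTheory Filter Set
open scoped Topology ENNReal NNReal

noncomputable def Psi (δ : ℝ) : ℝ := ∫ x in (0:ℝ)..1, δ ^ 2 / ((-(4 * Real.pi * Real.cos (2 * Real.pi * x))) ^ 2 + δ ^ 2)

lemma Psi_tendsto : Tendsto Psi (𝓝[>] 0) (𝓝 0) := by
  suffices h : Tendsto Psi (𝓝[>] 0) (𝓝 (∫ x in (0:ℝ)..1, (0 : ℝ))) by simpa using h
  unfold Psi
  refine intervalIntegral.tendsto_integral_filter_of_dominated_convergence (fun _ => 1) ?_ ?_ ?_ ?_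
  · filter_upwards [self_mem_nhdsWithin] with δ hδ
    have hδ' : (0 : ℝ) < δ := hδ
    refine Continuous.aestronglyMeasurable ?_
    refine Continuous.div (by fun_prop) (by fun_prop) fun x => ?_
    positivity
  · refine Eventually.of_forall fun δ => Eventually.of_forall fun x _ => ?_
    rw [Real.norm_of_nonneg (by positivity)]
    apply div_le_one_of_le₀ _ (by positivity)
    have := sq_nonneg (-(4 * Real.pi * Real.cos (2 * Real.pi * x)))
    linarith
  · simp
  · have hc : (range fun k : ℤ => (2 * (k : ℝ) + 1) / 4).Countable := countable_range _
    filter_upwards [hc.ae_notMem volume] with x hx _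
    have hne : Real.cos (2 * Real.pi * x) ≠ 0 := by
      intro h
      obtain ⟨k, hk⟩ := Real.cos_eq_zero_iff.1 h
      apply hx
      refine ⟨k, ?_⟩
      have hpi := Real.pi_pos
      have : Real.pi * (4 * x) = Real.pi * (2 * k + 1) := by linarith
      have := mul_left_cancel₀ hpi.ne' this
      show (2 * (k : ℝ) + 1) / 4 = x
      linarith
    have hcont : ContinuousAt (fun δ : ℝ => δ ^ 2 / ((-(4 * Real.pi * Real.cos (2 * Real.pi * x))) ^ 2 + δ ^ 2)) 0 := by
      refine ContinuousAt.div (by fun_prop) (by fun_prop) ?_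
      have hpi := Real.pi_pos
      have : (-(4 * Real.pi * Real.cos (2 * Real.pi * x))) ^ 2 ≠ 0 := by
        refine pow_ne_zero _ (neg_ne_zero.2 (mul_ne_zero (by positivity) hne))
      simpa using this
    have := hcont.tendsto.mono_left (nhdsWithin_le_nhds (s := Ioi 0))
    simpa using this

lemma periodic_scale (F : ℝ → ℝ) (hF : Function.Periodic F 1) (hFc : Continuous F) (q : ℕ) (hq : 1 ≤ q) (s : ℝ) :
    ∫ b in (0:ℝ)..1, F (q * (b - s)) = ∫ x in (0:ℝ)..1, F x := by
  have hq' : (q : ℝ) ≠ 0 := by positivity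
  rw [intervalIntegral.integral_comp_sub_right (fun x => F (q * x)) s,
    intervalIntegral.integral_comp_mul_left F hq']
  have h := hF.intervalIntegral_add_zsmul_eq q (q * (0 - s)) (fun _ _ => hFc.intervalIntegrable _ _)
  have e : (q : ℝ) * (0 - s) + ((q : ℤ) • (1 : ℝ)) = q * (1 - s) := by simp; ring
  rw [e] at h
  rw [h, hF.intervalIntegral_add_eq (q * (0 - s)) 0]
  simp [hq']

lemma Psi_eq (q : ℕ) (hq : 1 ≤ q) (s δ : ℝ) (hδ : 0 < δ) :
    ∫ b in (0:ℝ)..1, δ ^ 2 / ((-(4 * Real.pi * Real.cos (2 * Real.pi * (q * (b - s))))) ^ 2 + δ ^ 2) = Psi δ := by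
  refine periodic_scale (fun x => δ ^ 2 / ((-(4 * Real.pi * Real.cos (2 * Real.pi * x))) ^ 2 + δ ^ 2)) ?_ ?_ q hq s; rotate_left
  · refine Continuous.div (by fun_prop) (by fun_prop) fun x => ?_
    positivity
  intro x
  simp only
  have := Dat.cos_per x 1
  push_cast at this
  rw [this]

lemma ibp_est (E g : ℝ → ℂ) (r D : ℝ → ℝ) (m2 l2 : ℤ) (c0 L δ η s : ℝ) (q : ℕ) (hq : 1 ≤ q)
    (hc0 : c0 ≠ 0) (hL : 0 < L) (hδ : 0 < δ)
    (hE : ∀ b, HasDerivAt E (2 * Real.pi * Complex.I * (m2 - c0 * (D b * r b)) * E b) b)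
    (hE1 : ∀ b, ‖E b‖ ≤ 1) (hEp : E 1 = E 0)
    (hg : ∀ b, HasDerivAt g (2 * Real.pi * Complex.I * l2 * g b) b) (hg1 : ∀ b, ‖g b‖ ≤ 1) (hgp : g 1 = g 0)
    (hr0 : ∀ b, 0 ≤ r b) (hr1 : ∀ b, r b ≤ 2) (hrc : Continuous r) (hDc : Continuous D)
    (hD : ∀ b, |D b - L * (-(4 * Real.pi * Real.cos (2 * Real.pi * (q * (b - s)))))| ≤ η * L) :
    ‖∫ b in (0:ℝ)..1, E b * r b * g b‖ ≤ |(m2 : ℝ)| / (δ * |c0| * L) +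
      (8 * Real.pi ^ 2 * q / δ ^ 2 + 2 * Real.pi * |(l2 : ℝ)| / δ) / (2 * Real.pi * |c0| * L) + 2 * (η / δ) + 2 * Psi δ := by
  set c : ℝ → ℝ := fun b => -(4 * Real.pi * Real.cos (2 * Real.pi * (q * (b - s)))) with hc
  set c' : ℝ → ℝ := fun b => 8 * Real.pi ^ 2 * q * Real.sin (2 * Real.pi * (q * (b - s))) with hc'
  have dc : ∀ b, HasDerivAt c (c' b) b := by
    intro b
    have h2 : HasDerivAt (fun w => 2 * Real.pi * (q * (w - s))) (2 * Real.pi * q) b :=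
      ((((hasDerivAt_id b).sub_const s).const_mul (q : ℝ)).const_mul (2 * Real.pi)).congr_deriv (by simp)
    exact ((h2.cos.const_mul (4 * Real.pi)).neg).congr_deriv (by simp only [hc']; ring)
  have hN : ∀ b, 0 < c b ^ 2 + δ ^ 2 := fun b => by positivity
  set v : ℝ → ℝ := fun b => c b / (c b ^ 2 + δ ^ 2) with hv
  set v' : ℝ → ℝ := fun b => c' b * (δ ^ 2 - c b ^ 2) / (c b ^ 2 + δ ^ 2) ^ 2 with hv'
  have dv : ∀ b, HasDerivAt v (v' b) b := by
    intro b
    have h := (dc b).div (((dc b).pow 2).add_const (δ ^ 2)) (hN b).ne'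
    refine h.congr_deriv ?_
    simp only [hv']
    congr 1
    simp
    ring
  have hvb : ∀ b, |v b| ≤ 1 / δ := by
    intro b
    simp only [hv]
    rw [abs_div, abs_of_pos (hN b), div_le_div_iff₀ (hN b) hδ]
    rw [← sq_abs (c b)]
    nlinarith [sq_nonneg (|c b| - δ), abs_nonneg (c b)]
  have hc'b : ∀ b, |c' b| ≤ 8 * Real.pi ^ 2 * q := by
    intro b
    simp only [hc']
    rw [abs_mul, abs_of_nonneg (by positivity)]
    exact mul_le_of_le_one_right (by positivity) (Real.abs_sin_le_one _)
  have hv'b : ∀ b, |v' b| ≤ 8 * Real.pi ^ 2 * q / δ ^ 2 := by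
    intro b
    simp only [hv']
    rw [abs_div, abs_mul, abs_of_pos (pow_pos (hN b) 2), div_le_div_iff₀ (pow_pos (hN b) 2) (by positivity)]
    have h1 : |δ ^ 2 - c b ^ 2| ≤ c b ^ 2 + δ ^ 2 := by
      rw [abs_le]; constructor <;> nlinarith [sq_nonneg (c b), sq_nonneg δ]
    have h2 : δ ^ 2 ≤ c b ^ 2 + δ ^ 2 := by nlinarith [sq_nonneg (c b)]
    calc |c' b| * |δ ^ 2 - c b ^ 2| * δ ^ 2 ≤ (8 * Real.pi ^ 2 * q) * (c b ^ 2 + δ ^ 2) * (c b ^ 2 + δ ^ 2) := by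
          gcongr; exact hc'b b
      _ = _ := by ring
  -- the primitive
  set K : ℂ := (2 * Real.pi * Complex.I * c0 * L) with hK
  have hpi : (Real.pi : ℂ) ≠ 0 := by exact_mod_cast Real.pi_ne_zero
  have hc0' : (c0 : ℂ) ≠ 0 := by exact_mod_cast hc0
  have hL' : (L : ℂ) ≠ 0 := by exact_mod_cast hL.ne'
  have hK0 : K ≠ 0 := by simp [hK, hpi, hc0', hL', Complex.I_ne_zero]
  set E' : ℝ → ℂ := fun b => 2 * Real.pi * Complex.I * (m2 - c0 * (D b * r b)) * E b with hE'
  set P' : ℝ → ℂ := fun b => (E' b * g b * v b + E b * (2 * Real.pi * Complex.I * l2 * g b * v b + g b * v' b)) / K with hP'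
  have dP : ∀ b, HasDerivAt (fun b => E b * (g b * v b) / K) (P' b) b := by
    intro b
    exact (((hE b).mul ((hg b).mul (dv b).ofReal_comp)).div_const K).congr_deriv (by
      simp only [hP', hE', Pi.mul_apply]; ring)
  have cE : Continuous E := continuous_iff_continuousAt.2 fun b => (hE b).continuousAt
  have cg : Continuous g := continuous_iff_continuousAt.2 fun b => (hg b).continuousAt
  have cv : Continuous v := continuous_iff_continuousAt.2 fun b => (dv b).continuousAt
  have cc : Continuous c := continuous_iff_continuousAt.2 fun b => (dc b).continuousAt
  have cv' : Continuous v' := by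
    refine Continuous.div (by fun_prop) (by fun_prop) fun b => (pow_pos (hN b) 2).ne'
  have cP' : Continuous P' := by
    simp only [hP', hE']
    fun_prop
  have vp : v 1 = v 0 := by
    have : c 1 = c 0 := by
      simp only [hc]
      have := Dat.cos_per (q * (0 - s)) q
      rw [← this]
      congr 4
      push_cast
      ring
    simp only [hv, this]
  have hintP : ∫ b in (0:ℝ)..1, P' b = 0 := by
    rw [intervalIntegral.integral_eq_sub_of_hasDerivAt (fun b _ => dP b) (cP'.intervalIntegrable _ _), hEp, hgp, vp, sub_self]
  have hsplit : ∫ b in (0:ℝ)..1, E b * r b * g b = ∫ b in (0:ℝ)..1, (E b * r b * g b + P' b) := by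
    rw [intervalIntegral.integral_add (Continuous.intervalIntegrable (by fun_prop) _ _) (cP'.intervalIntegrable _ _), hintP, add_zero]
  have hRb : ∀ b, ‖E b * r b * g b + P' b‖ ≤ |(m2 : ℝ)| / (δ * |c0| * L) +
      (8 * Real.pi ^ 2 * q / δ ^ 2 + 2 * Real.pi * |(l2 : ℝ)| / δ) / (2 * Real.pi * |c0| * L) + 2 * (η / δ) +
       2 * (δ ^ 2 / (c b ^ 2 + δ ^ 2)) := by
    intro b
    have hN' : ((c b : ℂ) ^ 2 + δ ^ 2) ≠ 0 := by exact_mod_cast (hN b).ne'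
    have hcv : (c b : ℂ) * v b + (δ ^ 2 / (c b ^ 2 + δ ^ 2) : ℝ) = 1 := by
      simp only [hv]; push_cast; field_simp
    have e : E b * r b * g b + P' b = (m2 * E b * g b * v b) / (c0 * L) +
        E b * (g b * (2 * Real.pi * Complex.I * l2 * v b + v' b)) / K +
        E b * r b * g b * (((L * c b - D b) * v b / L : ℝ)) + E b * r b * g b * ((δ ^ 2 / (c b ^ 2 + δ ^ 2) : ℝ)) := by
      have e1 : E b * r b * g b = E b * r b * g b * ((c b : ℂ) * v b + (δ ^ 2 / (c b ^ 2 + δ ^ 2) : ℝ)) := by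
        rw [hcv, mul_one]
      have e2 : E b * r b * g b + P' b = E b * r b * g b * ((c b : ℂ) * v b + (δ ^ 2 / (c b ^ 2 + δ ^ 2) : ℝ)) + P' b := by
        rw [← e1]
      rw [e2]
      simp only [hP', hE', hK]
      generalize (δ ^ 2 / (c b ^ 2 + δ ^ 2) : ℝ) = X
      push_cast
      field_simp
      ring
    rw [e]
    have nEg : ‖E b‖ * ‖g b‖ ≤ 1 := mul_le_one₀ (hE1 b) (norm_nonneg _) (hg1 b)
    have nErg : ‖E b * r b * g b‖ ≤ 2 := by
      rw [norm_mul, norm_mul, Complex.norm_real, Real.norm_of_nonneg (hr0 b)]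
      have h1 := hr1 b
      have h0 := hr0 b
      calc _ = r b * (‖E b‖ * ‖g b‖) := by ring
        _ ≤ 2 * 1 := by gcongr
        _ = 2 := by norm_num
    have hc0a : 0 < |c0| := abs_pos.2 hc0
    have n1 : ‖(m2 * E b * g b * v b) / (c0 * L)‖ ≤ |(m2 : ℝ)| / (δ * |c0| * L) := by
      rw [norm_div, norm_mul, norm_mul, norm_mul, norm_mul, Complex.norm_real, Complex.norm_real, Complex.norm_real, Complex.norm_intCast,
        Real.norm_eq_abs, Real.norm_eq_abs, Real.norm_of_nonneg hL.le]
      calc _ = |(m2 : ℝ)| * (‖E b‖ * ‖g b‖) * |v b| / (|c0| * L) := by ring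
        _ ≤ |(m2 : ℝ)| * 1 * (1 / δ) / (|c0| * L) := by gcongr; exact hvb b
        _ = _ := by field_simp
    have n2 : ‖E b * (g b * (2 * Real.pi * Complex.I * l2 * v b + v' b)) / K‖ ≤
        (8 * Real.pi ^ 2 * q / δ ^ 2 + 2 * Real.pi * |(l2 : ℝ)| / δ) / (2 * Real.pi * |c0| * L) := by
      have nK : ‖K‖ = 2 * Real.pi * |c0| * L := by
        simp [hK, abs_of_pos hL, abs_of_pos Real.pi_pos]
      rw [norm_div, nK, norm_mul, norm_mul, ← mul_assoc]
      have : ‖2 * Real.pi * Complex.I * l2 * v b + v' b‖ ≤ 8 * Real.pi ^ 2 * q / δ ^ 2 + 2 * Real.pi * |(l2 : ℝ)| / δ := by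
        refine (norm_add_le _ _).trans ?_
        rw [norm_mul, norm_mul, norm_mul, norm_mul, Complex.norm_real, Complex.norm_real, Complex.norm_real, Complex.norm_intCast, Complex.norm_I,
          Real.norm_eq_abs, Real.norm_eq_abs, Real.norm_eq_abs, abs_of_pos Real.pi_pos, add_comm]
        refine add_le_add (hv'b b) ?_
        have := hvb b
        calc _ ≤ 2 * Real.pi * |(l2 : ℝ)| * (1 / δ) := by
              simp only [mul_one, Complex.norm_ofNat]; gcongr
          _ = _ := by ring
      have := Real.pi_pos
      gcongr
      calc _ ≤ 1 * ‖2 * Real.pi * Complex.I * l2 * v b + v' b‖ := by gcongr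
        _ ≤ _ := by rw [one_mul]; assumption
    have n3 : ‖E b * r b * g b * (((L * c b - D b) * v b / L : ℝ))‖ ≤ 2 * (η / δ) := by
      rw [norm_mul, Complex.norm_real, Real.norm_eq_abs]
      have : |(L * c b - D b) * v b / L| ≤ η / δ := by
        rw [abs_div, abs_mul, abs_of_pos hL, abs_sub_comm, div_le_iff₀ hL]
        have h1 := hD b
        have h2 := hvb b
        have h3 : 0 ≤ η * L := (abs_nonneg _).trans h1
        calc _ ≤ (η * L) * (1 / δ) := by gcongr
          _ = _ := by ring
      gcongr
    have n4 : ‖E b * r b * g b * ((δ ^ 2 / (c b ^ 2 + δ ^ 2) : ℝ))‖ ≤ 2 * (δ ^ 2 / (c b ^ 2 + δ ^ 2)) := by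
      rw [norm_mul, Complex.norm_real, Real.norm_of_nonneg (by positivity)]
      gcongr
    calc _ ≤ _ := norm_add_le _ _
      _ ≤ _ := add_le_add ((norm_add_le _ _).trans (add_le_add ((norm_add_le _ _).trans (add_le_add n1 n2)) n3)) n4
  have hcd : Continuous fun b => 2 * (δ ^ 2 / (c b ^ 2 + δ ^ 2)) := by
    refine continuous_const.mul (Continuous.div (by fun_prop) (by fun_prop) fun b => (hN b).ne')
  rw [hsplit]
  refine (intervalIntegral.norm_integral_le_of_norm_le zero_le_one (Eventually.of_forall fun b _ => hRb b)
    (Continuous.intervalIntegrable (by fun_prop) _ _)).trans (le_of_eq ?_)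
  rw [intervalIntegral.integral_add (Continuous.intervalIntegrable (by fun_prop) _ _) (hcd.intervalIntegrable _ _),
    intervalIntegral.integral_const_mul, Psi_eq q hq s δ hδ]
  simp

end

section
open MeasureTheory Filter Set
open scoped Topology ENNReal NNReal

noncomputable def emx (m : ℤ × ℤ) : C(Torus2, ℂ) where
  toFun x := fourier m.1 x.1 * fourier m.2 x.2
  continuous_toFun := by
    refine Continuous.mul ((fourier m.1).continuous.comp continuous_fst) ((fourier m.2).continuous.comp continuous_snd)

lemma emx_proj (m : ℤ × ℤ) (z : ℝ × ℝ) : emx m (torusProj z) =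
    Complex.exp (2 * Real.pi * Complex.I * (m.1 * z.1 + m.2 * z.2)) := by
  show fourier m.1 ((z.1 : ℝ) : AddCircle (1 : ℝ)) * fourier m.2 ((z.2 : ℝ) : AddCircle (1 : ℝ)) = _
  rw [fourier_coe_apply, fourier_coe_apply, ← Complex.exp_add]
  congr 1
  push_cast
  ring

lemma emx_norm (m : ℤ × ℤ) (x : Torus2) : ‖emx m x‖ = 1 := by
  obtain ⟨z, rfl⟩ := torusProj_surj x
  rw [emx_proj]
  have : (2 * Real.pi * Complex.I * (m.1 * z.1 + m.2 * z.2) : ℂ) = ((2 * Real.pi * (m.1 * z.1 + m.2 * z.2) : ℝ) : ℂ) * Complex.I := by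
    push_cast; ring
  rw [this, Complex.norm_exp_ofReal_mul_I]

lemma torus_int (F : Torus2 → ℂ) (hF : Continuous F) : ∫ p, F p = ∫ a in Ioc (0:ℝ) 1, ∫ b in (0:ℝ)..1, F (torusProj (a, b)) := by
  rw [← torusProj_mp.map_eq, integral_map torusProj_mp.measurable.aemeasurable hF.aestronglyMeasurable]
  unfold DD
  rw [Measure.volume_eq_prod, setIntegral_prod]
  · simp only [intervalIntegral.integral_of_le zero_le_one]
  · obtain ⟨C, hC⟩ := (isCompact_range hF).isBounded.exists_norm_le
    refine Measure.integrableOn_of_bounded (M := C) ?_ (hF.comp torusProj_cont).aestronglyMeasurable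
      (Eventually.of_forall fun x => hC _ ⟨_, rfl⟩)
    rw [Measure.prod_prod]
    simp

namespace Dat
variable (d : Dat)

lemma inner_est (m l : ℤ × ℤ) (hc : (m.1 : ℝ) + m.2 * d.α ≠ 0) (k : ℕ) (hk : d.θ k ≤ 1 / 10) (δ : ℝ) (hδ : 0 < δ)
    (a : ℝ) (ha : a ∈ Icc (0:ℝ) 1) :
    ‖∫ b in (0:ℝ)..1, emx m (torusProj (d.Fl (d.nk k) (a, b))) * ((d.ρ (d.Fl (d.nk k) (a, b)))⁻¹ : ℝ) * emx l (torusProj (a, b))‖ ≤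
     |(m.2 : ℝ)| / (δ * |(m.1 : ℝ) + m.2 * d.α| * (d.q k * d.A k)) +
      (8 * Real.pi ^ 2 * d.q k / δ ^ 2 + 2 * Real.pi * |(l.2 : ℝ)| / δ) / (2 * Real.pi * |(m.1 : ℝ) + m.2 * d.α| * (d.q k * d.A k)) +
       2 * (d.ηη k / δ) + 2 * Psi δ := by
  have hFl : Continuous fun b : ℝ => d.Fl (d.nk k) (a, b) := (d.Fl_contDiff _).continuous.comp (by fun_prop)
  have hr : Continuous fun b : ℝ => (d.ρ (d.Fl (d.nk k) (a, b)))⁻¹ :=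
    (d.ρ_cont.comp hFl).inv₀ fun b => (d.ρ_pos _).ne'
  refine ibp_est (fun b => emx m (torusProj (d.Fl (d.nk k) (a, b)))) (fun b => emx l (torusProj (a, b)))
    (fun b => (d.ρ (d.Fl (d.nk k) (a, b)))⁻¹) (fun b => d.DD' (d.nk k) a b) m.2 l.2 _ _ δ (d.ηη k) (d.α * a) (d.q k) (d.hq k) hc
    (mul_pos (d.q_pos k) (d.hA k)) hδ ?_ ?_ ?_ ?_ ?_ ?_ ?_ ?_ hr ?_ ?_
  · intro b
    simp only [emx_proj, Fl_hh]
    have h1 := (d.hh_hasDerivAt (d.nk k) a b)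
    rw [Fl_hh] at h1
    have h2 : HasDerivAt (fun b : ℝ => b - d.α * a + d.α * d.hh (d.nk k) a b) _ b :=
      ((hasDerivAt_id b).sub_const (d.α * a)).add (h1.const_mul d.α)
    have h3 := (((h1.ofReal_comp.const_mul (m.1 : ℂ)).add (h2.ofReal_comp.const_mul (m.2 : ℂ))).const_mul
      (2 * Real.pi * Complex.I)).cexp
    refine h3.congr_deriv ?_
    simp only [Pi.add_apply]
    push_cast
    ring
  · intro b; rw [emx_norm]
  · have := d.Fl_equi (d.nk k) (a, 0) 0 1
    simp only [Prod.mk_add_mk, Int.cast_zero, add_zero, Int.cast_one, zero_add] at this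
    have h2 := torusProj_add_int (d.Fl (d.nk k) (a, 0)) 0 1
    simp only [Int.cast_zero, Int.cast_one] at h2
    show emx m (torusProj (d.Fl (d.nk k) (a, 1))) = emx m (torusProj (d.Fl (d.nk k) (a, 0)))
    rw [this, h2]
  · intro b
    simp only [emx_proj]
    have h2 : HasDerivAt (fun b : ℝ => b) 1 b := hasDerivAt_id b
    have h3 := (((h2.ofReal_comp.const_mul (l.2 : ℂ)).const_add ((l.1 : ℂ) * a)).const_mul
      (2 * Real.pi * Complex.I)).cexp
    refine h3.congr_deriv ?_
    push_cast
    ring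
  · intro b; rw [emx_norm]
  · have h2 := torusProj_add_int (a, 0) 0 1
    simp only [Prod.mk_add_mk, Int.cast_zero, add_zero, Int.cast_one, zero_add] at h2
    show emx l (torusProj (a, 1)) = emx l (torusProj (a, 0))
    rw [h2]
  · intro b; exact (inv_pos.2 (d.ρ_pos _)).le
  · intro b
    have := d.ρ_ge (d.Fl (d.nk k) (a, b))
    exact (inv_anti₀ (by norm_num) this).trans (by norm_num)
  · have hd : ContDiff ℝ 1 (fun b => d.hh (d.nk k) a b) := by
      have h1 := d.aa_contDiff.of_le (m := 1) (by simp)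
      have h2 := d.σ_contDiff.of_le (m := 1) (by simp)
      unfold hh
      fun_prop
    have h1 : Continuous (deriv fun b => d.hh (d.nk k) a b) := hd.continuous_deriv le_rfl
    have h2 : (fun b => d.DD' (d.nk k) a b) = fun b => - (deriv (fun b => d.hh (d.nk k) a b) b * d.ρ (d.Fl (d.nk k) (a, b))) := by
      funext b
      rw [(d.hh_hasDerivAt (d.nk k) a b).deriv, div_mul_cancel₀ _ (d.ρ_pos _).ne', neg_neg]
    rw [h2]
    exact (h1.mul (d.ρ_cont.comp hFl)).neg
  · intro b
    exact d.DD'_near k hk a b ha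

lemma A_tendsto (g : d.Good) : Tendsto d.A atTop atTop := by
  have h1 := g.hAinf (1 / 2) (by norm_num) (by norm_num)
  refine tendsto_atTop_mono' _ ?_ h1
  have h3 : d.θ =O[atTop] d.θ := Asymptotics.isBigO_refl _ _
  have hlt : ∀ᶠ k in atTop, d.θ k < Real.exp (-1) := g.hθ0.eventually (gt_mem_nhds (Real.exp_pos _))
  filter_upwards [hlt] with k hk
  have hA := d.hA k
  have hθ := d.θ_pos k
  have : 1 ≤ Real.log (1 / d.θ k) := by
    rw [one_div, Real.log_inv]
    have := (Real.log_lt_log hθ hk)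
    rw [Real.log_exp] at this
    linarith
  exact div_le_self hA.le (Real.one_le_rpow this (by norm_num))

lemma mix_ne (g : d.Good) (m l : ℤ × ℤ) (hm : m ≠ 0) : Tendsto (fun k => ∫ p, emx m (d.T'^[d.nk k] p) *
    ((d.rb (d.T'^[d.nk k] p))⁻¹ : ℝ) * emx l p) atTop (𝓝 0) := by
  have hc : (m.1 : ℝ) + m.2 * d.α ≠ 0 := by
    intro h
    by_cases h2 : m.2 = 0
    · rw [h2] at h
      simp at h
      exact hm (Prod.ext h h2)
    · apply g.hirr
      refine ⟨-(m.1 : ℚ) / m.2, ?_⟩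
      have : (m.2 : ℝ) ≠ 0 := by exact_mod_cast h2
      push_cast
      rw [div_eq_iff this]
      linarith
  set c0 := (m.1 : ℝ) + m.2 * d.α
  have key : ∀ k, d.θ k ≤ 1 / 10 → ∀ δ, 0 < δ → ‖∫ p, emx m (d.T'^[d.nk k] p) *
    ((d.rb (d.T'^[d.nk k] p))⁻¹ : ℝ) * emx l p‖ ≤ |(m.2 : ℝ)| / (δ * |c0| * (d.q k * d.A k)) +
      (8 * Real.pi ^ 2 * d.q k / δ ^ 2 + 2 * Real.pi * |(l.2 : ℝ)| / δ) / (2 * Real.pi * |c0| * (d.q k * d.A k)) +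
       2 * (d.ηη k / δ) + 2 * Psi δ := by
    intro k hk δ hδ
    have hT : Continuous (d.T'^[d.nk k]) := d.T'_cont.iterate _
    have hi : Continuous fun p => (d.rb (d.T'^[d.nk k] p))⁻¹ := by
      refine (d.rb_cont.comp hT).inv₀ fun p => ?_
      obtain ⟨z, hz⟩ := torusProj_surj (d.T'^[d.nk k] p)
      simp only [Function.comp]
      rw [← hz, rb_spec]
      exact (d.ρ_pos _).ne'
    rw [torus_int _ (by fun_prop)]
    have := norm_setIntegral_le_of_norm_le_const (μ := volume) (s := Ioc (0:ℝ) 1)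
      (C := |(m.2 : ℝ)| / (δ * |c0| * (d.q k * d.A k)) +
      (8 * Real.pi ^ 2 * d.q k / δ ^ 2 + 2 * Real.pi * |(l.2 : ℝ)| / δ) / (2 * Real.pi * |c0| * (d.q k * d.A k)) +
       2 * (d.ηη k / δ) + 2 * Psi δ)
      (f := fun a => ∫ b in (0:ℝ)..1, emx m (d.T'^[d.nk k] (torusProj (a, b))) *
        ((d.rb (d.T'^[d.nk k] (torusProj (a, b))))⁻¹ : ℝ) * emx l (torusProj (a, b))) (by simp)
      (fun a ha => ?_)
    · refine this.trans (le_of_eq ?_)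
      rw [measureReal_def, Real.volume_Ioc]
      simp
    · have h := d.inner_est m l hc k hk δ hδ a ⟨ha.1.le, ha.2⟩
      simp only [T'_iter, desc_spec (d.Fl_equi _), rb_spec]
      exact h
  have hA := d.A_tendsto g
  have hL : Tendsto (fun k => d.q k * d.A k) atTop atTop := by
    refine tendsto_atTop_mono (fun k => ?_) hA
    exact le_mul_of_one_le_left (d.hA k).le (d.one_le_q k)
  have hAi : Tendsto (fun k => (d.A k)⁻¹) atTop (𝓝 0) := hA.inv_tendsto_atTop
  have hLi : Tendsto (fun k => (d.q k * d.A k)⁻¹) atTop (𝓝 0) := hL.inv_tendsto_atTop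
  have hη := d.ηη_tendsto g
  rw [Metric.tendsto_atTop]
  intro ε hε
  obtain ⟨δ, hδ, hδ2⟩ : ∃ δ : ℝ, 0 < δ ∧ 2 * Psi δ < ε / 2 := by
    have h1 := Psi_tendsto.const_mul 2
    rw [mul_zero] at h1
    have h2 := (h1.eventually (gt_mem_nhds (half_pos hε))).and self_mem_nhdsWithin
    obtain ⟨δ, h3, h4⟩ := h2.exists
    exact ⟨δ, h4, h3⟩
  have hc0 : |c0| ≠ 0 := abs_ne_zero.2 hc
  have lim : Tendsto (fun k => |(m.2 : ℝ)| / (δ * |c0|) * (d.q k * d.A k)⁻¹ +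
      (8 * Real.pi ^ 2 / δ ^ 2 / (2 * Real.pi * |c0|) * (d.A k)⁻¹ + 2 * Real.pi * |(l.2 : ℝ)| / δ / (2 * Real.pi * |c0|) * (d.q k * d.A k)⁻¹) +
       2 * (d.ηη k / δ)) atTop (𝓝 0) := by
    have := ((hLi.const_mul (|(m.2 : ℝ)| / (δ * |c0|))).add ((hAi.const_mul (8 * Real.pi ^ 2 / δ ^ 2 / (2 * Real.pi * |c0|))).add
      (hLi.const_mul (2 * Real.pi * |(l.2 : ℝ)| / δ / (2 * Real.pi * |c0|))))).add ((hη.div_const δ).const_mul 2)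
    simpa using this
  have ev := (lim.eventually (gt_mem_nhds (half_pos hε))).and
    (g.hθ0.eventually (ge_mem_nhds (show (0:ℝ) < 1 / 10 by norm_num)))
  obtain ⟨N, hN⟩ := eventually_atTop.1 ev
  refine ⟨N, fun k hk => ?_⟩
  obtain ⟨h1, h2⟩ := hN k hk
  rw [dist_zero_right]
  refine (key k h2 δ hδ).trans_lt ?_
  have hq := d.q_pos k
  have hA := d.hA k
  have e : |(m.2 : ℝ)| / (δ * |c0| * (d.q k * d.A k)) +
      (8 * Real.pi ^ 2 * d.q k / δ ^ 2 + 2 * Real.pi * |(l.2 : ℝ)| / δ) / (2 * Real.pi * |c0| * (d.q k * d.A k)) +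
       2 * (d.ηη k / δ) = |(m.2 : ℝ)| / (δ * |c0|) * (d.q k * d.A k)⁻¹ +
      (8 * Real.pi ^ 2 / δ ^ 2 / (2 * Real.pi * |c0|) * (d.A k)⁻¹ + 2 * Real.pi * |(l.2 : ℝ)| / δ / (2 * Real.pi * |c0|) * (d.q k * d.A k)⁻¹) +
       2 * (d.ηη k / δ) := by
    field_simp
  rw [e]
  linarith

end Dat

end

section
open MeasureTheory Filter Set
open scoped Topology ENNReal NNReal

lemma dense_span {X : Type*} [TopologicalSpace X] [CompactSpace X] (S : Submonoid C(X, ℂ))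
    (hstar : ∀ f ∈ S, star f ∈ S) (hsep : ∀ x y : X, x ≠ y → ∃ f ∈ S, f x ≠ f y) :
    (Submodule.span ℂ (S : Set C(X, ℂ))).topologicalClosure = ⊤ := by
  have hA : Subalgebra.toSubmodule (StarAlgebra.adjoin ℂ (S : Set C(X, ℂ))).toSubalgebra = Submodule.span ℂ (S : Set C(X, ℂ)) := by
    have hS : (S : Set C(X, ℂ)) ∪ star (S : Set C(X, ℂ)) = S := by
      refine union_eq_left.2 fun f hf => ?_
      have := hstar _ (Set.mem_star.1 hf)
      rwa [star_star] at this
    rw [StarAlgebra.adjoin_toSubalgebra, hS, Algebra.adjoin_eq_span, Submonoid.closure_eq]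
  have h := ContinuousMap.starSubalgebra_topologicalClosure_eq_top_of_separatesPoints
    (StarAlgebra.adjoin ℂ (S : Set C(X, ℂ))) (by
      intro x y hxy
      obtain ⟨f, hf, hne⟩ := hsep x y hxy
      exact ⟨f, ⟨f, StarAlgebra.subset_adjoin ℂ _ hf, rfl⟩, hne⟩)
  rw [← hA]
  rw [eq_top_iff]
  intro f _
  have : f ∈ (StarAlgebra.adjoin ℂ (S : Set C(X, ℂ))).topologicalClosure := by rw [h]; trivial
  exact this

lemma closed_null {X : Type*} [TopologicalSpace X] [CompactSpace X] (φ : ℕ → C(X, ℂ) → ℂ)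
    (hadd : ∀ k f g, φ k (f + g) = φ k f + φ k g) (hsmul : ∀ k (c : ℂ) f, φ k (c • f) = c * φ k f)
    (C : ℝ) (hb : ∀ k f, ‖φ k f‖ ≤ C * ‖f‖) (S : Set C(X, ℂ))
    (hd : (Submodule.span ℂ S).topologicalClosure = ⊤)
    (h : ∀ f ∈ S, Tendsto (fun k => φ k f) atTop (𝓝 0)) (f : C(X, ℂ)) :
    Tendsto (fun k => φ k f) atTop (𝓝 0) := by
  have h1 : ∀ f ∈ Submodule.span ℂ S, Tendsto (fun k => φ k f) atTop (𝓝 0) := by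
    intro f hf
    induction hf using Submodule.span_induction with
    | mem f hf => exact h f hf
    | zero =>
      have : ∀ k, φ k 0 = 0 := fun k => by
        have := hsmul k 0 0
        simpa using this
      simp [this]
    | add f g _ _ hf hg => simpa [hadd] using hf.add hg
    | smul c f _ hf => simpa [hsmul] using hf.const_mul c
  have hf : f ∈ closure (Submodule.span ℂ S : Set C(X, ℂ)) := by
    have : f ∈ (Submodule.span ℂ S).topologicalClosure := by rw [hd]; trivial
    exact this
  rw [Metric.tendsto_atTop]
  intro ε hε
  obtain ⟨g, hg, hfg⟩ := Metric.mem_closure_iff.1 hf (ε / 2 / (|C| + 1)) (by positivity)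
  obtain ⟨N, hN⟩ := Metric.tendsto_atTop.1 (h1 g hg) (ε / 2) (half_pos hε)
  refine ⟨N, fun k hk => ?_⟩
  have := hN k hk
  rw [dist_zero_right] at this ⊢
  have e : φ k f = φ k (f - g) + φ k g := by rw [← hadd, sub_add_cancel]
  have h3 : ‖φ k (f - g)‖ ≤ ε / 2 := by
    refine (hb k _).trans ?_
    rw [dist_eq_norm, lt_div_iff₀ (by positivity)] at hfg
    nlinarith [le_abs_self C, norm_nonneg (f - g)]
  rw [e]
  exact (norm_add_le _ _).trans_lt (by linarith)

section gen
set_option linter.unusedSectionVars false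
variable {X : Type*} [TopologicalSpace X] [CompactSpace X] [MeasurableSpace X] [BorelSpace X]
  (ν : Measure X) [IsProbabilityMeasure ν]

lemma cint {f : X → ℂ} (hf : Continuous f) : Integrable f ν := by
  obtain ⟨C, hC⟩ := (isCompact_range hf).isBounded.exists_norm_le
  exact Integrable.of_bound hf.measurable.aestronglyMeasurable C (Eventually.of_forall fun x => hC _ ⟨_, rfl⟩)

lemma cint_norm (f : C(X, ℂ)) : ‖∫ x, f x ∂ν‖ ≤ ‖f‖ := by
  have := norm_integral_le_of_norm_le_const (μ := ν) (f := f) (C := ‖f‖) (Eventually.of_forall fun x => f.norm_coe_le_norm x)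
  simpa using this

/-- general extension in the first variable -/
lemma ext_first (R : ℕ → X → X) (hR : ∀ k, Continuous (R k)) (w : ℕ → C(X, ℂ)) (C : ℝ) (hw : ∀ k, ‖w k‖ ≤ C)
    (v : C(X, ℂ)) (c : ℕ → ℂ) (C' : ℝ) (hc : ∀ k, ‖c k‖ ≤ C') (S : Set C(X, ℂ)) (hd : (Submodule.span ℂ S).topologicalClosure = ⊤)
    (h : ∀ f ∈ S, Tendsto (fun k => (∫ x, f (R k x) * w k x ∂ν) - (∫ x, f x * v x ∂ν) * c k) atTop (𝓝 0)) (f : C(X, ℂ)) :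
    Tendsto (fun k => (∫ x, f (R k x) * w k x ∂ν) - (∫ x, f x * v x ∂ν) * c k) atTop (𝓝 0) := by
  refine closed_null (fun k f => (∫ x, f (R k x) * w k x ∂ν) - (∫ x, f x * v x ∂ν) * c k) ?_ ?_ (C + ‖v‖ * C') ?_ S hd h f
  · intro k f g
    simp only [ContinuousMap.add_apply, add_mul]
    have := hR k
    rw [integral_add (cint ν (by fun_prop)) (cint ν (by fun_prop)), integral_add (cint ν (by fun_prop)) (cint ν (by fun_prop))]
    ring
  · intro k a f
    simp only [ContinuousMap.smul_apply, smul_eq_mul, mul_assoc, integral_const_mul]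
    ring
  · intro k f
    have h1 := cint_norm ν ((f.comp ⟨R k, hR k⟩) * w k)
    have h2 := cint_norm ν (f * v)
    have h3 : ‖(f.comp ⟨R k, hR k⟩)‖ ≤ ‖f‖ := (ContinuousMap.norm_le _ (norm_nonneg _)).2 fun x => f.norm_coe_le_norm _
    have h4 := norm_mul_le (f.comp ⟨R k, hR k⟩) (w k)
    have h5 := norm_mul_le f v
    simp only [ContinuousMap.mul_apply, ContinuousMap.comp_apply, ContinuousMap.coe_mk] at h1 h2
    refine (norm_sub_le _ _).trans ?_
    rw [norm_mul]
    have h6 : ‖∫ x, f (R k x) * w k x ∂ν‖ ≤ ‖f‖ * C :=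
      h1.trans (h4.trans (mul_le_mul h3 (hw k) (norm_nonneg _) (norm_nonneg _)))
    have h7 : ‖∫ x, f x * v x ∂ν‖ * ‖c k‖ ≤ ‖f‖ * ‖v‖ * ‖c k‖ := mul_le_mul_of_nonneg_right (h2.trans h5) (norm_nonneg _)
    have h8 : ‖f‖ * ‖v‖ * ‖c k‖ ≤ ‖f‖ * ‖v‖ * C' := mul_le_mul_of_nonneg_left (hc k) (by positivity)
    linarith

lemma ext_second (R : ℕ → X → X) (hR : ∀ k, Continuous (R k)) (f : C(X, ℂ)) (c : ℂ)
    (S : Set C(X, ℂ)) (hd : (Submodule.span ℂ S).topologicalClosure = ⊤)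
    (h : ∀ g ∈ S, Tendsto (fun k => (∫ x, f (R k x) * g x ∂ν) - c * ∫ x, g x ∂ν) atTop (𝓝 0)) (g : C(X, ℂ)) :
    Tendsto (fun k => (∫ x, f (R k x) * g x ∂ν) - c * ∫ x, g x ∂ν) atTop (𝓝 0) := by
  refine closed_null (fun k g => (∫ x, f (R k x) * g x ∂ν) - c * ∫ x, g x ∂ν) ?_ ?_ (‖f‖ + ‖c‖) ?_ S hd h g
  · intro k g1 g2
    simp only [ContinuousMap.add_apply, mul_add]
    have := hR k
    rw [integral_add (cint ν (by fun_prop)) (cint ν (by fun_prop)), integral_add (cint ν (by fun_prop)) (cint ν (by fun_prop))]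
    ring
  · intro k a g
    simp only [ContinuousMap.smul_apply, smul_eq_mul, mul_left_comm _ a, integral_const_mul]
    ring
  · intro k g
    have h1 := cint_norm ν ((f.comp ⟨R k, hR k⟩) * g)
    have h2 := cint_norm ν g
    have h3 : ‖(f.comp ⟨R k, hR k⟩)‖ ≤ ‖f‖ := (ContinuousMap.norm_le _ (norm_nonneg _)).2 fun x => f.norm_coe_le_norm _
    have h4 := norm_mul_le (f.comp ⟨R k, hR k⟩) g
    simp only [ContinuousMap.mul_apply, ContinuousMap.comp_apply, ContinuousMap.coe_mk] at h1
    refine (norm_sub_le _ _).trans ?_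
    rw [norm_mul]
    have h6 : ‖∫ x, f (R k x) * g x ∂ν‖ ≤ ‖f‖ * ‖g‖ :=
      h1.trans (h4.trans (mul_le_mul_of_nonneg_right h3 (norm_nonneg _)))
    have h7 : ‖c‖ * ‖∫ x, g x ∂ν‖ ≤ ‖c‖ * ‖g‖ := mul_le_mul_of_nonneg_left h2 (norm_nonneg _)
    linarith

end gen

end

section
open MeasureTheory Filter Set
open scoped Topology ENNReal NNReal

section gen2
variable {X : Type*} [MetricSpace X] [CompactSpace X] [MeasurableSpace X] [BorelSpace X]
  (ν : Measure X) [IsProbabilityMeasure ν]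

lemma l1_approx (A : Set X) (hA : MeasurableSet A) (ε : ℝ) (hε : 0 < ε) :
    ∃ F : C(X, ℂ), ∫ x, ‖A.indicator (fun _ => (1 : ℂ)) x - F x‖ ∂ν ≤ ε := by
  have hi : Integrable (A.indicator fun _ => (1 : ℂ)) ν := (integrable_const _).indicator hA
  obtain ⟨g, hg, -⟩ := hi.exists_boundedContinuous_integral_sub_le hε
  exact ⟨g.toContinuousMap, hg⟩

lemma erg_of_mix (S : X → X) (hS : MeasurePreserving S ν ν) (hSc : Continuous S) (n : ℕ → ℕ)
    (hm : ∀ F G : C(X, ℂ), Tendsto (fun k => ∫ x, F (S^[n k] x) * G x ∂ν) atTop (𝓝 ((∫ x, F x ∂ν) * ∫ x, G x ∂ν))) :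
    Ergodic S ν := by
  refine ⟨hS, ⟨fun A hA hinv => ?_⟩⟩
  set f : X → ℂ := A.indicator fun _ => (1 : ℂ) with hf
  have hfm : Measurable f := measurable_const.indicator hA
  have hi : Integrable f ν := (integrable_const _).indicator hA
  have hf1 : ∀ x, ‖f x‖ ≤ 1 := fun x => by
    rw [hf]; by_cases hx : x ∈ A <;> simp [hx]
  have hfS : ∀ j x, f (S^[j] x) = f x := by
    intro j
    induction j with
    | zero => intro x; rfl
    | succ j ih =>
      intro x
      rw [Function.iterate_succ_apply, ih]
      have : S x ∈ A ↔ x ∈ A := by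
        conv_rhs => rw [← hinv]
        rfl
      rw [hf]
      by_cases hx : x ∈ A
      · rw [indicator_of_mem hx, indicator_of_mem (this.2 hx)]
      · rw [indicator_of_notMem hx, indicator_of_notMem (fun h => hx (this.1 h))]
  have hbG : ∀ G : C(X, ℂ), ∀ u : X → ℂ, Integrable u ν → Integrable (fun x => u x * G x) ν := by
    intro G u hu
    exact hu.mul_bdd (c := ‖G‖) G.continuous.measurable.aestronglyMeasurable
      (Eventually.of_forall fun x => G.norm_coe_le_norm x)
  have step1 : ∀ G : C(X, ℂ), ∫ x, f x * G x ∂ν = (∫ x, f x ∂ν) * ∫ x, G x ∂ν := by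
    intro G
    by_contra hne
    have hpos : 0 < ‖(∫ x, f x * G x ∂ν) - (∫ x, f x ∂ν) * ∫ x, G x ∂ν‖ := norm_pos_iff.2 (sub_ne_zero.2 hne)
    set D := ‖(∫ x, f x * G x ∂ν) - (∫ x, f x ∂ν) * ∫ x, G x ∂ν‖
    obtain ⟨F, hF⟩ := l1_approx ν A hA (D / (4 * (‖G‖ + 1))) (by positivity)
    have hFi := cint ν F.continuous
    have hd := hi.sub hFi
    have b1 : ∀ k, ‖(∫ x, f x * G x ∂ν) - ∫ x, F (S^[n k] x) * G x ∂ν‖ ≤ D / 4 := by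
      intro k
      have hSk := hS.iterate (n k)
      have e : (∫ x, f x * G x ∂ν) - ∫ x, F (S^[n k] x) * G x ∂ν = ∫ x, (f (S^[n k] x) - F (S^[n k] x)) * G x ∂ν := by
        rw [← integral_sub (hbG G f hi) (hbG G (fun x => F (S^[n k] x)) (cint ν (F.continuous.comp (hSc.iterate _))))]
        refine integral_congr_ae (Eventually.of_forall fun x => ?_)
        simp only [hfS]
        rw [sub_mul]
      rw [e]
      have hcomp : Integrable (fun x => ‖f (S^[n k] x) - F (S^[n k] x)‖) ν :=
        (hSk.integrable_comp_of_integrable (g := fun x => f x - F x) hd).norm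
      have i1 : ‖∫ x, (f (S^[n k] x) - F (S^[n k] x)) * G x ∂ν‖ ≤ ∫ x, ‖f (S^[n k] x) - F (S^[n k] x)‖ * ‖G‖ ∂ν := by
        refine norm_integral_le_of_norm_le (hcomp.mul_const _) (Eventually.of_forall fun x => ?_)
        rw [norm_mul]
        exact mul_le_mul_of_nonneg_left (G.norm_coe_le_norm x) (norm_nonneg _)
      rw [integral_mul_const] at i1
      have i2 : ∫ x, ‖f (S^[n k] x) - F (S^[n k] x)‖ ∂ν = ∫ x, ‖f x - F x‖ ∂ν := by
        have := integral_map (μ := ν) (φ := S^[n k]) hSk.measurable.aemeasurable (f := fun x => ‖f x - F x‖)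
          (by rw [hSk.map_eq]; exact hd.norm.aestronglyMeasurable)
        rw [hSk.map_eq] at this
        exact this.symm
      rw [i2] at i1
      refine i1.trans ((mul_le_mul_of_nonneg_right hF (norm_nonneg _)).trans ?_)
      rw [div_mul_eq_mul_div, div_le_iff₀ (by positivity)]
      nlinarith [norm_nonneg G]
    have b2 : ‖(∫ x, f x * G x ∂ν) - (∫ x, F x ∂ν) * ∫ x, G x ∂ν‖ ≤ D / 4 :=
      le_of_tendsto ((tendsto_const_nhds.sub (hm F G)).norm) (Eventually.of_forall b1)
    have b3 : ‖(∫ x, F x ∂ν) * (∫ x, G x ∂ν) - (∫ x, f x ∂ν) * ∫ x, G x ∂ν‖ ≤ D / 4 := by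
      rw [← sub_mul, norm_mul, ← integral_sub hFi hi]
      have i1 : ‖∫ x, F x - f x ∂ν‖ ≤ D / (4 * (‖G‖ + 1)) := by
        refine (norm_integral_le_integral_norm _).trans ?_
        exact (le_of_eq (integral_congr_ae (Eventually.of_forall fun x => norm_sub_rev _ _))).trans hF
      refine (mul_le_mul i1 (cint_norm ν G) (norm_nonneg _) (by positivity)).trans ?_
      rw [div_mul_eq_mul_div, div_le_iff₀ (by positivity)]
      nlinarith [norm_nonneg G]
    have b4 : D ≤ D / 4 + D / 4 := by
      refine le_trans ?_ (add_le_add b2 b3)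
      refine le_trans (le_of_eq ?_) (norm_add_le _ _)
      simp only [D]
      congr 1
      ring
    linarith
  have step2 : ∫ x, f x ∂ν = (∫ x, f x ∂ν) * ∫ x, f x ∂ν := by
    by_contra hne
    have hpos : 0 < ‖(∫ x, f x ∂ν) - (∫ x, f x ∂ν) * ∫ x, f x ∂ν‖ := norm_pos_iff.2 (sub_ne_zero.2 hne)
    set D := ‖(∫ x, f x ∂ν) - (∫ x, f x ∂ν) * ∫ x, f x ∂ν‖
    obtain ⟨F, hF⟩ := l1_approx ν A hA (D / 4) (by positivity)
    have hFi := cint ν F.continuous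
    have hff : ∫ x, f x ∂ν = ∫ x, f x * f x ∂ν := by
      refine integral_congr_ae (Eventually.of_forall fun x => ?_)
      show f x = f x * f x
      rw [hf]; by_cases hx : x ∈ A <;> simp [hx]
    have hfi2 : Integrable (fun x => f x * f x) ν :=
      hi.mul_bdd (c := 1) hfm.aestronglyMeasurable (Eventually.of_forall hf1)
    have b1 : ‖(∫ x, f x * f x ∂ν) - ∫ x, f x * F x ∂ν‖ ≤ D / 4 := by
      rw [← integral_sub hfi2 (hbG F f hi)]
      refine (norm_integral_le_of_norm_le (hi.sub hFi).norm (Eventually.of_forall fun x => ?_)).trans hF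
      rw [← mul_sub, norm_mul]
      exact mul_le_of_le_one_left (norm_nonneg _) (hf1 x)
    have b3 : ‖(∫ x, f x ∂ν) * (∫ x, F x ∂ν) - (∫ x, f x ∂ν) * ∫ x, f x ∂ν‖ ≤ D / 4 := by
      rw [← mul_sub, norm_mul, ← integral_sub hFi hi]
      have i1 : ‖∫ x, F x - f x ∂ν‖ ≤ D / 4 := by
        refine (norm_integral_le_integral_norm _).trans ?_
        exact (le_of_eq (integral_congr_ae (Eventually.of_forall fun x => norm_sub_rev _ _))).trans hF
      have i2 : ‖∫ x, f x ∂ν‖ ≤ 1 := by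
        simpa using norm_integral_le_of_norm_le_const (μ := ν) (Eventually.of_forall hf1)
      exact (mul_le_of_le_one_left (norm_nonneg _) i2).trans i1
    have b4 : D ≤ D / 4 + D / 4 := by
      refine le_trans ?_ (add_le_add b1 b3)
      refine le_trans (le_of_eq ?_) (norm_add_le _ _)
      rw [step1 F, ← hff]
      simp only [D]
      congr 1
      ring
    linarith
  have hval : ∫ x, f x ∂ν = (ν.real A : ℂ) := by
    rw [hf, integral_indicator hA, integral_const]
    simp
  rw [hval] at step2
  have h3 : ν.real A = ν.real A * ν.real A := by exact_mod_cast step2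
  have h4 : ν.real A = 0 ∨ ν.real A = 1 := by
    have : ν.real A * (ν.real A - 1) = 0 := by linarith
    rcases mul_eq_zero.1 this with h | h
    · exact Or.inl h
    · exact Or.inr (by linarith)
  rw [eventuallyConst_set']
  rcases h4 with h | h
  · left
    rw [measureReal_eq_zero_iff] at h
    exact ae_eq_empty.2 h
  · right
    have : ν A = 1 := by
      rw [measureReal_def] at h
      rw [← ENNReal.ofReal_toReal (measure_ne_top ν A), h, ENNReal.ofReal_one]
    exact (ae_eq_univ).2 ((prob_compl_eq_zero_iff hA).2 this)

/-- product extension -/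
lemma prod_mix (R : ℕ → X → X) (hR : ∀ k, Continuous (R k))
    (hm : ∀ F G : C(X, ℂ), Tendsto (fun k => ∫ x, F (R k x) * G x ∂ν) atTop (𝓝 ((∫ x, F x ∂ν) * ∫ x, G x ∂ν)))
    (F G : C(X × X, ℂ)) :
    Tendsto (fun k => ∫ x, F (R k x.1, R k x.2) * G x ∂(ν.prod ν)) atTop
      (𝓝 ((∫ x, F x ∂(ν.prod ν)) * ∫ x, G x ∂(ν.prod ν))) := by
  let tens : C(X, ℂ) → C(X, ℂ) → C(X × X, ℂ) := fun f g => ⟨fun x => f x.1 * g x.2, by fun_prop⟩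
  let S : Submonoid C(X × X, ℂ) :=
    { carrier := {h | ∃ f g, h = tens f g}
      one_mem' := ⟨1, 1, by ext x; simp [tens]⟩
      mul_mem' := by
        rintro _ _ ⟨f, g, rfl⟩ ⟨f', g', rfl⟩
        refine ⟨f * f', g * g', ?_⟩
        ext x
        simp [tens]
        ring }
  have hd : (Submodule.span ℂ (S : Set C(X × X, ℂ))).topologicalClosure = ⊤ := by
    refine dense_span S ?_ ?_
    · rintro _ ⟨f, g, rfl⟩
      refine ⟨star f, star g, ?_⟩
      ext x
      simp [tens]
    · intro x y hxy
      have key : ∀ u : X, ∃ f : C(X, ℂ), ∀ v, f v = (dist v u : ℂ) := fun u => ⟨⟨fun v => (dist v u : ℂ), by fun_prop⟩, fun v => rfl⟩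
      by_cases h1 : x.1 = y.1
      · have h2 : x.2 ≠ y.2 := fun h => hxy (Prod.ext h1 h)
        obtain ⟨f, hf⟩ := key y.2
        refine ⟨tens 1 f, ⟨1, f, rfl⟩, ?_⟩
        simp [tens, hf, h2]
      · obtain ⟨f, hf⟩ := key y.1
        refine ⟨tens f 1, ⟨f, 1, rfl⟩, ?_⟩
        simp [tens, hf, h1]
  have hR2 : ∀ k, Continuous fun x : X × X => (R k x.1, R k x.2) := fun k => by
    have := hR k
    fun_prop
  have pure : ∀ f ∈ S, ∀ g ∈ S, Tendsto (fun k => (∫ x, f (R k x.1, R k x.2) * g x ∂(ν.prod ν)) -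
      (∫ x, f x ∂(ν.prod ν)) * ∫ x, g x ∂(ν.prod ν)) atTop (𝓝 0) := by
    rintro _ ⟨f, g, rfl⟩ _ ⟨f', g', rfl⟩
    have e1 : ∀ k, ∫ x, tens f g (R k x.1, R k x.2) * tens f' g' x ∂(ν.prod ν) =
        (∫ x, f (R k x) * f' x ∂ν) * ∫ x, g (R k x) * g' x ∂ν := by
      intro k
      rw [← integral_prod_mul]
      refine integral_congr_ae (Eventually.of_forall fun x => ?_)
      show f (R k x.1) * g (R k x.2) * (f' x.1 * g' x.2) = f (R k x.1) * f' x.1 * (g (R k x.2) * g' x.2)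
      ring
    have e2 : ∀ f g, ∫ x, tens f g x ∂(ν.prod ν) = (∫ x, f x ∂ν) * ∫ x, g x ∂ν := by
      intro f g
      rw [← integral_prod_mul]
      rfl
    simp only [e1, e2]
    have := (hm f f').mul (hm g g')
    have := this.sub_const ((∫ x, f x ∂ν) * (∫ x, g x ∂ν) * ((∫ x, f' x ∂ν) * ∫ x, g' x ∂ν))
    refine this.trans (le_of_eq ?_)
    congr 1
    ring
  have s1 : ∀ g ∈ S, Tendsto (fun k => (∫ x, F (R k x.1, R k x.2) * g x ∂(ν.prod ν)) -
      (∫ x, F x ∂(ν.prod ν)) * ∫ x, g x ∂(ν.prod ν)) atTop (𝓝 0) := by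
    intro g hg
    have := ext_first (ν.prod ν) (fun k x => (R k x.1, R k x.2)) hR2 (fun _ => g) ‖g‖ (fun _ => le_rfl) 1
      (fun _ => ∫ x, g x ∂(ν.prod ν)) _ (fun _ => le_rfl) S hd (fun f hf => by simpa using pure f hf g hg) F
    simpa using this
  have s2 := ext_second (ν.prod ν) (fun k x => (R k x.1, R k x.2)) hR2 F (∫ x, F x ∂(ν.prod ν)) S hd s1 G
  have := s2.add_const ((∫ x, F x ∂(ν.prod ν)) * ∫ x, G x ∂(ν.prod ν))
  simpa using this

end gen2

end

section
open MeasureTheory Filter Set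
open scoped Topology ENNReal NNReal

lemma emx_mul (m l : ℤ × ℤ) : emx m * emx l = emx (m + l) := by
  ext x
  show fourier m.1 x.1 * fourier m.2 x.2 * (fourier l.1 x.1 * fourier l.2 x.2) = fourier (m.1 + l.1) x.1 * fourier (m.2 + l.2) x.2
  rw [fourier_add, fourier_add]
  ring

lemma emx_zero : emx 0 = 1 := by
  ext x
  show fourier 0 x.1 * fourier 0 x.2 = (1 : ℂ)
  rw [fourier_zero, fourier_zero, one_mul]

noncomputable def emS : Submonoid C(Torus2, ℂ) where
  carrier := Set.range emx
  one_mem' := ⟨0, emx_zero⟩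
  mul_mem' := by
    rintro _ _ ⟨m, rfl⟩ ⟨l, rfl⟩
    exact ⟨m + l, (emx_mul m l).symm⟩

lemma emS_dense : (Submodule.span ℂ (emS : Set C(Torus2, ℂ))).topologicalClosure = ⊤ := by
  refine dense_span emS ?_ ?_
  · rintro _ ⟨m, rfl⟩
    refine ⟨-m, ?_⟩
    ext x
    show fourier (-m.1) x.1 * fourier (-m.2) x.2 = (starRingEnd ℂ) (fourier m.1 x.1 * fourier m.2 x.2)
    rw [fourier_neg, fourier_neg, map_mul]
  · intro x y hxy
    have inj : ∀ u v : AddCircle (1 : ℝ), fourier 1 u = fourier 1 v → u = v := by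
      intro u v h
      rw [fourier_one, fourier_one] at h
      exact AddCircle.injective_toCircle one_ne_zero (Subtype.coe_injective h)
    by_cases h1 : x.1 = y.1
    · refine ⟨emx (0, 1), ⟨_, rfl⟩, fun h => ?_⟩
      have h : fourier 0 x.1 * fourier 1 x.2 = fourier 0 y.1 * fourier 1 y.2 := h
      rw [fourier_zero, fourier_zero, one_mul, one_mul] at h
      exact hxy (Prod.ext h1 (inj _ _ h))
    · refine ⟨emx (1, 0), ⟨_, rfl⟩, fun h => ?_⟩
      have h : fourier 1 x.1 * fourier 0 x.2 = fourier 1 y.1 * fourier 0 y.2 := h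
      rw [fourier_zero, fourier_zero, mul_one, mul_one] at h
      exact h1 (inj _ _ h)

lemma int_fourier (n : ℤ) (hn : n ≠ 0) : ∫ x : AddCircle (1 : ℝ), fourier n x = 0 := by
  haveI : Fact ((0:ℝ) < 1) := ⟨one_pos⟩
  exact integral_eq_zero_of_add_right_eq_neg (μ := volume) (fourier_add_half_inv_index hn one_pos)

lemma int_emx (m : ℤ × ℤ) (hm : m ≠ 0) : ∫ x, emx m x = 0 := by
  have : ∫ x, emx m x = (∫ x : AddCircle (1 : ℝ), (fourier m.1 x : ℂ)) * ∫ x : AddCircle (1 : ℝ), (fourier m.2 x : ℂ) := by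
    rw [← integral_prod_mul]
    rfl
  rw [this]
  by_cases h : m.1 = 0
  · have h2 : m.2 ≠ 0 := fun h2 => hm (Prod.ext h h2)
    rw [int_fourier _ h2, mul_zero]
  · rw [int_fourier _ h, zero_mul]

namespace Dat
variable (d : Dat)

lemma rb_pos (x : Torus2) : 0 < d.rb x := by
  obtain ⟨z, rfl⟩ := torusProj_surj x
  rw [rb_spec]
  exact d.ρ_pos _

noncomputable def rbC : C(Torus2, ℂ) := ⟨fun x => (d.rb x : ℂ), Complex.continuous_ofReal.comp d.rb_cont⟩
noncomputable def riC : C(Torus2, ℂ) := ⟨fun x => ((d.rb x)⁻¹ : ℝ), Complex.continuous_ofReal.comp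
  (d.rb_cont.inv₀ fun x => (d.rb_pos x).ne')⟩

lemma rb_ri (x : Torus2) : d.rbC x * d.riC x = 1 := by
  show (d.rb x : ℂ) * (((d.rb x)⁻¹ : ℝ) : ℂ) = 1
  rw [← Complex.ofReal_mul, mul_inv_cancel₀ (d.rb_pos x).ne', Complex.ofReal_one]

lemma int_μ (f : Torus2 → ℂ) : ∫ x, f x ∂d.μ = ∫ x, f x * d.rbC x := by
  unfold μ
  rw [integral_withDensity_eq_integral_toReal_smul d.rb_cont.measurable.ennreal_ofReal (by simp)]
  refine integral_congr_ae (Eventually.of_forall fun x => ?_)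
  simp only [ENNReal.toReal_ofReal (d.rb_pos x).le]
  rw [Complex.real_smul, mul_comm]
  rfl

lemma int_rb : ∫ x, d.rbC x = 1 := by
  have := d.int_μ (fun _ => 1)
  simpa using this.symm

noncomputable def Rk (k : ℕ) : Torus2 → Torus2 := d.T'^[d.nk k]
lemma Rk_cont (k : ℕ) : Continuous (d.Rk k) := d.T'_cont.iterate _

noncomputable def ww (l : ℤ × ℤ) (k : ℕ) : C(Torus2, ℂ) := d.riC.comp ⟨d.Rk k, d.Rk_cont k⟩ * emx l

lemma ww_norm (l : ℤ × ℤ) (k : ℕ) : ‖d.ww l k‖ ≤ ‖d.riC‖ := by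
  refine (ContinuousMap.norm_le _ (norm_nonneg _)).2 fun x => ?_
  show ‖d.riC (d.Rk k x) * emx l x‖ ≤ _
  rw [norm_mul, emx_norm, mul_one]
  exact d.riC.norm_coe_le_norm _

lemma mixL (g : d.Good) (f : C(Torus2, ℂ)) (l : ℤ × ℤ) :
    Tendsto (fun k => (∫ x, f (d.Rk k x) * emx l x) - (∫ x, f x * d.rbC x) * ∫ x, emx l x) atTop (𝓝 0) := by
  have h1 : ∀ f : C(Torus2, ℂ), Tendsto (fun k => (∫ x, f (d.Rk k x) * d.ww l k x) - (∫ x, f x) * ∫ x, d.ww l k x) atTop (𝓝 0) := by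
    intro f
    have := ext_first volume d.Rk d.Rk_cont (d.ww l) _ (d.ww_norm l) 1 (fun k => ∫ x, d.ww l k x) ‖d.riC‖
      (fun k => (cint_norm volume _).trans (d.ww_norm l k)) emS emS_dense ?_ f
    · simpa using this
    · rintro _ ⟨m, rfl⟩
      by_cases hm : m = 0
      · subst hm
        rw [emx_zero]
        simp
      · have e := d.mix_ne g m l hm
        simp only [ContinuousMap.one_apply, mul_one, int_emx m hm, zero_mul, sub_zero]
        refine e.congr fun k => integral_congr_ae (Eventually.of_forall fun x => ?_)
        show _ = emx m (d.T'^[d.nk k] x) * (((d.rb (d.T'^[d.nk k] x))⁻¹ : ℝ) * emx l x)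
        simp only [mul_assoc]
  have e1 : ∀ k (f : C(Torus2, ℂ)), ∫ x, (f * d.rbC) (d.Rk k x) * d.ww l k x = ∫ x, f (d.Rk k x) * emx l x := by
    intro k f
    refine integral_congr_ae (Eventually.of_forall fun x => ?_)
    show f (d.Rk k x) * d.rbC (d.Rk k x) * (d.riC (d.Rk k x) * emx l x) = f (d.Rk k x) * emx l x
    have := d.rb_ri (d.Rk k x)
    linear_combination (f (d.Rk k x) * emx l x) * this
  have h2 := h1 (1 * d.rbC)
  have h3 := h1 (f * d.rbC)
  simp only [e1] at h2 h3
  simp only [ContinuousMap.one_apply, one_mul, int_rb, ContinuousMap.mul_apply] at h2 h3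
  have h4 := h3.sub (h2.const_mul (∫ x, f x * d.rbC x))
  simp only [mul_zero, sub_zero] at h4
  refine h4.congr fun k => ?_
  ring

lemma mixM (g : d.Good) (f h : C(Torus2, ℂ)) :
    Tendsto (fun k => ∫ x, f (d.Rk k x) * h x ∂d.μ) atTop (𝓝 ((∫ x, f x ∂d.μ) * ∫ x, h x ∂d.μ)) := by
  have h1 := ext_second volume d.Rk d.Rk_cont f (∫ x, f x * d.rbC x) emS emS_dense
    (by rintro _ ⟨l, rfl⟩; exact d.mixL g f l) (h * d.rbC)
  simp only [int_μ]
  have h2 := h1.add_const ((∫ x, f x * d.rbC x) * ∫ x, h x * d.rbC x)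
  rw [zero_add] at h2
  refine h2.congr fun k => ?_
  simp only [ContinuousMap.mul_apply, sub_add_cancel, mul_assoc]

theorem T'_wm (g : d.Good) : WeaklyMixing d.T' d.μ := by
  unfold WeaklyMixing
  refine erg_of_mix (d.μ.prod d.μ) _ (d.T'_mp.prod d.T'_mp) ?_ d.nk ?_
  · have := d.T'_cont
    fun_prop
  · intro F G
    refine (prod_mix d.μ d.Rk d.Rk_cont (d.mixM g) F G).congr fun k => ?_
    refine integral_congr_ae (Eventually.of_forall fun x => ?_)
    have : ∀ n (x : Torus2 × Torus2), (fun p : Torus2 × Torus2 => (d.T' p.1, d.T' p.2))^[n] x = (d.T'^[n] x.1, d.T'^[n] x.2) := by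
      intro n
      induction n with
      | zero => intro x; rfl
      | succ n ih => intro x; rw [Function.iterate_succ_apply, ih]; rfl
    simp only [this]
    rfl

theorem T_weaklyMixing (g : d.Good) : WeaklyMixing d.T volume := d.T_wm (d.T'_wm g)

end Dat

end

section
open MeasureTheory Filter Set
open scoped Topology ENNReal NNReal

/-- exponents -/
def ee : ℕ → ℕ
  | 0 => 4
  | j + 1 => 2 ^ (2 ^ (ee j))

def qq (j : ℕ) : ℕ := 2 ^ (ee j)
def EE (j : ℕ) : ℕ := 2 ^ (qq j)

lemma ee_succ (j : ℕ) : ee (j + 1) = EE j := rfl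
lemma qq_succ (j : ℕ) : qq (j + 1) = 2 ^ (EE j) := rfl

lemma ee_lt_qq (j : ℕ) : ee j < qq j := Nat.lt_two_pow_self
lemma qq_lt_EE (j : ℕ) : qq j < EE j := Nat.lt_two_pow_self
lemma ee_strictMono : StrictMono ee := strictMono_nat_of_lt_succ fun j => (ee_lt_qq j).trans (qq_lt_EE j)
lemma EE_strictMono : StrictMono EE := fun i j h => by
  rw [← ee_succ, ← ee_succ]
  exact ee_strictMono (by omega)
lemma qq_strictMono : StrictMono qq := fun i j h => Nat.pow_lt_pow_right (by norm_num) (ee_strictMono h)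
lemma ee_add (j i : ℕ) : ee j + i ≤ ee (j + i) := by
  induction i with
  | zero => simp
  | succ i ih =>
    have := ee_strictMono (show j + i < j + (i + 1) by omega)
    omega
lemma qq_ge (j : ℕ) : 16 + j ≤ qq j := by
  induction j with
  | zero => simp [qq, ee]
  | succ j ih =>
    have := qq_strictMono (show j < j + 1 by omega)
    omega
lemma qq_pos (j : ℕ) : (0:ℝ) < qq j := by have := qq_ge j; exact_mod_cast (by omega : 0 < qq j)
lemma EE_pos (j : ℕ) : (0:ℝ) < EE j := by have := qq_lt_EE j; exact_mod_cast (by omega : 0 < EE j)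
lemma qq_le_EE (j : ℕ) : (qq j : ℝ) ≤ EE j := by exact_mod_cast (qq_lt_EE j).le
lemma qq_succ_real (j : ℕ) : (qq (j + 1) : ℝ) = 2 ^ (EE j) := by rw [qq_succ]; push_cast; rfl

noncomputable def uu (i : ℕ) : ℝ := (qq i : ℝ)⁻¹
lemma uu_pos (i : ℕ) : 0 < uu i := inv_pos.2 (qq_pos i)

lemma uu_tail (j i : ℕ) : uu (i + j) ≤ uu j * (1 / 2) ^ i := by
  have h := ee_add j i
  have : (qq j : ℝ) * 2 ^ i ≤ qq (i + j) := by
    unfold qq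
    push_cast
    rw [← pow_add, add_comm i j]
    exact pow_le_pow_right₀ (by norm_num) h
  unfold uu
  rw [one_div, inv_pow, ← mul_inv]
  exact inv_anti₀ (mul_pos (qq_pos j) (by positivity)) this

lemma uu_summable_tail (j : ℕ) : Summable fun i => uu (i + j) :=
  Summable.of_nonneg_of_le (fun i => (uu_pos _).le) (uu_tail j) (summable_geometric_two.mul_left _)
lemma uu_summable : Summable uu := uu_summable_tail 0

noncomputable def al : ℝ := ∑' i, uu i
noncomputable def tl (j : ℕ) : ℝ := ∑' i, uu (i + (j + 1))

lemma tl_le (j : ℕ) : tl j ≤ 2 * uu (j + 1) := by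
  refine ((uu_summable_tail (j + 1)).tsum_le_tsum (uu_tail (j + 1)) (summable_geometric_two.mul_left _)).trans ?_
  rw [tsum_mul_left, tsum_geometric_two, mul_comm]
lemma tl_ge (j : ℕ) : uu (j + 1) ≤ tl j := by
  have := (uu_summable_tail (j + 1)).le_tsum 0 (fun i _ => (uu_pos _).le)
  rw [zero_add] at this
  exact this
lemma al_eq (j : ℕ) : al = ∑ i ∈ Finset.range (j + 1), uu i + tl j := (uu_summable.sum_add_tsum_nat_add (j + 1)).symm
lemma al_pos : 0 < al := uu_summable.tsum_pos (fun i => (uu_pos i).le) 0 (uu_pos 0)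
lemma al_le : al ≤ 1 := by
  have : al ≤ 2 * uu 0 := by
    refine (uu_summable.tsum_le_tsum (fun i => uu_tail 0 i) (summable_geometric_two.mul_left _)).trans ?_
    rw [tsum_mul_left, tsum_geometric_two, mul_comm]
  have h2 : uu 0 = 1 / 16 := by norm_num [uu, qq, ee]
  linarith

def pp (j : ℕ) : ℕ := ∑ i ∈ Finset.range (j + 1), 2 ^ (ee j - ee i)

lemma pp_eq (j : ℕ) : (pp j : ℝ) = qq j * ∑ i ∈ Finset.range (j + 1), uu i := by
  unfold pp
  push_cast
  rw [Finset.mul_sum]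
  refine Finset.sum_congr rfl fun i hi => ?_
  have : ee i ≤ ee j := ee_strictMono.monotone (by simpa using Nat.lt_succ_iff.1 (Finset.mem_range.1 hi))
  unfold uu qq
  push_cast
  rw [pow_sub₀ _ (by norm_num) this]

noncomputable def tt (j : ℕ) : ℝ := qq j * al - ((pp j : ℤ) : ℝ)

lemma tt_eq (j : ℕ) : tt j = qq j * tl j := by
  unfold tt
  rw [Int.cast_natCast, pp_eq, al_eq j]
  ring

lemma tt_le (j : ℕ) : tt j ≤ 2 * qq j * ((2:ℝ) ^ (EE j))⁻¹ := by
  rw [tt_eq]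
  have := tl_le j
  unfold uu at this
  rw [qq_succ_real] at this
  have := mul_le_mul_of_nonneg_left this (qq_pos j).le
  linarith
lemma tt_ge (j : ℕ) : qq j * ((2:ℝ) ^ (EE j))⁻¹ ≤ tt j := by
  rw [tt_eq]
  have := tl_ge j
  unfold uu at this
  rw [qq_succ_real] at this
  exact mul_le_mul_of_nonneg_left this (qq_pos j).le
lemma tt_pos (j : ℕ) : 0 < tt j := lt_of_lt_of_le (mul_pos (qq_pos j) (by positivity)) (tt_ge j)

lemma EE_summable (r : ℕ) (x : ℝ) (hx : 0 ≤ x) (hx1 : x < 1) : Summable fun j => (EE j : ℝ) ^ r * x ^ (EE j) :=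
  (summable_pow_mul_geometric_of_norm_lt_one r (r := x) (by rwa [Real.norm_of_nonneg hx])).comp_injective EE_strictMono.injective

noncomputable def AA (j : ℕ) : ℝ := EE j / qq j
lemma AA_pos (j : ℕ) : 0 < AA j := div_pos (EE_pos j) (qq_pos j)
lemma qA (j : ℕ) : (qq j : ℝ) * AA j = EE j := mul_div_cancel₀ _ (qq_pos j).ne'
lemma AA_ge (j : ℕ) : 1 ≤ AA j := (one_le_div (qq_pos j)).2 (qq_le_EE j)

lemma AAtt_le (j : ℕ) : AA j * tt j ≤ 2 * EE j * ((2:ℝ) ^ (EE j))⁻¹ := by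
  calc AA j * tt j ≤ AA j * (2 * qq j * ((2:ℝ) ^ (EE j))⁻¹) := mul_le_mul_of_nonneg_left (tt_le j) (AA_pos j).le
    _ = 2 * (qq j * AA j) * ((2:ℝ) ^ (EE j))⁻¹ := by ring
    _ = _ := by rw [qA]

lemma AAtt_small (j : ℕ) : AA j * tt j ≤ 1 / 256 / 2 * (1 / 2) ^ j := by
  refine (AAtt_le j).trans ?_
  have h : 1 + qq j + (8 + 1 + j) ≤ EE j := by
    have h1 := qq_ge j
    have h2 : qq j - 1 < 2 ^ (qq j - 1) := Nat.lt_two_pow_self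
    have h3 : EE j = 2 * 2 ^ (qq j - 1) := by
      unfold EE
      rw [← pow_succ']
      congr 1
      omega
    omega
  have h2 : (2:ℝ) ^ (1 + qq j + (8 + 1 + j)) ≤ 2 ^ (EE j) := pow_le_pow_right₀ (by norm_num) h
  rw [← div_eq_mul_inv, div_le_iff₀ (by positivity)]
  have h3 : (2:ℝ) * EE j = 2 ^ (1 + qq j) := by
    unfold EE
    push_cast
    rw [pow_add, pow_one]
  rw [h3]
  have h4 : (2:ℝ) ^ (1 + qq j) = (1 / 256 / 2 * (1 / 2) ^ j) * 2 ^ (1 + qq j + (8 + 1 + j)) := by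
    rw [pow_add _ (1 + qq j), pow_add _ (8 + 1), one_div_pow]
    field_simp
    norm_num
  rw [h4]
  exact mul_le_mul_of_nonneg_left h2 (by positivity)

lemma AAtt_r (r j : ℕ) : AA j * tt j * (qq j : ℝ) ^ r ≤ 2 * ((EE j : ℝ) ^ (r + 1) * (1 / 2) ^ (EE j)) := by
  have h1 := AAtt_le j
  have h2 : (qq j : ℝ) ^ r ≤ (EE j : ℝ) ^ r := pow_le_pow_left₀ (qq_pos j).le (qq_le_EE j) r
  refine (mul_le_mul h1 h2 (pow_nonneg (qq_pos j).le _) (by have := EE_pos j; positivity)).trans (le_of_eq ?_)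
  rw [one_div_pow]
  ring

noncomputable def DDat : Dat where
  q := qq
  p := fun j => pp j
  α := al
  A := AA
  hq j := by have := qq_ge j; omega
  hA := AA_pos
  hθ := tt_pos
  hθ1 j := by
    show tt j ≤ 1
    have h1 := AAtt_small j
    have h2 := AA_ge j
    have h3 := tt_pos j
    have h4 : (1 / 2 : ℝ) ^ j ≤ 1 := pow_le_one₀ (by norm_num) (by norm_num)
    nlinarith
  hp j := by
    rw [Int.cast_natCast, abs_of_nonneg (by positivity)]
    have h1 := tt_pos j
    unfold tt at h1
    rw [Int.cast_natCast] at h1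
    have h2 := al_le
    have h3 := qq_pos j
    nlinarith
  hα := by rw [abs_of_pos al_pos]; exact al_le
  hsum r := Summable.of_nonneg_of_le (fun j => mul_nonneg (mul_pos (AA_pos j) (tt_pos j)).le (pow_nonneg (qq_pos j).le _))
    (AAtt_r r) ((EE_summable (r + 1) (1 / 2) (by norm_num) (by norm_num)).mul_left 2)
  hsmall := by
    have hs : Summable fun j => AA j * tt j := Summable.of_nonneg_of_le (fun j => (mul_pos (AA_pos j) (tt_pos j)).le)
      AAtt_small (summable_geometric_two.mul_left _)
    refine (hs.tsum_le_tsum AAtt_small (summable_geometric_two.mul_left _)).trans ?_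
    rw [tsum_mul_left, tsum_geometric_two]
    norm_num

lemma DDat_θ (j : ℕ) : DDat.θ j = tt j := rfl

lemma tt_tendsto : Tendsto tt atTop (𝓝 0) := by
  have h : Tendsto (fun j : ℕ => (1 / 256 / 2 : ℝ) * (1 / 2) ^ j) atTop (𝓝 0) := by
    have := (tendsto_pow_atTop_nhds_zero_of_lt_one (r := (1/2:ℝ)) (by norm_num) (by norm_num)).const_mul (1 / 256 / 2)
    rwa [mul_zero] at this
  refine squeeze_zero (fun j => (tt_pos j).le) (fun j => ?_) h
  exact (le_mul_of_one_le_left (tt_pos j).le (AA_ge j)).trans (AAtt_small j)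

lemma al_irr : Irrational al := by
  rintro ⟨r, hr⟩
  have hd : (0:ℝ) < r.den := by exact_mod_cast r.den_pos
  have h1 : Tendsto (fun j => (r.den : ℝ) * tt j) atTop (𝓝 0) := by simpa using tt_tendsto.const_mul (r.den : ℝ)
  obtain ⟨j, hj⟩ := (h1.eventually (gt_mem_nhds one_pos)).exists
  have hpos : 0 < (r.den : ℝ) * tt j := mul_pos hd (tt_pos j)
  have hz : (r.den : ℝ) * tt j = ((qq j * r.num - r.den * pp j : ℤ) : ℝ) := by
    unfold tt
    rw [← hr]
    have : (r.den : ℝ) * r = r.num := by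
      have := Rat.den_mul_eq_num r
      exact_mod_cast this
    push_cast
    linear_combination (qq j : ℝ) * this
  rw [hz] at hj hpos
  have a : (0:ℤ) < qq j * r.num - r.den * pp j := by exact_mod_cast hpos
  have b : (qq j * r.num - r.den * pp j : ℤ) < 1 := by exact_mod_cast hj
  omega

lemma qq_tendsto : Tendsto (fun k => (qq k : ℝ)) atTop atTop :=
  tendsto_natCast_atTop_atTop.comp qq_strictMono.tendsto_atTop

lemma sum_EE_le (k : ℕ) : ∑ j ∈ Finset.range k, (EE j : ℝ) ≤ qq k := by
  induction k with
  | zero => simp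
  | succ k ih =>
    rw [Finset.sum_range_succ]
    have h1 := qq_le_EE k
    have h2 : EE k + EE k ≤ qq (k + 1) := by
      rw [qq_succ]
      have h1 := qq_lt_EE k
      have h0 := qq_ge k
      have h2 : EE k - 1 < 2 ^ (EE k - 1) := Nat.lt_two_pow_self
      have h3 : 2 ^ EE k = 2 * 2 ^ (EE k - 1) := by
        rw [← pow_succ']
        congr 1
        omega
      omega
    have h3 : (EE k : ℝ) + EE k ≤ qq (k + 1) := by exact_mod_cast h2
    linarith

lemma tsum_split (f b : ℕ → ℝ) (hf : ∀ j, 0 ≤ f j) (hb : Summable b) (hb0 : ∀ j, 0 ≤ b j) (K : ℕ)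
    (h1 : ∀ j < K, f j ≤ EE j) (h2 : ∀ j, K ≤ j → f j ≤ b j) :
    ∑' j, f j ≤ ∑ j ∈ Finset.range K, (EE j : ℝ) + ∑' j, b j := by
  have hs : Summable fun i => f (i + K) := Summable.of_nonneg_of_le (fun i => hf _) (fun i => h2 _ (by omega))
    ((summable_nat_add_iff K).2 hb)
  have hf' : Summable f := (summable_nat_add_iff K).1 hs
  rw [← hf'.sum_add_tsum_nat_add K, ← hb.sum_add_tsum_nat_add K]
  have a := Finset.sum_le_sum (s := Finset.range K) (fun j hj => h1 j (Finset.mem_range.1 hj))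
  have b' := hs.tsum_le_tsum (fun i => h2 (i + K) (by omega)) ((summable_nat_add_iff K).2 hb)
  have c := Finset.sum_nonneg (s := Finset.range K) (fun j _ => hb0 j)
  linarith

lemma DDat_rem (k : ℕ) : DDat.rem k ≤ qq k + ∑' j, 2 * ((EE j : ℝ) ^ 3 * (1 / 2) ^ (EE j)) := by
  refine le_trans ?_ (add_le_add_left (sum_EE_le k) _)
  unfold Dat.rem
  have hb : Summable fun j => 2 * ((EE j : ℝ) ^ 3 * (1 / 2) ^ (EE j)) := (EE_summable 3 (1 / 2) (by norm_num) (by norm_num)).mul_left 2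
  have hE : ∀ j, DDat.q j * DDat.A j = (EE j : ℝ) := qA
  simp only [hE, DDat_θ]
  have hm : ∀ j, 0 ≤ min 1 (tt j / tt k) := fun j => le_min zero_le_one (div_pos (tt_pos j) (tt_pos k)).le
  refine tsum_split _ _ (fun j => ?_) hb (fun j => by have := EE_pos j; positivity) k (fun j hj => ?_) (fun j hj => ?_)
  · split_ifs
    · exact le_rfl
    · exact mul_nonneg (EE_pos j).le (hm j)
  · rw [if_neg hj.ne]
    exact mul_le_of_le_one_right (EE_pos j).le (min_le_left _ _)
  · split_ifs with h
    · have := EE_pos j; positivity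
    · have hkj : k + 1 ≤ j := by omega
      have hq : (2:ℝ) ^ (EE k) ≤ qq j := by
        rw [← qq_succ_real]
        exact_mod_cast qq_strictMono.monotone hkj
      have h1 : (tt k)⁻¹ ≤ qq j := by
        have h2 : (qq k * ((2:ℝ) ^ (EE k))⁻¹)⁻¹ ≤ (2:ℝ) ^ (EE k) := by
          rw [mul_inv, inv_inv]
          refine mul_le_of_le_one_left (by positivity) (inv_le_one_of_one_le₀ ?_)
          have := qq_ge k
          exact_mod_cast (by omega : 1 ≤ qq k)
        exact (inv_anti₀ (mul_pos (qq_pos k) (by positivity)) (tt_ge k)).trans (h2.trans hq)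
      have hE := EE_pos j
      have hqj := qq_pos j
      have hqE := qq_le_EE j
      calc (EE j : ℝ) * min 1 (tt j / tt k) ≤ EE j * (tt j / tt k) := mul_le_mul_of_nonneg_left (min_le_right _ _) hE.le
        _ = EE j * (tt j * (tt k)⁻¹) := by rw [div_eq_mul_inv]
        _ ≤ EE j * ((2 * qq j * ((2:ℝ) ^ (EE j))⁻¹) * qq j) := by
            refine mul_le_mul_of_nonneg_left ?_ hE.le
            exact mul_le_mul (tt_le j) h1 (inv_pos.2 (tt_pos k)).le (by positivity)
        _ ≤ EE j * ((2 * EE j * ((2:ℝ) ^ (EE j))⁻¹) * EE j) := by gcongr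
        _ = _ := by rw [one_div_pow]; ring

lemma EE_real (k : ℕ) : (EE k : ℝ) = 2 ^ (qq k) := by unfold EE; push_cast; rfl

lemma DDat_hrem : Tendsto (fun k => DDat.rem k / (DDat.q k * DDat.A k)) atTop (𝓝 0) := by
  set B := ∑' j, 2 * ((EE j : ℝ) ^ 3 * (1 / 2) ^ (EE j))
  have hE : ∀ j, DDat.q j * DDat.A j = (EE j : ℝ) := qA
  simp only [hE]
  have h1 : Tendsto (fun n : ℕ => (n : ℝ) ^ 1 * (1 / 2 : ℝ) ^ n) atTop (𝓝 0) :=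
    (summable_pow_mul_geometric_of_norm_lt_one 1 (r := (1 / 2 : ℝ)) (by norm_num)).tendsto_atTop_zero
  have h2 : Tendsto (fun n : ℕ => (1 / 2 : ℝ) ^ n) atTop (𝓝 0) := tendsto_pow_atTop_nhds_zero_of_lt_one (by norm_num) (by norm_num)
  have h3 := (h1.add (h2.const_mul B)).comp qq_strictMono.tendsto_atTop
  rw [mul_zero, add_zero] at h3
  refine squeeze_zero (fun k => div_nonneg (DDat.rem_nonneg k) (EE_pos k).le) (fun k => ?_) h3
  rw [div_le_iff₀ (EE_pos k)]
  have h4 : DDat.rem k ≤ qq k + B := DDat_rem k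
  refine h4.trans (le_of_eq ?_)
  clear_value B
  simp only [Function.comp, EE_real]
  rw [one_div_pow, pow_one]
  field_simp

lemma DDat_hK : ∃ C : ℝ, ∀ s : ℝ, 1 ≤ s → ∑' j, DDat.q j * DDat.A j * min 1 (DDat.θ j * s) ≤ C * (1 + Real.log s) := by
  have hE : ∀ j, DDat.q j * DDat.A j = (EE j : ℝ) := qA
  simp only [hE, DDat_θ]
  set x : ℝ := (Real.sqrt 2)⁻¹ with hx
  have hs2 : (1:ℝ) < Real.sqrt 2 := by
    rw [Real.lt_sqrt (by norm_num)]; norm_num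
  have hx0 : 0 ≤ x := by positivity
  have hx1 : x < 1 := inv_lt_one_of_one_lt₀ hs2
  have hb : Summable fun j => 2 * ((EE j : ℝ) ^ 2 * x ^ (EE j)) := (EE_summable 2 x hx0 hx1).mul_left 2
  set B := ∑' j, 2 * ((EE j : ℝ) ^ 2 * x ^ (EE j))
  have hB : 0 ≤ B := tsum_nonneg fun j => by positivity
  have hl2 : 0 < Real.log 2 := Real.log_pos (by norm_num)
  refine ⟨4 / Real.log 2 + B, fun s hs => ?_⟩
  have hlog : 0 ≤ Real.log s := Real.log_nonneg hs
  have hex : ∃ K, s ^ 2 < 2 ^ (EE K) := by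
    have h1 : Tendsto (fun K => (2:ℝ) ^ (EE K)) atTop atTop :=
      (tendsto_pow_atTop_atTop_of_one_lt (by norm_num)).comp EE_strictMono.tendsto_atTop
    exact (h1.eventually_gt_atTop (s ^ 2)).exists
  classical
  have hK := Nat.find_spec hex
  have hKm := fun j (hj : j < Nat.find hex) => Nat.find_min hex hj
  set K := Nat.find hex
  have hmain := tsum_split (fun j => (EE j : ℝ) * min 1 (tt j * s)) _
    (fun j => mul_nonneg (EE_pos j).le (le_min zero_le_one (mul_nonneg (tt_pos j).le (by linarith)))) hb (fun j => by positivity) K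
    (fun j _ => mul_le_of_le_one_right (EE_pos j).le (min_le_left _ _)) (fun j hj => ?_)
  · refine hmain.trans ?_
    have hK2 : ∑ j ∈ Finset.range K, (EE j : ℝ) ≤ 4 / Real.log 2 * Real.log s := by
      rcases Nat.eq_zero_or_pos K with h0 | h0
      · rw [h0]; simp; positivity
      · obtain ⟨k, hk⟩ : ∃ k, K = k + 1 := ⟨K - 1, by omega⟩
        have h1 := hKm k (by omega)
        rw [not_lt] at h1
        have h2 := Real.log_le_log (by positivity) h1
        rw [Real.log_pow, Real.log_pow] at h2
        push_cast at h2
        rw [hk, Finset.sum_range_succ]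
        have h3 := sum_EE_le k
        have h4 := qq_le_EE k
        rw [div_mul_eq_mul_div, le_div_iff₀ hl2]
        nlinarith
    have : 0 ≤ 4 / Real.log 2 := by positivity
    nlinarith [mul_nonneg hB hlog]
  · have hsj : s ≤ Real.sqrt 2 ^ (EE j) := by
      have h1 : s ^ 2 ≤ (Real.sqrt 2 ^ (EE j)) ^ 2 := by
        rw [← pow_mul, mul_comm, pow_mul, Real.sq_sqrt (by norm_num)]
        exact hK.le.trans (pow_le_pow_right₀ (by norm_num) (EE_strictMono.monotone hj))
      exact le_of_sq_le_sq h1 (by positivity)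
    have hE := EE_pos j
    have hqj := qq_pos j
    have hqE := qq_le_EE j
    have h2x : ((2:ℝ) ^ (EE j))⁻¹ = x ^ (EE j) * x ^ (EE j) := by
      rw [← mul_pow, hx, ← mul_inv, Real.mul_self_sqrt (by norm_num), inv_pow]
    have hxs : x ^ (EE j) * s ≤ 1 := by
      rw [hx, inv_pow, inv_mul_le_iff₀ (by positivity), mul_one]
      exact hsj
    calc (EE j : ℝ) * min 1 (tt j * s) ≤ EE j * (tt j * s) := mul_le_mul_of_nonneg_left (min_le_right _ _) hE.le
      _ ≤ EE j * ((2 * qq j * ((2:ℝ) ^ (EE j))⁻¹) * s) := by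
          refine mul_le_mul_of_nonneg_left ?_ hE.le
          exact mul_le_mul_of_nonneg_right (tt_le j) (by linarith)
      _ = 2 * EE j * qq j * x ^ (EE j) * (x ^ (EE j) * s) := by rw [h2x]; ring
      _ ≤ 2 * EE j * qq j * x ^ (EE j) * 1 := mul_le_mul_of_nonneg_left hxs (by positivity)
      _ ≤ 2 * EE j * EE j * x ^ (EE j) * 1 := by gcongr
      _ = _ := by ring

lemma DDat_hAinf (t : ℝ) (ht : 0 < t) (ht1 : t < 1) :
    Tendsto (fun k => DDat.A k / (Real.log (1 / DDat.θ k)) ^ t) atTop atTop := by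
  have hl2 : 0 < Real.log 2 := Real.log_pos (by norm_num)
  have h1 := (tendsto_exp_mul_div_rpow_atTop 1 (Real.log 2 * (1 - t)) (mul_pos hl2 (by linarith))).comp qq_tendsto
  refine tendsto_atTop_mono' _ ?_ h1
  filter_upwards [tt_tendsto.eventually (gt_mem_nhds one_pos)] with k hk
  simp only [Function.comp, DDat_θ, Real.rpow_one]
  have hpos : 0 < Real.log (1 / tt k) := Real.log_pos ((one_lt_div (tt_pos k)).2 hk)
  have hle : Real.log (1 / tt k) ≤ EE k := by
    have h2 : 1 / tt k ≤ 2 ^ (EE k) := by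
      rw [div_le_iff₀ (tt_pos k)]
      have h3 := tt_ge k
      rw [← div_eq_mul_inv, div_le_iff₀ (by positivity)] at h3
      have h4 : (1:ℝ) ≤ qq k := by have := qq_ge k; exact_mod_cast (by omega : 1 ≤ qq k)
      linarith
    have h5 := Real.log_le_log (by have := tt_pos k; positivity) h2
    rw [Real.log_pow] at h5
    have h6 : Real.log 2 ≤ 1 := by have := Real.log_two_lt_d9; linarith
    exact h5.trans (mul_le_of_le_one_right (EE_pos k).le h6)
  have hrp : (Real.log (1 / tt k)) ^ t ≤ (EE k : ℝ) ^ t := Real.rpow_le_rpow hpos.le hle ht.le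
  have hd := Real.rpow_pos_of_pos hpos t
  have hexp : Real.exp (Real.log 2 * (1 - t) * qq k) * (EE k : ℝ) ^ t = EE k := by
    have e : (EE k : ℝ) = Real.exp (Real.log 2 * qq k) := by
      rw [EE_real, ← Real.rpow_natCast, Real.rpow_def_of_pos (by norm_num)]
    rw [e, ← Real.exp_mul, ← Real.exp_add]
    congr 1
    ring
  rw [le_div_iff₀ hd]
  show _ ≤ (EE k : ℝ) / qq k
  rw [div_mul_eq_mul_div]
  refine div_le_div_of_nonneg_right ?_ (qq_pos k).le
  rw [← hexp]
  exact mul_le_mul_of_nonneg_left hrp (Real.exp_pos _).le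

lemma DDat_good : DDat.Good where
  hirr := al_irr
  hK := DDat_hK
  hrem := DDat_hrem
  hAinf := DDat_hAinf
  hθ0 := tt_tendsto
  hqinf := qq_tendsto

end

/-- There exists a weakly mixing `C^∞` volume-preserving diffeomorphism `T`
of `𝕋²` whose upper topological slow entropy with respect to the logarithmic scaling
family `a^{ln}_m(t) = (ln m)^t` equals `1`. -/
theorem stmt1 :
    ∃ T : Torus2 → Torus2,
      IsCkTorusDiffeo ⊤ T ∧
      MeasurePreserving T (volume : Measure Torus2) volume ∧
      WeaklyMixing T (volume : Measure Torus2) ∧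
      HasUpperTopSlowEntropy T logScale 1 := by
  exact ⟨DDat.T, DDat.T_diffeo, DDat.T_mp, DDat.T_weaklyMixing DDat_good, DDat.T_entropy DDat_good⟩
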